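/- Let K ⊂ U be a full compact set which is completely invariant (g⁻¹(K) = K) and satisfies P_g ⊂ K. Then there exist topological disks V', V ⊂ U with V' = g⁻¹(V) and closure(V') ⊂ V such that g : V' → V is a proper holomorphic map of degree d, and K = {z : gⁿ(z) ∈ V' for all n = 0, 1, 2, ...}. In other words, g : U' → U admits a polynomial-like restriction g : V' → V of degree d, and K is its filled Julia set. -/

import Mathlib

open Set Function Metric Topology Filter

noncomputable section

/-- A topological disk: a (nonempty, connected) simply connected planar domain. -/
def IsTopDisk (V : Set ℂ) : Prop :=
  IsOpen V ∧ IsConnected V ∧ SimplyConnectedSpace V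

/-- Critical points of `g` lying in `U'`. -/
def critPts (g : ℂ → ℂ) (U' : Set ℂ) : Set ℂ := {z | z ∈ U' ∧ deriv g z = 0}

/-- The postcritical set of `g : U' → U`. -/
def postCrit (g : ℂ → ℂ) (U' : Set ℂ) : Set ℂ :=
  closure (⋃ n : ℕ, g^[n] '' critPts g U')

/-- `g : U' → U` is a proper map: preimages of compact subsets of `U` are compact. -/
def ProperOn (g : ℂ → ℂ) (U' U : Set ℂ) : Prop :=
  ∀ K : Set ℂ, K ⊆ U → IsCompact K → IsCompact (U' ∩ g ⁻¹' K)

/-- `g : U' → U` has degree `d`: every point of `U` has a preimage, and every point of `U`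
which is not a critical value has exactly `d` preimages in `U'`. -/
def HasDeg (g : ℂ → ℂ) (U' U : Set ℂ) (d : ℕ) : Prop :=
  (∀ w ∈ U, (U' ∩ g ⁻¹' {w}).Nonempty) ∧
  ∀ w ∈ U, w ∉ g '' critPts g U' → (U' ∩ g ⁻¹' {w}).ncard = d

/-- Standing assumptions: `U' ⊆ U` are simply connected domains in `ℂ` with `U' ≠ U`,
`g : U' → U` is a proper holomorphic map of degree `d ≥ 2`, all forward iterates of the
critical points are defined, the postcritical set is a compact subset of `U'`, and if the
postcritical set is a singleton `{c}` then `g⁻¹(c) ≠ {c}`. -/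
structure PLSetting (g : ℂ → ℂ) (U' U : Set ℂ) (d : ℕ) : Prop where
  disk' : IsTopDisk U'
  disk : IsTopDisk U
  subset : U' ⊆ U
  ne : U' ≠ U
  two_le_d : 2 ≤ d
  holo : DifferentiableOn ℂ g U'
  mapsTo : MapsTo g U' U
  proper : ProperOn g U' U
  deg : HasDeg g U' U d
  crit_orbit : ∀ c ∈ critPts g U', ∀ n : ℕ, g^[n] c ∈ U'
  postCrit_compact : IsCompact (postCrit g U')
  postCrit_subset : postCrit g U' ⊆ U'
  postCrit_singleton : ∀ c : ℂ, postCrit g U' = {c} → U' ∩ g ⁻¹' {c} ≠ {c}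

/-- `g : V' → V` is a polynomial-like map of degree `d`. -/
def IsPolyLike (g : ℂ → ℂ) (V' V : Set ℂ) (d : ℕ) : Prop :=
  IsTopDisk V' ∧ IsTopDisk V ∧ closure V' ⊆ V ∧ DifferentiableOn ℂ g V' ∧
    MapsTo g V' V ∧ ProperOn g V' V ∧ HasDeg g V' V d

/-- The filled Julia set: points whose entire forward orbit stays in `V'`. -/
def filledJulia (g : ℂ → ℂ) (V' : Set ℂ) : Set ℂ := {z | ∀ n : ℕ, g^[n] z ∈ V'}

open InnerProductSpace (HarmonicAt HarmonicOnNhd)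

/-!
Map `U` onto the unit disk by a Riemann map `e` and let `E` be the harmonic measure of `e(K)` in the
disk. Every point of `K` has two distinct preimages under `g ∘ g`, so the distributions of a random
backward orbit on `K` spread out geometrically at small scales and have a bounded Green potential.
Hence `K` is not polar and `E > 0`. By the maximum principle `E ∘ g < E` on `U' \ K`, where `g`
stands for its conjugate on the disk: with `V = {E > s} ∪ K` the set `V' = g⁻¹(V)` is relatively
compact in `V`, and `1 - E` grows by a definite factor along every step of an orbit in `V' \ K`, so
only the points of `K` stay in `V'` forever. Finally, for small `s` the set `V` is star-shaped about
`0`: near the unit circle a positive harmonic function vanishing on the circle is strictly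
decreasing along radii. The same argument applied to `E ∘ e ∘ g ∘ e'⁻¹`, with `e'` a Riemann map of
`U'`, shows that `V'` is a topological disk.
-/

theorem harmonicAt_iff_exists_analyticAt_re {u : ℂ → ℝ} {c : ℂ} :
    HarmonicAt u c ↔ ∃ F : ℂ → ℂ, AnalyticAt ℂ F c ∧ u =ᶠ[𝓝 c] fun z => (F z).re := by
  constructor
  · intro hu
    obtain ⟨r, hr, hball⟩ := Metric.eventually_nhds_iff_ball.1 hu.eventually
    obtain ⟨F, hF, hre⟩ := HarmonicOnNhd.exists_analyticOnNhd_ball_re_eq (z := c) (R := r) hball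
    exact ⟨F, hF c (mem_ball_self hr),
      (hre.symm.eventuallyEq_of_mem (ball_mem_nhds c hr))⟩
  · rintro ⟨F, hF, hre⟩
    exact (InnerProductSpace.harmonicAt_congr_nhds hre).2 hF.harmonicAt_re

theorem harmonicAt_comp_analyticAt {u : ℂ → ℝ} {g : ℂ → ℂ} {c : ℂ} (hu : HarmonicAt u (g c))
    (hg : AnalyticAt ℂ g c) : HarmonicAt (fun z => u (g z)) c := by
  obtain ⟨F, hF, hre⟩ := harmonicAt_iff_exists_analyticAt_re.1 hu
  exact harmonicAt_iff_exists_analyticAt_re.2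
    ⟨fun z => F (g z), hF.comp hg, hg.continuousAt.eventually hre⟩

theorem harmonicAt_log_norm {c : ℂ} (hc : c ≠ 0) : HarmonicAt (fun z : ℂ => Real.log ‖z‖) c :=
  analyticAt_id.harmonicAt_log_norm hc

theorem continuousAt_of_harmonicAt {u : ℂ → ℝ} {c : ℂ} (hu : HarmonicAt u c) : ContinuousAt u c :=
  hu.1.continuousAt

theorem eventuallyEq_const_of_harmonicAt_of_isLocalMax {u : ℂ → ℝ} {c : ℂ} (hu : HarmonicAt u c)
    (hmax : IsLocalMax u c) : u =ᶠ[𝓝 c] fun _ => u c := by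
  obtain ⟨F, hF, hre⟩ := harmonicAt_iff_exists_analyticAt_re.1 hu
  have hexp : ∀ᶠ z in 𝓝 c, ‖Complex.exp (F z)‖ = Real.exp (u z) := by
    filter_upwards [hre] with z hz
    rw [Complex.norm_exp, hz]
  have hmax_exp : IsLocalMax (norm ∘ fun z => Complex.exp (F z)) c := by
    filter_upwards [hmax, hexp] with z hz hez
    rw [comp_apply, comp_apply, hez, hexp.self_of_nhds]
    exact Real.exp_le_exp.2 hz
  have hconst := Complex.eventually_eq_of_isLocalMax_norm
    (hF.cexp.eventually_analyticAt.mono fun z hz => hz.differentiableAt) hmax_exp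
  filter_upwards [hconst, hexp] with z hz hez
  exact Real.exp_injective (hez.symm.trans ((congrArg norm hz).trans hexp.self_of_nhds))

/-- Subharmonicity of `f` at `c`, phrased as a maximum principle: after subtracting a germ of
harmonic function, `f` has no local maximum at `c` unless the difference is locally constant.
This is the only property of subharmonic functions needed for Perron's method. -/
def SubharmonicAt (f : ℂ → ℝ) (c : ℂ) : Prop :=
  ∀ u : ℂ → ℝ, HarmonicAt u c → IsLocalMax (fun z => f z - u z) c →
    ∀ᶠ z in 𝓝 c, f z - u z = f c - u c

theorem subharmonicAt_of_harmonicAt {f : ℂ → ℝ} {c : ℂ} (hf : HarmonicAt f c) :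
    SubharmonicAt f c := fun _ hu hmax =>
  eventuallyEq_const_of_harmonicAt_of_isLocalMax (hf.sub hu) hmax

namespace SubharmonicAt

variable {f h u : ℂ → ℝ} {c : ℂ}

theorem of_eventually_le (hh : SubharmonicAt h c) (hle : ∀ᶠ z in 𝓝 c, h z ≤ f z)
    (heq : h c = f c) : SubharmonicAt f c := by
  intro u hu hmax
  have hconst := hh u hu (by
    filter_upwards [hle, hmax] with z h1 h2
    rw [heq]
    linarith)
  filter_upwards [hle, hmax, hconst] with z h1 h2 h3
  rw [heq] at h3
  exact le_antisymm h2 (by linarith)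

theorem congr (hh : SubharmonicAt h c) (he : f =ᶠ[𝓝 c] h) : SubharmonicAt f c :=
  hh.of_eventually_le (he.mono fun _ hz => hz.ge) he.self_of_nhds.symm

theorem max (hf : SubharmonicAt f c) (hh : SubharmonicAt h c) :
    SubharmonicAt (fun z => max (f z) (h z)) c := by
  rcases le_total (f c) (h c) with hc | hc
  · exact hh.of_eventually_le (.of_forall fun z => le_max_right _ _) (max_eq_right hc).symm
  · exact hf.of_eventually_le (.of_forall fun z => le_max_left _ _) (max_eq_left hc).symm

theorem sub_harmonic (hf : SubharmonicAt f c) (hu : HarmonicAt u c) :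
    SubharmonicAt (fun z => f z - u z) c := by
  intro v hv hmax
  have := hf (u + v) (hu.add hv) (by simpa only [Pi.add_apply, sub_sub] using hmax)
  simpa only [Pi.add_apply, sub_sub] using this

end SubharmonicAt

theorem isCompact_superlevel {O : Set ℂ} (hO : IsOpen O) (hb : Bornology.IsBounded O)
    {f : ℂ → ℝ} {M t : ℝ} (hf : ContinuousOn f O)
    (hbd : ∀ b ∈ frontier O, ∀ ε > 0, ∀ᶠ z in 𝓝[O] b, f z ≤ M + ε) (ht : M < t) :
    IsCompact {z ∈ O | t ≤ f z} := by
  refine Metric.isCompact_of_isClosed_isBounded ?_ (hb.subset fun z hz => hz.1)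
  refine isClosed_of_closure_subset fun x hx => ?_
  have : (𝓝[{z ∈ O | t ≤ f z}] x).NeBot := mem_closure_iff_nhdsWithin_neBot.1 hx
  have hsub : {z ∈ O | t ≤ f z} ⊆ O := fun z hz => hz.1
  have hle : ∀ᶠ z in 𝓝[{z ∈ O | t ≤ f z}] x, t ≤ f z := by
    filter_upwards [self_mem_nhdsWithin] with z hz using hz.2
  by_cases hxO : x ∈ O
  · exact ⟨hxO, ge_of_tendsto ((hf x hxO).mono hsub) hle⟩
  · have hfr : x ∈ frontier O := ⟨closure_mono hsub hx, by rwa [hO.interior_eq]⟩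
    have hlt := (hbd x hfr ((t - M) / 2) (by linarith)).filter_mono (nhdsWithin_mono x hsub)
    obtain ⟨z, h1, h2⟩ := (hle.and hlt).exists
    linarith

theorem le_of_subharmonicAt_of_frontier {O : Set ℂ} (hO : IsOpen O) (hb : Bornology.IsBounded O)
    {f : ℂ → ℝ} {M : ℝ} (hf : ContinuousOn f O) (hs : ∀ z ∈ O, SubharmonicAt f z)
    (hbd : ∀ b ∈ frontier O, ∀ ε > 0, ∀ᶠ z in 𝓝[O] b, f z ≤ M + ε) :
    ∀ z ∈ O, f z ≤ M := by
  intro z₀ hz₀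
  by_contra! hlt
  have hcompact : ∀ {t}, M < t → IsCompact {z ∈ O | t ≤ f z} :=
    isCompact_superlevel hO hb hf hbd
  obtain ⟨m, hm, hmax⟩ := (hcompact hlt).exists_isMaxOn ⟨z₀, hz₀, le_rfl⟩
    (hf.mono fun z hz => hz.1)
  have hle : ∀ z ∈ O, f z ≤ f m := fun z hz => by
    rcases le_total (f z₀) (f z) with h | h
    · exact hmax ⟨hz, h⟩
    · exact h.trans (hmax ⟨hz₀, le_rfl⟩)
  have hopen : IsOpen {z ∈ O | f m ≤ f z} := by
    refine isOpen_iff_mem_nhds.2 fun z ⟨hz, hmz⟩ => ?_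
    have hfz : f z = f m := le_antisymm (hle z hz) hmz
    have hconst := hs z hz (fun _ => 0) (InnerProductSpace.harmonicAt_const 0) (by
      filter_upwards [hO.mem_nhds hz] with w hw
      simpa only [sub_zero, hfz] using hle w hw)
    filter_upwards [hconst, hO.mem_nhds hz] with w h1 h2
    exact ⟨h2, by simpa only [sub_zero, hfz] using h1.ge⟩
  have hC := hcompact (hlt.trans_le hm.2)
  have huniv := IsClopen.eq_univ ⟨hC.isClosed, hopen⟩ ⟨m, hm.1, le_rfl⟩
  exact noncompact_univ ℂ (huniv ▸ hC)

theorem le_of_subharmonicAt_of_sphere {c : ℂ} {R M : ℝ} {f : ℂ → ℝ}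
    (hf : ContinuousOn f (closedBall c R)) (hs : ∀ z ∈ ball c R, SubharmonicAt f z)
    (hbd : ∀ z ∈ sphere c R, f z ≤ M) : ∀ z ∈ ball c R, f z ≤ M := by
  refine le_of_subharmonicAt_of_frontier isOpen_ball isBounded_ball
    (hf.mono ball_subset_closedBall) hs fun b hb ε hε => ?_
  have hbs : b ∈ sphere c R := frontier_ball_subset_sphere hb
  have hlim : Tendsto f (𝓝[ball c R] b) (𝓝 (f b)) :=
    (hf b (sphere_subset_closedBall hbs)).mono_left (nhdsWithin_mono _ ball_subset_closedBall)
  exact (hlim.eventually_lt_const (by linarith [hbd b hbs])).mono fun z hz => hz.le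

theorem norm_le_of_re_le_of_mem_ball_half {c z : ℂ} {R M : ℝ} {f : ℂ → ℂ} (hM : 0 < M) (hR : 0 < R)
    (hf : DifferentiableOn ℂ f (ball c R)) (hre : ∀ w ∈ ball c R, (f w).re ≤ M) (hc : f c = 0)
    (hz : z ∈ ball c (R / 2)) : ‖f z‖ ≤ 2 * M := by
  have hzc : ‖z - c‖ < R / 2 := by simpa only [dist_eq_norm] using mem_ball.1 hz
  have hbound := Complex.borelCaratheodory_zero (f := fun w => f (w + c)) (z := z - c) hM
    (hf.comp (by fun_prop) fun w hw => by simpa using hw)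
    (fun w hw => hre _ (by simpa using hw)) hR (by simp; linarith) (by simpa using hc)
  simp only [sub_add_cancel] at hbound
  refine hbound.trans ?_
  rw [div_le_iff₀ (by linarith)]
  nlinarith

theorem equicontinuousAt_of_norm_le {ι : Type*} {F : ι → ℂ → ℂ} {O : Set ℂ} {z : ℂ} {M : ℝ}
    (hO : O ∈ 𝓝 z) (hF : ∀ i, DifferentiableOn ℂ (F i) O)
    (hM : ∀ᶠ w in 𝓝 z, ∀ i, ‖F i w‖ ≤ M) : EquicontinuousAt F z := by
  obtain ⟨ρ, hρ, hball⟩ := Metric.eventually_nhds_iff_ball.1 (hM.and hO)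
  refine Metric.equicontinuousAt_of_continuity_modulus (fun w => 2 * M / ρ * dist w z) ?_ F ?_
  · exact Continuous.tendsto' (by fun_prop) _ _ (by simp)
  filter_upwards [ball_mem_nhds z hρ] with w hw i
  have hmaps : MapsTo (F i) (ball z ρ) (closedBall (F i z) (2 * M)) := fun v hv => by
    rw [mem_closedBall, dist_eq_norm]
    linarith [norm_sub_le (F i v) (F i z), (hball v hv).1 i, hM.self_of_nhds i]
  rw [dist_comm]
  exact Complex.dist_le_div_mul_dist_of_mapsTo_ball
    ((hF i).mono fun v hv => (hball v hv).2) hmaps hw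

theorem exists_tendsto_of_norm_le {ι : Type*} (l : Ultrafilter ι) {u : ι → ℂ} {M : ℝ}
    (hM : ∀ i, ‖u i‖ ≤ M) : ∃ w, Tendsto u l (𝓝 w) := by
  have hle : ((l.map u : Ultrafilter ℂ) : Filter ℂ) ≤ 𝓟 (closedBall 0 M) := by
    rw [le_principal_iff, Ultrafilter.coe_map, mem_map]
    exact univ_mem' fun i => mem_closedBall_zero_iff.2 (hM i)
  obtain ⟨w, -, hw⟩ := (isCompact_closedBall (0 : ℂ) M).ultrafilter_le_nhds _ hle
  exact ⟨w, hw⟩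

theorem exists_tendstoLocallyUniformlyOn {ι : Type*} (l : Ultrafilter ι) {O : Set ℂ}
    (hO : IsOpen O) {F : ι → ℂ → ℂ} (hF : ∀ i, DifferentiableOn ℂ (F i) O)
    (hb : ∀ z ∈ O, ∃ M : ℝ, ∀ᶠ w in 𝓝 z, ∀ i, ‖F i w‖ ≤ M) :
    ∃ G : ℂ → ℂ, DifferentiableOn ℂ G O ∧ TendstoLocallyUniformlyOn F G l O := by
  have hlim : ∀ z, ∃ w, z ∈ O → Tendsto (fun i => F i z) l (𝓝 w) := fun z => by
    by_cases hz : z ∈ O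
    · obtain ⟨M, hM⟩ := hb z hz
      obtain ⟨w, hw⟩ := exists_tendsto_of_norm_le l hM.self_of_nhds
      exact ⟨w, fun _ => hw⟩
    · exact ⟨0, fun h => absurd h hz⟩
  choose G hG using hlim
  have hFG : TendstoLocallyUniformlyOn F G l O := by
    refine (tendstoLocallyUniformlyOn_iff_forall_isCompact hO).2 fun C hCO hC => ?_
    have heq : ∀ K ∈ ({C} : Set (Set ℂ)), EquicontinuousOn F K := by
      rintro K rfl z hz
      obtain ⟨M, hM⟩ := hb z (hCO hz)
      exact (equicontinuousAt_of_norm_le (hO.mem_nhds (hCO hz)) hF hM).equicontinuousWithinAt _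
    have htendsto := (EquicontinuousOn.tendsto_uniformOnFun_iff_pi' (by rintro K rfl; exact hC)
      heq (l : Filter ι) G).2 (tendsto_pi_nhds.2 fun x => hG x (hCO (by simpa using x.2)))
    exact UniformOnFun.tendsto_iff_tendstoUniformlyOn.1 htendsto C rfl
  exact ⟨G, hFG.differentiableOn (.of_forall hF) hO, hFG⟩

theorem exists_analyticOnNhd_re_eq_and_im_eq_zero {u : ℂ → ℝ} {c : ℂ} {R : ℝ}
    (hu : HarmonicOnNhd u (ball c R)) :
    ∃ F : ℂ → ℂ, AnalyticOnNhd ℂ F (ball c R) ∧ (∀ z ∈ ball c R, (F z).re = u z) ∧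
      (F c).im = 0 := by
  obtain ⟨F, hF, hre⟩ := hu.exists_analyticOnNhd_ball_re_eq
  exact ⟨fun z => F z - ((F c).im : ℂ) * Complex.I, hF.sub analyticOnNhd_const,
    fun z hz => by simpa using hre hz, by simp⟩

theorem harmonicAt_of_tendsto {ι : Type*} (l : Ultrafilter ι) {u : ι → ℂ → ℝ} {v : ℂ → ℝ} {c : ℂ}
    {R M : ℝ} (hR : 0 < R) (hu : ∀ i, HarmonicOnNhd (u i) (ball c R))
    (hM : ∀ i, ∀ z ∈ ball c R, |u i z| ≤ M)
    (hlim : ∀ z ∈ ball c R, Tendsto (fun i => u i z) l (𝓝 (v z))) : HarmonicAt v c := by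
  have hc : c ∈ ball c R := mem_ball_self hR
  choose F hF hre him using fun i => exists_analyticOnNhd_re_eq_and_im_eq_zero (hu i)
  have hFc : ∀ i, ‖F i c‖ ≤ M := fun i => by
    rw [← Complex.re_add_im (F i c), him, hre i c hc]
    simpa using hM i c hc
  have hFb : ∀ i, ∀ z ∈ ball c (R / 2), ‖F i z‖ ≤ 2 * (2 * M + 1) + M := fun i z hz => by
    have hbound := norm_le_of_re_le_of_mem_ball_half (f := fun z => F i z - F i c)
      (M := 2 * M + 1) (by linarith [(norm_nonneg _).trans (hFc i)]) hR
      ((hF i).differentiableOn.sub_const _) (fun w hw => by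
        rw [Complex.sub_re, hre i w hw, hre i c hc]
        linarith [(abs_le.1 (hM i w hw)).2, (abs_le.1 (hM i c hc)).1]) (sub_self _) hz
    linarith [norm_sub_norm_le (F i z) (F i c), hFc i]
  have hsub : ball c (R / 2) ⊆ ball c R := ball_subset_ball (by linarith)
  obtain ⟨G, hG, hFG⟩ := exists_tendstoLocallyUniformlyOn l (isOpen_ball (x := c) (ε := R / 2))
    (fun i => (hF i).differentiableOn.mono hsub)
    fun z hz => ⟨_, mem_of_superset (isOpen_ball.mem_nhds hz) fun w hw i => hFb i w hw⟩
  have hcR : ball c (R / 2) ∈ 𝓝 c := ball_mem_nhds c (half_pos hR)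
  refine harmonicAt_iff_exists_analyticAt_re.2 ⟨G, hG.analyticAt hcR, ?_⟩
  filter_upwards [hcR] with z hz
  refine tendsto_nhds_unique (hlim z (hsub hz)) ?_
  exact ((Complex.continuous_re.tendsto _).comp (hFG.tendsto_at hz)).congr
    fun i => hre i z (hsub hz)

theorem exists_differentiable_re_eq_fourier (n : ℤ) (a : ℂ) :
    ∃ P : ℂ → ℂ, Differentiable ℂ P ∧
      ∀ t : AddCircle (1 : ℝ), (P (AddCircle.toCircle t)).re = (a * fourier n t).re := by
  have hpow : ∀ (m : ℕ) (t : AddCircle (1 : ℝ)),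
      (AddCircle.toCircle (m • t) : ℂ) = (AddCircle.toCircle t : ℂ) ^ m := fun m t => by
    rw [AddCircle.toCircle_nsmul, Circle.coe_pow]
  obtain ⟨m, rfl | rfl⟩ := n.eq_nat_or_neg
  · refine ⟨fun z => a * z ^ m, by fun_prop, fun t => ?_⟩
    rw [fourier_apply, natCast_zsmul, hpow]
  · refine ⟨fun z => starRingEnd ℂ a * z ^ m, by fun_prop, fun t => ?_⟩
    rw [fourier_apply, neg_smul, natCast_zsmul, AddCircle.toCircle_neg, Circle.coe_inv_eq_conj,
      hpow, ← Complex.conj_re, map_mul, Complex.conj_conj]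

theorem exists_differentiable_re_eq_of_mem_span_fourier {φ : C(AddCircle (1 : ℝ), ℂ)}
    (hφ : φ ∈ Submodule.span ℂ (range (@fourier 1))) (a : ℂ) :
    ∃ P : ℂ → ℂ, Differentiable ℂ P ∧
      ∀ t : AddCircle (1 : ℝ), (P (AddCircle.toCircle t)).re = (a * φ t).re := by
  induction hφ using Submodule.span_induction generalizing a with
  | mem x hx =>
    obtain ⟨n, rfl⟩ := hx
    exact exists_differentiable_re_eq_fourier n a
  | zero => exact ⟨0, by simp, by simp⟩
  | add x y _ _ ihx ihy =>
    obtain ⟨P, hP, hPx⟩ := ihx a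
    obtain ⟨Q, hQ, hQy⟩ := ihy a
    exact ⟨fun z => P z + Q z, hP.add hQ, fun t => by simp [hPx, hQy, mul_add]⟩
  | smul b x _ ih =>
    obtain ⟨P, hP, hPx⟩ := ih (a * b)
    exact ⟨P, hP, fun t => by simp [hPx, mul_assoc]⟩

theorem exists_differentiable_abs_sub_re_le_of_sphere {c : ℂ} {r : ℝ} (hr : 0 < r) {h : ℂ → ℝ}
    (hh : ContinuousOn h (sphere c r)) {δ : ℝ} (hδ : 0 < δ) :
    ∃ P : ℂ → ℂ, Differentiable ℂ P ∧ ∀ z ∈ sphere c r, |h z - (P z).re| ≤ δ := by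
  have : Fact (0 < (1 : ℝ)) := ⟨one_pos⟩
  have hr' : (r : ℂ) ≠ 0 := by exact_mod_cast hr.ne'
  have hmem : ∀ w : Circle, c + r * (w : ℂ) ∈ sphere c r := fun w => by
    simp [abs_of_pos hr, Circle.norm_coe]
  have hcont : Continuous fun t : AddCircle (1 : ℝ) => (h (c + r * AddCircle.toCircle t) : ℂ) := by
    have := AddCircle.continuous_toCircle (T := (1 : ℝ))
    exact Complex.continuous_ofReal.comp (hh.comp_continuous (by fun_prop) fun t => hmem _)
  have hdense : (⟨_, hcont⟩ : C(AddCircle (1 : ℝ), ℂ)) ∈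
      (Submodule.span ℂ (range (@fourier 1))).topologicalClosure :=
    span_fourier_closure_eq_top (T := 1) ▸ Submodule.mem_top
  obtain ⟨φ, hφ, hdist⟩ := Metric.mem_closure_iff.1 hdense δ hδ
  obtain ⟨P, hP, hPφ⟩ := exists_differentiable_re_eq_of_mem_span_fourier hφ 1
  refine ⟨fun z => P ((z - c) / r), hP.comp (by fun_prop), fun z hz => ?_⟩
  have hnorm : ‖(z - c) / r‖ = 1 := by
    rw [norm_div, ← dist_eq_norm, mem_sphere.1 hz, Complex.norm_real, Real.norm_of_nonneg hr.le,
      div_self hr.ne']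
  obtain ⟨t, ht⟩ := (AddCircle.homeomorphCircle (one_ne_zero (α := ℝ))).surjective
    ⟨(z - c) / r, mem_sphere_zero_iff_norm.2 hnorm⟩
  rw [AddCircle.homeomorphCircle_apply] at ht
  have htz : (AddCircle.toCircle t : ℂ) = (z - c) / r := congrArg _ ht
  have hz' : c + r * AddCircle.toCircle t = z := by rw [htz]; field_simp; ring
  have hle : ‖(h z : ℂ) - φ t‖ ≤ δ := by
    simpa only [dist_eq_norm, ContinuousMap.coe_mk, hz'] using
      (ContinuousMap.dist_apply_le_dist t).trans hdist.le
  beta_reduce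
  rw [← htz, hPφ, one_mul, ← Complex.ofReal_re (h z), ← Complex.sub_re]
  exact (Complex.abs_re_le_norm _).trans hle

/-! ### Harmonic measure in the unit disk -/

/-- A competitor in Perron's construction of the harmonic measure of `K` in the unit disk: a
continuous subharmonic function on the disk minus `K` with values in `[0, 1]` and vanishing
uniformly at the unit circle. -/
structure IsPerronCompetitor (K : Set ℂ) (h : ℂ → ℝ) : Prop where
  continuousOn : ContinuousOn h (ball 0 1 \ K)
  subharmonicAt : ∀ z ∈ ball (0 : ℂ) 1 \ K, SubharmonicAt h z
  nonneg : ∀ z ∈ ball (0 : ℂ) 1 \ K, 0 ≤ h z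
  le_one : ∀ z ∈ ball (0 : ℂ) 1 \ K, h z ≤ 1
  vanishing : ∀ δ > 0, ∃ r < (1 : ℝ), ∀ z ∈ ball (0 : ℂ) 1 \ K, r < ‖z‖ → h z ≤ δ

/-- The harmonic measure of `K` in the unit disk, as the supremum of all Perron competitors. It is
meaningful only at points of the unit disk outside `K`. -/
def harmonicMeasure (K : Set ℂ) (z : ℂ) : ℝ := sSup {x | ∃ h, IsPerronCompetitor K h ∧ x = h z}

section Perron

variable {K : Set ℂ} {h : ℂ → ℝ} {z : ℂ}

namespace IsPerronCompetitor

theorem zero (K : Set ℂ) : IsPerronCompetitor K fun _ => 0 where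
  continuousOn := continuousOn_const
  subharmonicAt := fun _ _ => subharmonicAt_of_harmonicAt (InnerProductSpace.harmonicAt_const 0)
  nonneg := fun _ _ => le_rfl
  le_one := fun _ _ => zero_le_one
  vanishing := fun _ hδ => ⟨0, zero_lt_one, fun _ _ _ => hδ.le⟩

theorem max {h₁ h₂ : ℂ → ℝ} (H₁ : IsPerronCompetitor K h₁) (H₂ : IsPerronCompetitor K h₂) :
    IsPerronCompetitor K fun z => max (h₁ z) (h₂ z) where
  continuousOn := H₁.continuousOn.sup H₂.continuousOn
  subharmonicAt := fun z hz => (H₁.subharmonicAt z hz).max (H₂.subharmonicAt z hz)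
  nonneg := fun z hz => (H₁.nonneg z hz).trans (le_max_left _ _)
  le_one := fun z hz => max_le (H₁.le_one z hz) (H₂.le_one z hz)
  vanishing := fun δ hδ => by
    obtain ⟨r₁, hr₁, h₁⟩ := H₁.vanishing δ hδ
    obtain ⟨r₂, hr₂, h₂⟩ := H₂.vanishing δ hδ
    exact ⟨_, max_lt hr₁ hr₂, fun z hz hlt => max_le
      (h₁ z hz ((le_max_left _ _).trans_lt hlt)) (h₂ z hz ((le_max_right _ _).trans_lt hlt))⟩

open scoped Classical in
theorem ite_max (H : IsPerronCompetitor K h) {O : Set ℂ} (hO : IsOpen O) {ρ : ℝ} (hρ : ρ < 1)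
    (hOρ : O ⊆ ball 0 ρ) {q : ℂ → ℝ} (hqc : ContinuousOn q (closure O \ K))
    (hqs : ∀ z ∈ O \ K, SubharmonicAt q z) (hq1 : ∀ z ∈ O \ K, q z ≤ 1)
    (hqh : ∀ z ∈ frontier O \ K, q z ≤ h z) :
    IsPerronCompetitor K fun z => if z ∈ O then Max.max (h z) (q z) else h z where
  continuousOn := by
    refine ContinuousOn.if ?_ ?_ (H.continuousOn.mono inter_subset_left)
    · rintro a ⟨ha, haf⟩
      exact max_eq_left (hqh a ⟨haf, ha.2⟩)
    · refine ContinuousOn.sup (H.continuousOn.mono inter_subset_left) (hqc.mono ?_)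
      rintro z ⟨hz, hzO⟩
      exact ⟨hzO, hz.2⟩
  subharmonicAt := fun z hz => by
    by_cases hzO : z ∈ O
    · refine ((H.subharmonicAt z hz).max (hqs z ⟨hzO, hz.2⟩)).congr ?_
      filter_upwards [hO.mem_nhds hzO] with w hw
      exact if_pos hw
    · refine (H.subharmonicAt z hz).of_eventually_le (.of_forall fun w => ?_) (if_neg hzO).symm
      split_ifs
      exacts [le_max_left _ _, le_rfl]
  nonneg := fun z hz => by
    split_ifs
    exacts [(H.nonneg z hz).trans (le_max_left _ _), H.nonneg z hz]
  le_one := fun z hz => by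
    split_ifs with hzO
    exacts [max_le (H.le_one z hz) (hq1 z ⟨hzO, hz.2⟩), H.le_one z hz]
  vanishing := fun δ hδ => by
    obtain ⟨r, hr, hle⟩ := H.vanishing δ hδ
    refine ⟨Max.max r ρ, max_lt hr hρ, fun z hz hlt => ?_⟩
    have hzO : z ∉ O := fun hzO =>
      (mem_ball_zero_iff.1 (hOρ hzO)).not_ge ((le_max_right _ _).trans hlt.le)
    rw [if_neg hzO]
    exact hle z hz ((le_max_left _ _).trans_lt hlt)

theorem le_harmonicMeasure (H : IsPerronCompetitor K h) (hz : z ∈ ball (0 : ℂ) 1 \ K) :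
    h z ≤ harmonicMeasure K z :=
  le_csSup ⟨1, by rintro _ ⟨h, H, rfl⟩; exact H.le_one z hz⟩ ⟨h, H, rfl⟩

theorem le_harmonicMeasure_of_le_on_frontier (H : IsPerronCompetitor K h) {O : Set ℂ}
    (hO : IsOpen O) {ρ : ℝ} (hρ : ρ < 1) (hOρ : O ⊆ ball 0 ρ) {q : ℂ → ℝ}
    (hqc : ContinuousOn q (closure O \ K)) (hqs : ∀ z ∈ O \ K, SubharmonicAt q z)
    (hq1 : ∀ z ∈ O \ K, q z ≤ 1) (hqh : ∀ z ∈ frontier O \ K, q z ≤ h z) (hz : z ∈ O \ K) :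
    q z ≤ harmonicMeasure K z := by
  have hle := (H.ite_max hO hρ hOρ hqc hqs hq1 hqh).le_harmonicMeasure
    ⟨ball_subset_ball hρ.le (hOρ hz.1), hz.2⟩
  rw [if_pos hz.1] at hle
  exact (le_max_right _ _).trans hle

end IsPerronCompetitor

theorem harmonicMeasure_le {b : ℝ} (hb : ∀ h, IsPerronCompetitor K h → h z ≤ b) :
    harmonicMeasure K z ≤ b :=
  csSup_le ⟨_, _, .zero K, rfl⟩ (by rintro _ ⟨h, H, rfl⟩; exact hb h H)

theorem harmonicMeasure_nonneg (hz : z ∈ ball (0 : ℂ) 1 \ K) : 0 ≤ harmonicMeasure K z :=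
  (IsPerronCompetitor.zero K).le_harmonicMeasure hz

theorem harmonicMeasure_le_one (hz : z ∈ ball (0 : ℂ) 1 \ K) : harmonicMeasure K z ≤ 1 :=
  harmonicMeasure_le fun _ H => H.le_one z hz

theorem exists_isPerronCompetitor_sub_le (K : Set ℂ) (z : ℂ) {δ : ℝ} (hδ : 0 < δ) :
    ∃ h, IsPerronCompetitor K h ∧ harmonicMeasure K z - δ ≤ h z := by
  obtain ⟨_, ⟨h, H, rfl⟩, hlt⟩ := exists_lt_of_lt_csSup
    (s := {x | ∃ h, IsPerronCompetitor K h ∧ x = h z}) ⟨_, _, .zero K, rfl⟩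
    (sub_lt_self (harmonicMeasure K z) hδ)
  exact ⟨h, H, hlt.le⟩

/-- The round annulus with outer circle the unit circle and inner radius `ρ`. -/
def annulus (ρ : ℝ) : Set ℂ := {z | ρ < ‖z‖ ∧ ‖z‖ < 1}

theorem isOpen_annulus (ρ : ℝ) : IsOpen (annulus ρ) :=
  (isOpen_lt continuous_const continuous_norm).inter (isOpen_lt continuous_norm continuous_const)

theorem isBounded_annulus (ρ : ℝ) : Bornology.IsBounded (annulus ρ) :=
  isBounded_ball.subset fun _ hz => mem_ball_zero_iff.2 hz.2

theorem norm_eq_or_of_mem_frontier_annulus {ρ : ℝ} {b : ℂ} (hb : b ∈ frontier (annulus ρ)) :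
    ‖b‖ = ρ ∨ ‖b‖ = 1 := by
  rcases frontier_inter_subset {z : ℂ | ρ < ‖z‖} {z | ‖z‖ < 1} hb with hb | hb
  · exact .inl (frontier_lt_subset_eq continuous_const continuous_norm hb.1).symm
  · exact .inr (frontier_lt_subset_eq continuous_norm continuous_const hb.2)

theorem annulus_subset_ball_diff {ρ : ℝ} (hKρ : K ⊆ ball 0 ρ) : annulus ρ ⊆ ball 0 1 \ K :=
  fun _ hz => ⟨mem_ball_zero_iff.2 hz.2, fun hK => hz.1.not_gt (mem_ball_zero_iff.1 (hKρ hK))⟩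

theorem harmonicAt_mul_neg_log_norm (a : ℝ) (hz : z ≠ 0) :
    HarmonicAt (fun w : ℂ => a * -Real.log ‖w‖) z := (harmonicAt_log_norm hz).neg.const_smul

theorem exists_lt_one_mul_neg_log_norm_le {a ε : ℝ} (ha : 0 < a) (hε : 0 < ε) :
    ∃ r < (1 : ℝ), ∀ w : ℂ, r < ‖w‖ → a * -Real.log ‖w‖ ≤ ε := by
  refine ⟨Real.exp (-(ε / a)), Real.exp_lt_one_iff.2 (neg_neg_of_pos (by positivity)),
    fun w hw => ?_⟩
  have hlog := (Real.lt_log_iff_exp_lt ((Real.exp_pos _).trans hw)).2 hw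
  rw [← le_div_iff₀' ha]
  linarith

theorem IsPerronCompetitor.le_mul_neg_log (H : IsPerronCompetitor K h) {ρ : ℝ} (hρ0 : 0 < ρ)
    (hρ1 : ρ < 1) (hKρ : K ⊆ ball 0 ρ) (hz : z ∈ annulus ρ) :
    h z ≤ (-Real.log ρ)⁻¹ * -Real.log ‖z‖ := by
  have hlogρ : 0 < -Real.log ρ := neg_pos.2 (Real.log_neg hρ0 hρ1)
  have hsub := annulus_subset_ball_diff hKρ
  have hharm : ∀ w ∈ annulus ρ, HarmonicAt (fun w => (-Real.log ρ)⁻¹ * -Real.log ‖w‖) w :=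
    fun w hw => harmonicAt_mul_neg_log_norm _ (norm_pos_iff.1 (hρ0.trans hw.1))
  refine sub_nonpos.1 (le_of_subharmonicAt_of_frontier (isOpen_annulus ρ) (isBounded_annulus ρ)
    (f := fun z => h z - (-Real.log ρ)⁻¹ * -Real.log ‖z‖) ?_
    (fun w hw => (H.subharmonicAt w (hsub hw)).sub_harmonic (hharm w hw))
    (fun b hb ε hε => ?_) z hz)
  · exact (H.continuousOn.mono hsub).sub fun w hw =>
      (continuousAt_of_harmonicAt (hharm w hw)).continuousWithinAt
  rw [zero_add]
  rcases norm_eq_or_of_mem_frontier_annulus hb with hb | hb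
  · have hb0 : b ≠ 0 := norm_pos_iff.1 (hρ0.trans_eq hb.symm)
    have hlim := (continuousAt_of_harmonicAt
      (harmonicAt_mul_neg_log_norm (-Real.log ρ)⁻¹ hb0)).tendsto
    rw [hb, inv_mul_cancel₀ hlogρ.ne'] at hlim
    have hnear := hlim.eventually_const_lt (sub_lt_self 1 hε)
    filter_upwards [mem_nhdsWithin_of_mem_nhds hnear, self_mem_nhdsWithin] with w hlt hw
    linarith [H.le_one w (hsub hw)]
  · obtain ⟨r, hr, hle⟩ := H.vanishing ε hε
    have hnear : ∀ᶠ w in 𝓝 b, r < ‖w‖ :=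
      continuous_norm.continuousAt.eventually_const_lt (hr.trans_eq hb.symm)
    filter_upwards [mem_nhdsWithin_of_mem_nhds hnear, self_mem_nhdsWithin] with w hrw hw
    have hnonneg : 0 ≤ (-Real.log ρ)⁻¹ * -Real.log ‖w‖ := mul_nonneg (inv_nonneg.2 hlogρ.le)
      (neg_nonneg.2 (Real.log_nonpos (norm_nonneg _) hw.2.le))
    linarith [hle w (hsub hw) hrw]

theorem harmonicMeasure_vanishing (hK : IsClosed K) (hK1 : K ⊆ ball 0 1) :
    ∀ δ > 0, ∃ r < (1 : ℝ), ∀ z ∈ ball (0 : ℂ) 1 \ K, r < ‖z‖ → harmonicMeasure K z ≤ δ := by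
  intro δ hδ
  obtain ⟨ρ, ⟨hρ0, hρ1⟩, hKρ⟩ := exists_pos_lt_subset_ball one_pos hK hK1
  obtain ⟨r, hr, hle⟩ := exists_lt_one_mul_neg_log_norm_le
    (inv_pos.2 (neg_pos.2 (Real.log_neg hρ0 hρ1))) hδ
  refine ⟨max ρ r, max_lt hρ1 hr, fun z hz hlt => harmonicMeasure_le fun h H => ?_⟩
  exact (H.le_mul_neg_log hρ0 hρ1 hKρ ⟨(le_max_left _ _).trans_lt hlt,
    mem_ball_zero_iff.1 hz.1⟩).trans (hle z ((le_max_right _ _).trans_lt hlt))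

theorem harmonicAt_re_of_differentiable {P : ℂ → ℂ} (hP : Differentiable ℂ P) (z : ℂ) :
    HarmonicAt (fun z => (P z).re) z := (hP.analyticAt z).harmonicAt_re

theorem le_re_of_le_re_of_sphere {P : ℂ → ℂ} (hP : Differentiable ℂ P) {c : ℂ} {R M : ℝ}
    (h : ∀ z ∈ sphere c R, M ≤ (P z).re) : ∀ z ∈ ball c R, M ≤ (P z).re := by
  intro z hz
  have hcont := hP.continuous
  refine neg_le_neg_iff.1 (le_of_subharmonicAt_of_sphere (f := fun z => -(P z).re) (by fun_prop)
    (fun w _ => subharmonicAt_of_harmonicAt (harmonicAt_re_of_differentiable hP w).neg)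
    (fun z hz => neg_le_neg (h z hz)) z hz)

theorem IsPerronCompetitor.exists_harmonic_approx (H : IsPerronCompetitor K h) {c : ℂ} {R δ : ℝ}
    (hR : 0 < R) (hB : closedBall c R ⊆ ball (0 : ℂ) 1 \ K) (hδ : 0 < δ) :
    ∃ P : ℂ → ℂ, Differentiable ℂ P ∧ (∀ z ∈ sphere c R, |h z - (P z).re| ≤ δ) ∧
      (∀ z ∈ ball c R, h z ≤ (P z).re + δ) ∧
      ∀ z ∈ ball c R, (P z).re - δ ≤ harmonicMeasure K z := by
  obtain ⟨P, hP, hPh⟩ := exists_differentiable_abs_sub_re_le_of_sphere hR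
    (H.continuousOn.mono (sphere_subset_closedBall.trans hB)) hδ
  have hcont := hP.continuous
  have hsub : ∀ w, SubharmonicAt (fun z => (P z).re - δ) w := fun w => subharmonicAt_of_harmonicAt
    ((harmonicAt_re_of_differentiable hP w).sub (InnerProductSpace.harmonicAt_const δ))
  have hsphere : ∀ z ∈ sphere c R, (P z).re - δ ≤ h z := fun z hz => by
    linarith [(abs_le.1 (hPh z hz)).1]
  refine ⟨P, hP, hPh, fun z hz => ?_, fun z hz => ?_⟩
  · refine sub_le_iff_le_add'.1 (le_of_subharmonicAt_of_sphere (f := fun z => h z - (P z).re)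
      ((H.continuousOn.mono hB).sub (by fun_prop)) (fun w hw => ?_)
      (fun z hz => (abs_le.1 (hPh z hz)).2) z hz)
    exact (H.subharmonicAt w (hB (ball_subset_closedBall hw))).sub_harmonic
      (harmonicAt_re_of_differentiable hP w)
  · have hq1 : ∀ z ∈ ball c R, (P z).re - δ ≤ 1 :=
      le_of_subharmonicAt_of_sphere (by fun_prop) (fun w _ => hsub w) fun z hz =>
        (hsphere z hz).trans (H.le_one z (hB (sphere_subset_closedBall hz)))
    obtain ⟨ρ, ⟨-, hρ1⟩, hBρ⟩ := exists_pos_lt_subset_ball one_pos isClosed_closedBall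
      (hB.trans sdiff_subset)
    exact H.le_harmonicMeasure_of_le_on_frontier isOpen_ball hρ1 (ball_subset_closedBall.trans hBρ)
      (by fun_prop) (fun w _ => hsub w) (fun z hz => hq1 z hz.1)
      (fun z hz => hsphere z (frontier_ball_subset_sphere hz.1))
      ⟨hz, (hB (ball_subset_closedBall hz)).2⟩

theorem exists_differentiable_abs_harmonicMeasure_sub_re_le {c : ℂ} {R δ : ℝ} (hR : 0 < R)
    (hB : closedBall c R ⊆ ball (0 : ℂ) 1 \ K) (hδ : 0 < δ) :
    ∃ P : ℂ → ℂ, Differentiable ℂ P ∧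
      ∀ z ∈ ball c (R / 2), |harmonicMeasure K z - (P z).re| ≤ 14 * δ := by
  have hc : c ∈ ball c R := mem_ball_self hR
  obtain ⟨h₁, H₁, hnear⟩ := exists_isPerronCompetitor_sub_le K c hδ
  obtain ⟨P, hP, hPh, hhP, hPK⟩ := H₁.exists_harmonic_approx hR hB hδ
  refine ⟨P, hP, fun z hz => ?_⟩
  have hzR : z ∈ ball c R := ball_subset_ball (by linarith) hz
  refine abs_le.2 ⟨by linarith [hPK z hzR], ?_⟩
  rw [sub_le_iff_le_add]
  refine harmonicMeasure_le fun h₂ H₂ => ?_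
  obtain ⟨Q, hQ, hQh, hhQ, hQK⟩ := (H₁.max H₂).exists_harmonic_approx hR hB hδ
  have hdiff : Differentiable ℂ fun w => Q w - P w := hQ.sub hP
  -- `re (Q - P)` is nearly nonnegative and nearly zero at `c`, hence small on the half ball.
  have hlower : ∀ w ∈ ball c R, -(2 * δ) ≤ (Q w - P w).re :=
    le_re_of_le_re_of_sphere hdiff fun w hw => by
      rw [Complex.sub_re]
      linarith [(abs_le.1 (hPh w hw)).1, (abs_le.1 (hQh w hw)).2, le_max_left (h₁ w) (h₂ w)]
  have hcenter : (Q c - P c).re ≤ 3 * δ := by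
    rw [Complex.sub_re]
    linarith [hQK c hc, hhP c hc]
  have hbound := norm_le_of_re_le_of_mem_ball_half (M := 5 * δ)
    (f := fun w => (Q c - P c) - (Q w - P w)) (by positivity) hR
    (hdiff.const_sub _).differentiableOn
    (fun w hw => by rw [Complex.sub_re]; linarith [hlower w hw]) (sub_self _) hz
  have hre := (neg_le_abs _).trans ((Complex.abs_re_le_norm _).trans hbound)
  rw [Complex.sub_re, Complex.sub_re (Q z)] at hre
  linarith [hhQ z hzR, le_max_right (h₁ z) (h₂ z)]

theorem harmonicAt_harmonicMeasure (hK : IsClosed K) {c : ℂ} (hc : c ∈ ball (0 : ℂ) 1 \ K) :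
    HarmonicAt (harmonicMeasure K) c := by
  obtain ⟨R, hR, hB⟩ := Metric.nhds_basis_closedBall.mem_iff.1
    ((isOpen_ball.sdiff hK).mem_nhds hc)
  have hδ : ∀ n : ℕ, 0 < 1 / ((n : ℝ) + 1) := fun n => by positivity
  choose P hP hPK using fun n => exists_differentiable_abs_harmonicMeasure_sub_re_le hR hB (hδ n)
  have hsub : ball c (R / 2) ⊆ ball 0 1 \ K :=
    (ball_subset_ball (by linarith)).trans (ball_subset_closedBall.trans hB)
  refine harmonicAt_of_tendsto (hyperfilter ℕ) (u := fun n z => (P n z).re) (M := 15)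
    (half_pos hR) (fun n z _ => harmonicAt_re_of_differentiable (hP n) z) (fun n z hz => ?_)
    fun z hz => ?_
  · have hle : 1 / ((n : ℝ) + 1) ≤ 1 := by
      rw [div_le_one (by positivity)]
      linarith [(Nat.cast_nonneg n : (0 : ℝ) ≤ n)]
    have hdist := abs_le.1 (hPK n z hz)
    exact abs_le.2 ⟨by linarith [harmonicMeasure_nonneg (hsub hz)],
      by linarith [harmonicMeasure_le_one (hsub hz)]⟩
  · refine Tendsto.mono_left ?_ Nat.hyperfilter_le_atTop
    refine tendsto_iff_dist_tendsto_zero.2 (squeeze_zero (fun _ => dist_nonneg)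
      (g := fun n : ℕ => 14 * (1 / ((n : ℝ) + 1))) (fun n => ?_) ?_)
    · rw [dist_comm, Real.dist_eq]
      exact hPK n z hz
    · simpa using (tendsto_one_div_add_atTop_nhds_zero_nat (𝕜 := ℝ)).const_mul 14

theorem continuousOn_harmonicMeasure (hK : IsClosed K) :
    ContinuousOn (harmonicMeasure K) (ball 0 1 \ K) := fun _ hz =>
  (continuousAt_of_harmonicAt (harmonicAt_harmonicMeasure hK hz)).continuousWithinAt

theorem isPerronCompetitor_harmonicMeasure (hK : IsClosed K) (hK1 : K ⊆ ball 0 1) :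
    IsPerronCompetitor K (harmonicMeasure K) where
  continuousOn := continuousOn_harmonicMeasure hK
  subharmonicAt := fun _ hz => subharmonicAt_of_harmonicAt (harmonicAt_harmonicMeasure hK hz)
  nonneg := fun _ hz => harmonicMeasure_nonneg hz
  le_one := fun _ hz => harmonicMeasure_le_one hz
  vanishing := harmonicMeasure_vanishing hK hK1

end Perron

theorem nonneg_on_annulus_of_harmonicAt {u : ℂ → ℝ} {ρ : ℝ}
    (hu : ∀ z, ρ ≤ ‖z‖ → ‖z‖ < 1 → HarmonicAt u z) (hinner : ∀ z, ‖z‖ = ρ → 0 ≤ u z)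
    (houter : ∀ ε > 0, ∃ r < (1 : ℝ), ∀ z ∈ annulus ρ, r < ‖z‖ → -ε ≤ u z) :
    ∀ z ∈ annulus ρ, 0 ≤ u z := by
  intro z hz
  refine neg_nonpos.1 (le_of_subharmonicAt_of_frontier (isOpen_annulus ρ) (isBounded_annulus ρ)
    (f := fun z => -u z)
    (fun w hw => (continuousAt_of_harmonicAt (hu w hw.1.le hw.2)).neg.continuousWithinAt)
    (fun w hw => subharmonicAt_of_harmonicAt (hu w hw.1.le hw.2).neg) (fun b hb ε hε => ?_) z hz)
  rw [zero_add]
  rcases norm_eq_or_of_mem_frontier_annulus hb with hb | hb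
  · have hlim := (continuousAt_of_harmonicAt (hu b hb.ge (hb ▸ hz.1.trans hz.2))).neg.tendsto
    filter_upwards [mem_nhdsWithin_of_mem_nhds
      (hlim.eventually_lt_const ((neg_nonpos.2 (hinner b hb)).trans_lt hε))] with w hw using hw.le
  · obtain ⟨r, hr, hle⟩ := houter ε hε
    have hnear : ∀ᶠ w in 𝓝 b, r < ‖w‖ :=
      continuous_norm.continuousAt.eventually_const_lt (hr.trans_eq hb.symm)
    filter_upwards [mem_nhdsWithin_of_mem_nhds hnear, self_mem_nhdsWithin] with w hrw hw
    exact neg_le.1 (hle w hw hrw)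

section Hopf

variable {E : ℂ → ℝ} {ρ : ℝ}

theorem exists_mul_neg_log_norm_le {ρ₁ : ℝ} (hρ0 : 0 < ρ) (hρρ₁ : ρ < ρ₁) (hρ₁ : ρ₁ < 1)
    (hpos : ∀ z ∈ annulus ρ, 0 < E z) (hE : HarmonicOnNhd E (annulus ρ)) :
    ∃ c > 0, ∀ z ∈ annulus ρ₁, c * -Real.log ‖z‖ ≤ E z := by
  have hlog : 0 < -Real.log ρ₁ := neg_pos.2 (Real.log_neg (hρ0.trans hρρ₁) hρ₁)
  have hsphere : ∀ z ∈ sphere (0 : ℂ) ρ₁, z ∈ annulus ρ := fun z hz => by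
    rw [mem_sphere_zero_iff_norm] at hz
    exact ⟨hz ▸ hρρ₁, hz ▸ hρ₁⟩
  obtain ⟨x, hx, hmin⟩ := (isCompact_sphere (0 : ℂ) ρ₁).exists_isMinOn
    (NormedSpace.sphere_nonempty.2 (hρ0.trans hρρ₁).le)
    fun z hz => (continuousAt_of_harmonicAt (hE z (hsphere z hz))).continuousWithinAt
  have hc : 0 < E x / -Real.log ρ₁ := div_pos (hpos x (hsphere x hx)) hlog
  refine ⟨E x / -Real.log ρ₁, hc, fun z hz => sub_nonneg.1 (nonneg_on_annulus_of_harmonicAt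
    (u := fun z => E z - E x / -Real.log ρ₁ * -Real.log ‖z‖) (fun w hw hw1 => ?_) (fun w hw => ?_)
    (fun ε hε => ?_) z hz)⟩
  · exact (hE w ⟨hρρ₁.trans_le hw, hw1⟩).sub
      (harmonicAt_mul_neg_log_norm _ (norm_pos_iff.1 ((hρ0.trans hρρ₁).trans_le hw)))
  · rw [hw, div_mul_cancel₀ _ hlog.ne']
    exact sub_nonneg.2 (hmin (mem_sphere_zero_iff_norm.2 hw))
  · obtain ⟨r, hr, hle⟩ := exists_lt_one_mul_neg_log_norm_le hc hε
    exact ⟨r, hr, fun w hw hrw => by linarith [hle w hrw, hpos w ⟨hρρ₁.trans hw.1, hw.2⟩]⟩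

theorem norm_ofReal_mul {t : ℝ} (ht : 0 < t) (z : ℂ) : ‖(t : ℂ) * z‖ = t * ‖z‖ := by
  rw [norm_mul, Complex.norm_real, Real.norm_of_nonneg ht.le]

theorem locallyLipschitzOn_of_harmonicAt {S : Set ℂ} (hE : ∀ z ∈ S, HarmonicAt E z) :
    LocallyLipschitzOn S E := fun z hz => by
  obtain ⟨L, N, hN, hL⟩ := ((hE z hz).1.of_le one_le_two).exists_lipschitzOnWith
  exact ⟨L, N, mem_nhdsWithin_of_mem_nhds hN, hL⟩

theorem exists_radial_lipschitz {ρ₁ ρ₂ : ℝ} (hρ₁ : ρ < ρ₁) (hρ₁₂ : ρ₁ < ρ₂) (hρ₂ : ρ₂ < 1)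
    (hE : HarmonicOnNhd E (annulus ρ)) :
    ∃ L : ℝ, 0 ≤ L ∧ ∀ t : ℝ, 0 < t → t < 1 → ρ₁ < t * ρ₂ → ∀ z, ‖z‖ = ρ₂ →
      |E (t * z) - E z| ≤ L * (1 - t) := by
  have hS : ∀ z ∈ closedBall 0 ρ₂ \ ball 0 ρ₁, HarmonicAt E z := fun z hz =>
    hE z ⟨hρ₁.trans_le (not_lt.1 fun h => hz.2 (mem_ball_zero_iff.2 h)),
      (mem_closedBall_zero_iff.1 hz.1).trans_lt hρ₂⟩
  obtain ⟨L, hL⟩ := (locallyLipschitzOn_of_harmonicAt hS).exists_lipschitzOnWith_of_compact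
    ((isCompact_closedBall 0 ρ₂).diff isOpen_ball)
  refine ⟨L, L.2, fun t ht0 ht1 htρ z hz => ?_⟩
  have hz_mem : z ∈ closedBall (0 : ℂ) ρ₂ \ ball 0 ρ₁ :=
    ⟨mem_closedBall_zero_iff.2 hz.le, fun h => (mem_ball_zero_iff.1 h).not_ge (by linarith)⟩
  have htz_mem : (t : ℂ) * z ∈ closedBall (0 : ℂ) ρ₂ \ ball 0 ρ₁ := by
    refine ⟨mem_closedBall_zero_iff.2 ?_, fun h => (mem_ball_zero_iff.1 h).not_ge ?_⟩ <;>
      rw [norm_ofReal_mul ht0, hz]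
    exacts [mul_le_of_le_one_left (hz ▸ norm_nonneg z) ht1.le, htρ.le]
  have hdist : dist ((t : ℂ) * z) z = (1 - t) * ρ₂ := by
    rw [dist_comm, dist_eq_norm, ← one_sub_mul, ← hz, ← norm_ofReal_mul (sub_pos.2 ht1),
      Complex.ofReal_sub, Complex.ofReal_one]
  refine (hL.dist_le_mul _ htz_mem _ hz_mem).trans ?_
  rw [hdist]
  exact mul_le_mul_of_nonneg_left (mul_le_of_le_one_right (sub_pos.2 ht1).le hρ₂.le) L.2

theorem mul_le_sub_of_radial_lipschitz {ρ₂ c L t : ℝ} (hρ : 0 < ρ) (hρρ₂ : ρ < ρ₂)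
    (hρ₂ : ρ₂ < 1) (hE : HarmonicOnNhd E (annulus ρ)) (hL : 0 ≤ L) (hc : 0 < c)
    (hopf : ∀ z ∈ annulus ρ, c * -Real.log ‖z‖ ≤ E z)
    (hvan : ∀ δ > 0, ∃ r < (1 : ℝ), ∀ z ∈ annulus ρ, r < ‖z‖ → E z ≤ δ)
    (ht0 : 0 < t) (ht1 : t < 1) (htρ : ρ < t * ρ₂)
    (hlip : ∀ z, ‖z‖ = ρ₂ → |E (t * z) - E z| ≤ L * (1 - t)) :
    ∀ z ∈ annulus ρ₂,
      -Real.log t * (c - (c + L) / -Real.log ρ₂ * -Real.log ‖z‖) ≤ E (t * z) - E z := by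
  have hτ : 1 - t ≤ -Real.log t := by linarith [Real.log_le_sub_one_of_pos ht0]
  have hτ0 : 0 < -Real.log t := (sub_pos.2 ht1).trans_le hτ
  have hlogρ₂ : 0 < -Real.log ρ₂ := neg_pos.2 (Real.log_neg (hρ.trans hρρ₂) hρ₂)
  have hmaps : ∀ w : ℂ, ρ₂ ≤ ‖w‖ → ‖w‖ < 1 → (t : ℂ) * w ∈ annulus ρ := fun w hw hw1 => by
    refine ⟨?_, ?_⟩ <;> rw [norm_ofReal_mul ht0]
    exacts [htρ.trans_le (mul_le_mul_of_nonneg_left hw ht0.le), by nlinarith]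
  set b := -Real.log t * ((c + L) / -Real.log ρ₂) with hb
  have hb0 : 0 ≤ b := mul_nonneg hτ0.le (div_nonneg (by positivity) hlogρ₂.le)
  intro z hz
  have key := nonneg_on_annulus_of_harmonicAt
    (u := fun w => E (t * w) - E w - -Real.log t * c + b * -Real.log ‖w‖)
    (fun w hw hw1 => ?_) (fun w hw => ?_) (fun ε hε => ?_) z hz
  · linear_combination key
  · have hscale : AnalyticAt ℂ (fun w => (t : ℂ) * w) w := by fun_prop
    exact (((harmonicAt_comp_analyticAt (hE _ (hmaps w hw hw1)) hscale).sub
      (hE w ⟨hρρ₂.trans_le hw, hw1⟩)).sub (InnerProductSpace.harmonicAt_const _)).add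
      (harmonicAt_mul_neg_log_norm b (norm_pos_iff.1 ((hρ.trans hρρ₂).trans_le hw)))
  · have hbρ₂ : b * -Real.log ρ₂ = -Real.log t * (c + L) := by
      rw [hb, mul_assoc, div_mul_cancel₀ _ hlogρ₂.ne']
    have hlow := (abs_le.1 (hlip w hw)).1
    have hLτ := mul_le_mul_of_nonneg_left hτ hL
    rw [hw, hbρ₂]
    linarith
  · obtain ⟨r, hr, hle⟩ := hvan ε hε
    refine ⟨r, hr, fun w hw hrw => ?_⟩
    have hw0 : 0 < ‖w‖ := (hρ.trans hρρ₂).trans hw.1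
    have hlogw : 0 ≤ -Real.log ‖w‖ := neg_nonneg.2 (Real.log_nonpos hw0.le hw.2.le)
    have hEt := hopf _ (hmaps w hw.1.le hw.2)
    rw [norm_ofReal_mul ht0, Real.log_mul ht0.ne' hw0.ne'] at hEt
    linarith [hle w ⟨hρρ₂.trans hw.1, hw.2⟩ hrw, mul_nonneg hb0 hlogw, mul_nonneg hc.le hlogw]

/- Both sides of `mul_le_sub_of_radial_lipschitz` are linear in `-log t`, which is why the radius
beyond which `E` is radially decreasing does not depend on `t`. -/
theorem exists_radial_lt_of_harmonicOnNhd_annulus (hρ0 : 0 < ρ) (hρ1 : ρ < 1)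
    (hpos : ∀ z ∈ annulus ρ, 0 < E z) (hE : HarmonicOnNhd E (annulus ρ))
    (hvan : ∀ δ > 0, ∃ r < (1 : ℝ), ∀ z ∈ annulus ρ, r < ‖z‖ → E z ≤ δ) :
    ∃ r, ρ < r ∧ r < 1 ∧ ∀ (z : ℂ) (t : ℝ), 0 < t → t < 1 → r ≤ t * ‖z‖ → ‖z‖ < 1 →
      E z < E (t * z) := by
  obtain ⟨ρ₁, hρ₁, hρ₁1⟩ := exists_between hρ1
  obtain ⟨ρ₂, hρ₂, hρ₂1⟩ := exists_between hρ₁1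
  have hρ₂0 : 0 < ρ₂ := (hρ0.trans hρ₁).trans hρ₂
  have hsub : annulus ρ₁ ⊆ annulus ρ := fun z hz => ⟨hρ₁.trans hz.1, hz.2⟩
  obtain ⟨c, hc, hopf⟩ := exists_mul_neg_log_norm_le hρ0 hρ₁ hρ₁1 hpos hE
  obtain ⟨L, hL, hlip⟩ := exists_radial_lipschitz hρ₁ hρ₂ hρ₂1 hE
  obtain ⟨r, hr, hsmall⟩ := exists_lt_one_mul_neg_log_norm_le
    (div_pos (add_pos_of_pos_of_nonneg hc hL) (neg_pos.2 (Real.log_neg hρ₂0 hρ₂1))) (half_pos hc)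
  obtain ⟨r', hmax, hr'⟩ := exists_between
    (max_lt (max_lt hρ₂1 hr) ((div_lt_one hρ₂0).2 hρ₂))
  simp only [max_lt_iff] at hmax
  obtain ⟨⟨hρ₂r', hrr'⟩, hρ₁r'⟩ := hmax
  refine ⟨r', (hρ₁.trans hρ₂).trans hρ₂r', hr', fun z t ht0 ht1 hle hz1 => sub_pos.1 ?_⟩
  have htz : t * ‖z‖ ≤ ‖z‖ := mul_le_of_le_one_left (norm_nonneg z) ht1.le
  have htz' : t * ‖z‖ ≤ t := mul_le_of_le_one_right ht0.le hz1.le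
  have htρ : ρ₁ < t * ρ₂ := (div_lt_iff₀ hρ₂0).1 (hρ₁r'.trans_le (hle.trans htz'))
  refine (mul_pos (neg_pos.2 (Real.log_neg ht0 ht1)) ?_).trans_le
    (mul_le_sub_of_radial_lipschitz (hρ0.trans hρ₁) hρ₂ hρ₂1 (fun w hw => hE w (hsub hw)) hL hc hopf
      (fun δ hδ => ?_) ht0 ht1 htρ (hlip t ht0 ht1 htρ) z ⟨hρ₂r'.trans_le (hle.trans htz), hz1⟩)
  · linarith [hsmall z (hrr'.trans_le (hle.trans htz))]
  · obtain ⟨s, hs, hEs⟩ := hvan δ hδ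
    exact ⟨s, hs, fun w hw => hEs w (hsub hw)⟩

end Hopf

/-! ### Random backward orbits and positivity of the harmonic measure -/

section BackwardWalk

/-- The expectation of `h` after `n` steps of the random walk started at `a` which moves from `x`
to `y₀ x` or to `y₁ x`, each with probability one half. For two inverse branches of `f` this is the
mean of `h` over a random backward orbit of `a`. -/
def walkMean {α : Type*} (y₀ y₁ : α → α) : ℕ → (α → ℝ) → α → ℝ
  | 0, h, a => h a
  | n + 1, h, a => 2⁻¹ * (walkMean y₀ y₁ n h (y₀ a) + walkMean y₀ y₁ n h (y₁ a))

variable {α : Type*} {y₀ y₁ : α → α} {K : Set α}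

theorem walkMean_succ (h : α → ℝ) (n : ℕ) :
    ∀ a, walkMean y₀ y₁ (n + 1) h a =
      walkMean y₀ y₁ n (fun w => 2⁻¹ * (h (y₀ w) + h (y₁ w))) a := by
  induction n with
  | zero => exact fun _ => rfl
  | succ n ih =>
    intro a
    rw [walkMean, ih, ih, walkMean]

theorem walkMean_mono (h₀ : MapsTo y₀ K K) (h₁ : MapsTo y₁ K K) {h h' : α → ℝ}
    (hh : ∀ y ∈ K, h y ≤ h' y) (n : ℕ) :
    ∀ a ∈ K, walkMean y₀ y₁ n h a ≤ walkMean y₀ y₁ n h' a := by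
  induction n with
  | zero => exact hh
  | succ n ih =>
    intro a ha
    have := ih _ (h₀ ha)
    have := ih _ (h₁ ha)
    simp only [walkMean]
    linarith

theorem walkMean_mul_add (h : α → ℝ) (s c : ℝ) (n : ℕ) :
    ∀ a, walkMean y₀ y₁ n (fun y => s * h y + c) a = s * walkMean y₀ y₁ n h a + c := by
  induction n with
  | zero => exact fun _ => rfl
  | succ n ih =>
    intro a
    simp only [walkMean, ih]
    ring

theorem walkMean_const (c : ℝ) (n : ℕ) (a : α) : walkMean y₀ y₁ n (fun _ => c) a = c := by
  simpa using walkMean_mul_add (y₀ := y₀) (y₁ := y₁) (fun _ => c) 0 c n a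

theorem walkMean_le (h₀ : MapsTo y₀ K K) (h₁ : MapsTo y₁ K K) {h : α → ℝ} {c : ℝ}
    (hh : ∀ y ∈ K, h y ≤ c) (n : ℕ) {a : α} (ha : a ∈ K) : walkMean y₀ y₁ n h a ≤ c :=
  (walkMean_mono h₀ h₁ hh n a ha).trans_eq (walkMean_const c n a)

theorem le_walkMean (h₀ : MapsTo y₀ K K) (h₁ : MapsTo y₁ K K) {h : α → ℝ} {c : ℝ}
    (hh : ∀ y ∈ K, c ≤ h y) (n : ℕ) {a : α} (ha : a ∈ K) : c ≤ walkMean y₀ y₁ n h a :=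
  (walkMean_const c n a).symm.trans_le (walkMean_mono h₀ h₁ hh n a ha)

theorem harmonicOnNhd_walkMean (h₀ : MapsTo y₀ K K) (h₁ : MapsTo y₁ K K) {G : ℂ → α → ℝ}
    {O : Set ℂ} (hG : ∀ y ∈ K, HarmonicOnNhd (fun z => G z y) O) (n : ℕ) :
    ∀ a ∈ K, HarmonicOnNhd (fun z => walkMean y₀ y₁ n (G z) a) O := by
  induction n with
  | zero => exact hG
  | succ n ih =>
    intro a ha z hz
    exact ((ih _ (h₀ ha) z hz).add (ih _ (h₁ ha) z hz)).const_smul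

/-- `y₀` and `y₁` are two branches of `f⁻¹` on `K` whose values stay more than `2r` apart, where `f`
is a self-map of `K` with Lipschitz constant `A > 1`. -/
structure SeparatedBranches [PseudoMetricSpace α] (f y₀ y₁ : α → α) (K : Set α) (r A : ℝ) :
    Prop where
  pos : 0 < r
  one_lt : 1 < A
  mapsTo : MapsTo f K K
  dist_le : ∀ x ∈ K, ∀ y ∈ K, dist (f x) (f y) ≤ A * dist x y
  mapsTo₀ : MapsTo y₀ K K
  mapsTo₁ : MapsTo y₁ K K
  apply₀ : ∀ x ∈ K, f (y₀ x) = x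
  apply₁ : ∀ x ∈ K, f (y₁ x) = x
  lt_dist : ∀ x ∈ K, 2 * r < dist (y₀ x) (y₁ x)

namespace SeparatedBranches

variable [PseudoMetricSpace α] {f : α → α} {r A : ℝ} (B : SeparatedBranches f y₀ y₁ K r A)
include B

theorem posLog_le_posLog_add_log (n : ℕ) {x y : α} (hx : x ∈ K) (hy : y ∈ K) :
    Real.posLog (r / max (dist x y) (r / A ^ (n + 1))) ≤
      Real.posLog (r / max (dist (f x) (f y)) (r / A ^ n)) + Real.log A := by
  have hr := B.pos
  have hA : 0 < A := one_pos.trans B.one_lt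
  have hmax : max (dist (f x) (f y)) (r / A ^ n) ≤ A * max (dist x y) (r / A ^ (n + 1)) := by
    refine max_le ((B.dist_le x hx y hy).trans ?_) ?_
    · gcongr
      exact le_max_left _ _
    · calc r / A ^ n = A * (r / A ^ (n + 1)) := by rw [pow_succ]; field_simp
        _ ≤ _ := by gcongr; exact le_max_right _ _
  have hε : 0 < max (dist x y) (r / A ^ (n + 1)) := lt_max_of_lt_right (by positivity)
  have hε' : 0 < max (dist (f x) (f y)) (r / A ^ n) := lt_max_of_lt_right (by positivity)
  calc Real.posLog (r / max (dist x y) (r / A ^ (n + 1)))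
      ≤ Real.posLog (r / max (dist (f x) (f y)) (r / A ^ n) * A) := by
        refine Real.posLog_le_posLog (by positivity) ?_
        rw [div_mul_eq_mul_div, div_le_div_iff₀ hε hε', mul_assoc]
        gcongr
    _ ≤ _ := Real.posLog_mul
    _ = _ := by rw [Real.posLog_eq_log (B.one_lt.le.trans (le_abs_self A))]

/- At each backward step at most one of the two branches lands within `r` of `x`, so the expected
logarithmic energy at scale `r / A ^ n` is halved, plus at most half of `log A`. -/
theorem walkMean_posLog_le (n : ℕ) : ∀ x ∈ K, ∀ a ∈ K,
    walkMean y₀ y₁ n (fun y => Real.posLog (r / max (dist x y) (r / A ^ n))) a ≤ Real.log A := by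
  have hlogA : 0 < Real.log A := Real.log_pos B.one_lt
  have hA : 0 < A := one_pos.trans B.one_lt
  have hr := B.pos
  have hfar : ∀ {n : ℕ} {x y : α}, r ≤ max (dist x y) (r / A ^ n) →
      Real.posLog (r / max (dist x y) (r / A ^ n)) = 0 := fun {n x y} h => by
    have hε : 0 < max (dist x y) (r / A ^ n) := lt_max_of_lt_right (by positivity)
    rw [Real.posLog_eq_zero_iff, abs_of_nonneg (by positivity)]
    exact (div_le_one hε).2 h
  induction n with
  | zero =>
    intro x _ a _
    exact (hfar (le_max_of_le_right (by simp))).trans_le hlogA.le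
  | succ n ih =>
    intro x hx a ha
    have hstep : ∀ w ∈ K, 2⁻¹ * (Real.posLog (r / max (dist x (y₀ w)) (r / A ^ (n + 1))) +
        Real.posLog (r / max (dist x (y₁ w)) (r / A ^ (n + 1)))) ≤
        1 / 2 * Real.posLog (r / max (dist (f x) w) (r / A ^ n)) + 1 / 2 * Real.log A := by
      intro w hw
      have hnonneg := Real.posLog_nonneg (x := r / max (dist (f x) w) (r / A ^ n))
      have hle₀ := B.posLog_le_posLog_add_log n hx (B.mapsTo₀ hw)
      have hle₁ := B.posLog_le_posLog_add_log n hx (B.mapsTo₁ hw)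
      rw [B.apply₀ w hw] at hle₀
      rw [B.apply₁ w hw] at hle₁
      rcases le_or_gt r (dist x (y₀ w)) with h | h
      · rw [hfar (le_max_of_le_left h)]
        linarith [hnonneg]
      · rw [hfar (y := y₁ w) (le_max_of_le_left ?_)]
        · linarith [hnonneg]
        · linarith [B.lt_dist w hw, dist_triangle_left (y₀ w) (y₁ w) x]
    rw [walkMean_succ]
    refine (walkMean_mono B.mapsTo₀ B.mapsTo₁ hstep n a ha).trans ?_
    rw [walkMean_mul_add]
    linarith [ih (f x) (B.mapsTo hx) a ha]

end SeparatedBranches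

theorem eventually_exists_mem_of_nhds_le_map [TopologicalSpace α] {f : α → α} {x : α} {N : Set α}
    (hf : 𝓝 (f x) ≤ map f (𝓝 x)) (hK : ∀ᶠ w in 𝓝 x, f w ∈ K → w ∈ K) (hN : N ∈ 𝓝 x) :
    ∀ᶠ z in 𝓝[K] f x, ∃ w ∈ K ∩ N, f w = z := by
  have himage : ∀ᶠ z in 𝓝 (f x), ∃ w ∈ N, (f w ∈ K → w ∈ K) ∧ f w = z := hf <| by
    rw [mem_map]
    filter_upwards [hK, hN] with w hwK hwN using ⟨w, hwN, hwK, rfl⟩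
  filter_upwards [mem_nhdsWithin_of_mem_nhds himage, self_mem_nhdsWithin]
    with z ⟨w, hwN, hwK, hw⟩ hz
  exact ⟨w, ⟨hwK (hw ▸ hz), hwN⟩, hw⟩

theorem exists_pos_forall_exists_lt_dist [MetricSpace α] {f : α → α} (hK : IsCompact K)
    (hopen : ∀ x ∈ K, 𝓝 (f x) ≤ map f (𝓝 x)) (hinv : ∀ x ∈ K, ∀ᶠ w in 𝓝 x, f w ∈ K → w ∈ K)
    (htwo : ∀ x ∈ K, ∃ y ∈ K, ∃ y' ∈ K, y ≠ y' ∧ f y = x ∧ f y' = x) :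
    ∃ r > 0, ∀ x ∈ K, ∃ y ∈ K, ∃ y' ∈ K, f y = x ∧ f y' = x ∧ 2 * r < dist y y' := by
  refine hK.induction_on (p := fun S => ∃ r > 0, ∀ x ∈ S, ∃ y ∈ K, ∃ y' ∈ K,
    f y = x ∧ f y' = x ∧ 2 * r < dist y y') ⟨1, one_pos, by simp⟩ ?_ ?_ ?_
  · rintro S T hST ⟨r, hr, h⟩
    exact ⟨r, hr, fun x hx => h x (hST hx)⟩
  · rintro S T ⟨r, hr, h⟩ ⟨r', hr', h'⟩
    refine ⟨min r r', lt_min hr hr', fun x hx => ?_⟩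
    rcases hx with hx | hx
    · obtain ⟨y, hy, y', hy', e, e', hlt⟩ := h x hx
      exact ⟨y, hy, y', hy', e, e', by linarith [min_le_left r r']⟩
    · obtain ⟨y, hy, y', hy', e, e', hlt⟩ := h' x hx
      exact ⟨y, hy, y', hy', e, e', by linarith [min_le_right r r']⟩
  · intro x hx
    obtain ⟨y, hy, y', hy', hne, rfl, e'⟩ := htwo x hx
    have hr : 0 < dist y y' / 4 := div_pos (dist_pos.2 hne) four_pos
    have hnear := eventually_exists_mem_of_nhds_le_map (hopen y hy) (hinv y hy) (ball_mem_nhds y hr)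
    have hnear' := eventually_exists_mem_of_nhds_le_map (hopen y' hy') (hinv y' hy')
      (ball_mem_nhds y' hr)
    rw [e'] at hnear'
    refine ⟨_, hnear.and hnear', dist y y' / 4, hr, ?_⟩
    rintro z ⟨⟨w, ⟨hwK, hw⟩, ew⟩, w', ⟨hwK', hw'⟩, ew'⟩
    refine ⟨w, hwK, w', hwK', ew, ew', ?_⟩
    linarith [dist_triangle4 y w w' y', mem_ball'.1 hw, mem_ball.1 hw']

theorem exists_separatedBranches [MetricSpace α] {f : α → α} (hK : IsCompact K) (hfK : MapsTo f K K)
    (hlip : LocallyLipschitzOn K f) (hopen : ∀ x ∈ K, 𝓝 (f x) ≤ map f (𝓝 x))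
    (hinv : ∀ x ∈ K, ∀ᶠ w in 𝓝 x, f w ∈ K → w ∈ K)
    (htwo : ∀ x ∈ K, ∃ y ∈ K, ∃ y' ∈ K, y ≠ y' ∧ f y = x ∧ f y' = x) :
    ∃ y₀ y₁ : α → α, ∃ r A : ℝ, SeparatedBranches f y₀ y₁ K r A := by
  obtain ⟨L, hL⟩ := hlip.exists_lipschitzOnWith_of_compact hK
  obtain ⟨r, hr, hsep⟩ := exists_pos_forall_exists_lt_dist hK hopen hinv htwo
  have hsep' : ∀ x, ∃ y y', x ∈ K → y ∈ K ∧ y' ∈ K ∧ f y = x ∧ f y' = x ∧ 2 * r < dist y y' := by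
    intro x
    by_cases hx : x ∈ K
    · obtain ⟨y, hy, y', hy', h⟩ := hsep x hx
      exact ⟨y, y', fun _ => ⟨hy, hy', h⟩⟩
    · exact ⟨x, x, fun h => absurd h hx⟩
  choose y₀ y₁ hy using hsep'
  exact ⟨y₀, y₁, r, L + 2, {
    pos := hr
    one_lt := by linarith [L.coe_nonneg]
    mapsTo := hfK
    dist_le := fun x hx y hy => (hL.dist_le_mul x hx y hy).trans (by gcongr; simp)
    mapsTo₀ := fun x hx => (hy x hx).1
    mapsTo₁ := fun x hx => (hy x hx).2.1
    apply₀ := fun x hx => (hy x hx).2.2.1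
    apply₁ := fun x hx => (hy x hx).2.2.2.1
    lt_dist := fun x hx => (hy x hx).2.2.2.2 }⟩

end BackwardWalk

section GreenFunction

open ComplexConjugate

/-- The Green function of the unit disk with pole at `y`. -/
def greenDisk (z y : ℂ) : ℝ := Real.log ‖(1 - conj y * z) / (z - y)‖

variable {z y : ℂ}

theorem sq_norm_one_sub_conj_mul (z y : ℂ) :
    ‖1 - conj y * z‖ ^ 2 = ‖z - y‖ ^ 2 + (1 - ‖z‖ ^ 2) * (1 - ‖y‖ ^ 2) := by
  simp only [← Complex.normSq_eq_norm_sq, Complex.normSq_apply, Complex.sub_re, Complex.sub_im,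
    Complex.mul_re, Complex.mul_im, Complex.conj_re, Complex.conj_im, Complex.one_re,
    Complex.one_im]
  ring

theorem one_sub_sq_norm_pos (hz : ‖z‖ < 1) : 0 < 1 - ‖z‖ ^ 2 :=
  sub_pos.2 ((sq_lt_one_iff₀ (norm_nonneg z)).2 hz)

theorem one_sub_conj_mul_ne_zero (hz : ‖z‖ < 1) (hy : ‖y‖ < 1) : 1 - conj y * z ≠ 0 := by
  refine norm_ne_zero_iff.1 (sq_pos_iff.1 ?_)
  rw [sq_norm_one_sub_conj_mul]
  have := mul_pos (one_sub_sq_norm_pos hz) (one_sub_sq_norm_pos hy)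
  positivity

theorem norm_one_sub_conj_mul_le (hz : ‖z‖ < 1) (hy : ‖y‖ < 1) : ‖1 - conj y * z‖ ≤ 2 := by
  refine (norm_sub_le _ _).trans ?_
  rw [norm_mul, RCLike.norm_conj, norm_one]
  linarith [mul_le_one₀ hy.le (norm_nonneg z) hz.le]

theorem harmonicAt_greenDisk (hz : ‖z‖ < 1) (hy : ‖y‖ < 1) (hzy : z ≠ y) :
    HarmonicAt (fun z => greenDisk z y) z := by
  have hne := sub_ne_zero.2 hzy
  exact AnalyticAt.harmonicAt_log_norm (f := fun z => (1 - conj y * z) / (z - y))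
    (AnalyticAt.div (by fun_prop) (by fun_prop) hne)
    (div_ne_zero (one_sub_conj_mul_ne_zero hz hy) hne)

theorem greenDisk_le_log (hz : ‖z‖ < 1) (hy : ‖y‖ < 1) (hzy : z ≠ y) :
    greenDisk z y ≤ Real.log (2 / dist z y) := by
  have hnum := norm_pos_iff.2 (one_sub_conj_mul_ne_zero hz hy)
  have hdist := dist_pos.2 hzy
  rw [greenDisk, norm_div, ← dist_eq_norm z y]
  gcongr
  exact norm_one_sub_conj_mul_le hz hy

theorem two_mul_greenDisk (z y : ℂ) :
    2 * greenDisk z y = Real.log (‖1 - conj y * z‖ ^ 2 / ‖z - y‖ ^ 2) := by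
  rw [← div_pow, Real.log_pow, greenDisk, norm_div]
  rfl

theorem greenDisk_le (hz : ‖z‖ < 1) (hy : ‖y‖ < 1) (hzy : z ≠ y) :
    greenDisk z y ≤ (1 - ‖z‖ ^ 2) / dist z y ^ 2 := by
  have hnum := norm_pos_iff.2 (one_sub_conj_mul_ne_zero hz hy)
  have hdist := norm_pos_iff.2 (sub_ne_zero.2 hzy)
  have hz2 := one_sub_sq_norm_pos hz
  have hlog := Real.log_le_sub_one_of_pos
    (show 0 < ‖1 - conj y * z‖ ^ 2 / ‖z - y‖ ^ 2 by positivity)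
  rw [← two_mul_greenDisk, sq_norm_one_sub_conj_mul, add_div, div_self (by positivity),
    add_sub_cancel_left] at hlog
  have hle : (1 - ‖z‖ ^ 2) * (1 - ‖y‖ ^ 2) / ‖z - y‖ ^ 2 ≤ (1 - ‖z‖ ^ 2) / ‖z - y‖ ^ 2 := by
    gcongr
    exact mul_le_of_le_one_right hz2.le (sub_le_self _ (sq_nonneg _))
  rw [dist_eq_norm]
  linarith [show 0 < (1 - ‖z‖ ^ 2) / ‖z - y‖ ^ 2 by positivity]

theorem le_greenDisk (hz : ‖z‖ < 1) (hy : ‖y‖ < 1) (hzy : z ≠ y) :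
    (1 - ‖z‖ ^ 2) * (1 - ‖y‖ ^ 2) / 8 ≤ greenDisk z y := by
  have hnum := norm_pos_iff.2 (one_sub_conj_mul_ne_zero hz hy)
  have hdist := norm_pos_iff.2 (sub_ne_zero.2 hzy)
  have hlog := Real.one_sub_inv_le_log_of_pos
    (show 0 < ‖1 - conj y * z‖ ^ 2 / ‖z - y‖ ^ 2 by positivity)
  have hsub : 1 - (‖1 - conj y * z‖ ^ 2 / ‖z - y‖ ^ 2)⁻¹
      = (1 - ‖z‖ ^ 2) * (1 - ‖y‖ ^ 2) / ‖1 - conj y * z‖ ^ 2 := by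
    rw [inv_div, one_sub_div (by positivity), sq_norm_one_sub_conj_mul, add_sub_cancel_left]
  have hle : (1 - ‖z‖ ^ 2) * (1 - ‖y‖ ^ 2) / 2 ^ 2 ≤
      (1 - ‖z‖ ^ 2) * (1 - ‖y‖ ^ 2) / ‖1 - conj y * z‖ ^ 2 := by
    have := one_sub_sq_norm_pos hz
    have := one_sub_sq_norm_pos hy
    gcongr
    exact norm_one_sub_conj_mul_le hz hy
  rw [← two_mul_greenDisk, hsub] at hlog
  linarith

end GreenFunction

section Nonpolar

variable {K : Set ℂ}

theorem harmonicMeasure_pos_of_harmonicOnNhd {p : ℂ → ℝ} {C : ℝ}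
    (hp : HarmonicOnNhd p (ball 0 1 \ K)) (hpos : ∀ z ∈ ball 0 1 \ K, 0 < p z)
    (hC : ∀ z ∈ ball 0 1 \ K, p z ≤ C)
    (hvan : ∀ δ > 0, ∃ r < (1 : ℝ), ∀ z ∈ ball 0 1 \ K, r < ‖z‖ → p z ≤ δ) {z : ℂ}
    (hz : z ∈ ball 0 1 \ K) : 0 < harmonicMeasure K z := by
  have hC0 : 0 < C := (hpos z hz).trans_le (hC z hz)
  have hcomp : IsPerronCompetitor K fun w => C⁻¹ * p w :=
    { continuousOn := fun w hw =>
        (continuousAt_of_harmonicAt (hp w hw).const_smul).continuousWithinAt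
      subharmonicAt := fun w hw => subharmonicAt_of_harmonicAt (hp w hw).const_smul
      nonneg := fun w hw => mul_nonneg (inv_nonneg.2 hC0.le) (hpos w hw).le
      le_one := fun w hw => (inv_mul_le_one₀ hC0).2 (hC w hw)
      vanishing := fun δ hδ => by
        obtain ⟨r, hr, hle⟩ := hvan (C * δ) (by positivity)
        exact ⟨r, hr, fun w hw hrw => (inv_mul_le_iff₀ hC0).2 (hle w hw hrw)⟩ }
  exact (mul_pos (inv_pos.2 hC0) (hpos z hz)).trans_le (hcomp.le_harmonicMeasure hz)

namespace SeparatedBranches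

variable {f y₀ y₁ : ℂ → ℂ} {r A : ℝ} (B : SeparatedBranches f y₀ y₁ K r A)
include B

theorem eventually_walkMean_greenDisk_le (hK : IsCompact K) (hK1 : K ⊆ ball 0 1) {a z : ℂ}
    (ha : a ∈ K) (hz : z ∈ ball 0 1 \ K) :
    ∀ᶠ n in atTop, walkMean y₀ y₁ n (greenDisk z) a ≤ Real.log A + Real.log (4 / r) := by
  have hr := B.pos
  have hA : 0 < A := one_pos.trans B.one_lt
  obtain ⟨x, hx, hxz⟩ := hK.exists_infDist_eq_dist ⟨a, ha⟩ z
  have hnear : ∀ w ∈ K, dist z x ≤ dist z w := fun w hw => hxz ▸ infDist_le_dist_of_mem hw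
  have hpos : 0 < dist z x := dist_pos.2 fun h => hz.2 (h ▸ hx)
  have hlim : Tendsto (fun n : ℕ => r / A ^ n) atTop (𝓝 0) :=
    (tendsto_pow_atTop_atTop_of_one_lt B.one_lt).const_div_atTop r
  filter_upwards [hlim.eventually_lt_const (show 0 < 2 * dist z x by positivity)] with n hn
  have hkernel : ∀ w ∈ K, greenDisk z w ≤
      1 * Real.posLog (r / max (dist x w) (r / A ^ n)) + Real.log (4 / r) := by
    intro w hw
    have hzw : 0 < dist z w := hpos.trans_le (hnear w hw)
    have hε : 0 < max (dist x w) (r / A ^ n) := lt_max_of_lt_right (by positivity)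
    have hmax : max (dist x w) (r / A ^ n) ≤ 2 * dist z w :=
      max_le (by linarith [dist_triangle_left x w z, hnear w hw]) (by linarith [hnear w hw])
    calc greenDisk z w ≤ Real.log (2 / dist z w) :=
          greenDisk_le_log (mem_ball_zero_iff.1 hz.1) (mem_ball_zero_iff.1 (hK1 hw))
            (dist_pos.1 hzw)
      _ ≤ Real.log (r / max (dist x w) (r / A ^ n) * (4 / r)) := by
          refine Real.log_le_log (by positivity) ?_
          rw [div_mul_div_cancel₀' hr.ne', div_le_div_iff₀ hzw hε]
          linarith
      _ = Real.log (r / max (dist x w) (r / A ^ n)) + Real.log (4 / r) :=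
          Real.log_mul (by positivity) (by positivity)
      _ ≤ _ := by
          rw [one_mul]
          exact add_le_add_left (le_max_right _ _) _
  refine (walkMean_mono B.mapsTo₀ B.mapsTo₁ hkernel n a ha).trans ?_
  rw [walkMean_mul_add, one_mul]
  exact add_le_add_left (B.walkMean_posLog_le n x hx a ha) _

theorem harmonicAt_of_tendsto_walkMean_greenDisk (hK : IsClosed K) (hK1 : K ⊆ ball 0 1) {a c : ℂ}
    (ha : a ∈ K) (hc : c ∈ ball 0 1 \ K) (l : Ultrafilter ℕ) {p : ℂ → ℝ}
    (hp : ∀ z ∈ ball 0 1 \ K, Tendsto (fun n => walkMean y₀ y₁ n (greenDisk z) a) l (𝓝 (p z))) :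
    HarmonicAt p c := by
  obtain ⟨R, hR, hsub⟩ := Metric.isOpen_iff.1 (isOpen_ball.sdiff hK) c hc
  have hsub' : ball c (R / 2) ⊆ ball 0 1 \ K := (ball_subset_ball (half_le_self hR.le)).trans hsub
  have hfar : ∀ z ∈ ball c (R / 2), ∀ y ∈ K, R / 2 ≤ dist z y := fun z hz y hy => by
    by_contra! h
    exact (hsub (mem_ball'.2 (by linarith [dist_triangle c z y, mem_ball'.1 hz]))).2 hy
  have hnorm : ∀ z ∈ ball c (R / 2), ‖z‖ < 1 := fun z hz => mem_ball_zero_iff.1 (hsub' hz).1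
  have hnormK : ∀ y ∈ K, ‖y‖ < 1 := fun y hy => mem_ball_zero_iff.1 (hK1 hy)
  have hne : ∀ z ∈ ball c (R / 2), ∀ y ∈ K, z ≠ y := fun z hz y hy =>
    dist_pos.1 ((half_pos hR).trans_le (hfar z hz y hy))
  refine harmonicAt_of_tendsto (M := Real.log (2 / (R / 2))) l (half_pos hR) (fun n =>
    harmonicOnNhd_walkMean B.mapsTo₀ B.mapsTo₁ (fun y hy z hz =>
      harmonicAt_greenDisk (hnorm z hz) (hnormK y hy) (hne z hz y hy)) n a ha)
    (fun n z hz => ?_) fun z hz => hp z (hsub' hz)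
  have hnonneg : ∀ y ∈ K, 0 ≤ greenDisk z y := fun y hy => by
    have := one_sub_sq_norm_pos (hnorm z hz)
    have := one_sub_sq_norm_pos (hnormK y hy)
    exact le_trans (by positivity) (le_greenDisk (hnorm z hz) (hnormK y hy) (hne z hz y hy))
  rw [abs_of_nonneg (le_walkMean B.mapsTo₀ B.mapsTo₁ hnonneg n ha)]
  refine walkMean_le B.mapsTo₀ B.mapsTo₁ (fun y hy => ?_) n ha
  have hdist := (half_pos hR).trans_le (hfar z hz y hy)
  refine (greenDisk_le_log (hnorm z hz) (hnormK y hy) (hne z hz y hy)).trans ?_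
  gcongr
  exact hfar z hz y hy

theorem exists_tendsto_walkMean_greenDisk (hK : IsCompact K) {ρ : ℝ} (hρ : ρ < 1)
    (hKρ : K ⊆ ball 0 ρ) {a z : ℂ} (ha : a ∈ K) (hz : z ∈ ball 0 1 \ K) :
    ∃ x, 0 < x ∧ x ≤ Real.log A + Real.log (4 / r) ∧
      Tendsto (fun n => walkMean y₀ y₁ n (greenDisk z) a) (hyperfilter ℕ : Filter ℕ) (𝓝 x) := by
  have hz1 := mem_ball_zero_iff.1 hz.1
  have hlow : ∀ n, (1 - ‖z‖ ^ 2) * (1 - ρ ^ 2) / 8 ≤ walkMean y₀ y₁ n (greenDisk z) a := fun n => by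
    refine le_walkMean B.mapsTo₀ B.mapsTo₁ (fun y hy => ?_) n ha
    have hyρ := mem_ball_zero_iff.1 (hKρ hy)
    refine le_trans ?_ (le_greenDisk hz1 (hyρ.trans hρ) fun h => hz.2 (h ▸ hy))
    have := one_sub_sq_norm_pos hz1
    gcongr
  have hρ0 : 0 < ρ := (norm_nonneg a).trans_lt (mem_ball_zero_iff.1 (hKρ ha))
  have hlow_pos : 0 < (1 - ‖z‖ ^ 2) * (1 - ρ ^ 2) / 8 := by
    have := one_sub_sq_norm_pos hz1
    have : 0 < 1 - ρ ^ 2 := sub_pos.2 ((sq_lt_one_iff₀ hρ0.le).2 hρ)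
    positivity
  have hmem : ∀ᶠ n in (hyperfilter ℕ : Filter ℕ), walkMean y₀ y₁ n (greenDisk z) a ∈
      Icc ((1 - ‖z‖ ^ 2) * (1 - ρ ^ 2) / 8) (Real.log A + Real.log (4 / r)) := by
    filter_upwards [Nat.hyperfilter_le_atTop (B.eventually_walkMean_greenDisk_le hK
      (hKρ.trans (ball_subset_ball hρ.le)) ha hz)] with n hn using ⟨hlow n, hn⟩
  obtain ⟨x, hx, hlim⟩ := isCompact_Icc.ultrafilter_le_nhds
    ((hyperfilter ℕ).map fun n => walkMean y₀ y₁ n (greenDisk z) a) (le_principal_iff.2 hmem)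
  exact ⟨x, hlow_pos.trans_le hx.1, hx.2, hlim⟩

/- The potential is the limit of the Green potentials of the distributions of the backward walk;
it is bounded because the walk does not concentrate near any point of `K`. -/
theorem harmonicMeasure_pos (hK : IsCompact K) (hne : K.Nonempty) (hK1 : K ⊆ ball 0 1) :
    ∀ z ∈ ball 0 1 \ K, 0 < harmonicMeasure K z := by
  obtain ⟨ρ, ⟨-, hρ1⟩, hKρ⟩ := exists_pos_lt_subset_ball one_pos hK.isClosed hK1
  obtain ⟨a, ha⟩ := hne
  choose! p hpos hle hlim using fun z (hz : z ∈ ball (0 : ℂ) 1 \ K) =>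
    B.exists_tendsto_walkMean_greenDisk hK hρ1 hKρ ha hz
  have hp : HarmonicOnNhd p (ball 0 1 \ K) := fun z hz =>
    B.harmonicAt_of_tendsto_walkMean_greenDisk hK.isClosed hK1 ha hz _ hlim
  have hedge : ∀ z ∈ annulus ρ, p z ≤ (1 - ‖z‖ ^ 2) / (‖z‖ - ρ) ^ 2 := fun z hz => by
    refine le_of_tendsto' (hlim z (annulus_subset_ball_diff hKρ hz)) fun n =>
      walkMean_le B.mapsTo₀ B.mapsTo₁ (fun y hy => ?_) n ha
    have hyρ := mem_ball_zero_iff.1 (hKρ hy)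
    have hdist : ‖z‖ - ρ ≤ dist z y := by
      rw [dist_eq_norm]
      linarith [norm_sub_norm_le z y]
    have := one_sub_sq_norm_pos hz.2
    have := sub_pos.2 hz.1
    refine (greenDisk_le hz.2 (hyρ.trans hρ1) fun h => hz.1.not_gt (h ▸ hyρ)).trans ?_
    gcongr
  refine fun z => harmonicMeasure_pos_of_harmonicOnNhd hp hpos hle fun δ hδ => ?_
  have hcont : ContinuousAt (fun s : ℝ => (1 - s ^ 2) / (s - ρ) ^ 2) 1 :=
    ContinuousAt.div (by fun_prop) (by fun_prop) (pow_ne_zero 2 (sub_pos.2 hρ1).ne')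
  have hsmall : ∀ᶠ s : ℝ in 𝓝 1, (1 - s ^ 2) / (s - ρ) ^ 2 < δ :=
    hcont.eventually_lt_const (by simpa using hδ)
  obtain ⟨s, hs, hIoo⟩ :=
    (mem_nhdsLT_iff_exists_Ioo_subset' hρ1).1 (mem_nhdsWithin_of_mem_nhds hsmall)
  refine ⟨max ρ s, max_lt hρ1 hs, fun w hw hlt => ?_⟩
  have hw1 := mem_ball_zero_iff.1 hw.1
  exact (hedge w ⟨(le_max_left _ _).trans_lt hlt, hw1⟩).trans
    (hIoo ⟨(le_max_right _ _).trans_lt hlt, hw1⟩).le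

end SeparatedBranches

end Nonpolar

/-! ### Superlevel sets of the harmonic measure -/

section Superlevel

variable {K : Set ℂ}

theorem eq_zero_of_isPreconnected_of_nonpos {Ω : Set ℂ} (hΩ : IsOpen Ω) (hconn : IsPreconnected Ω)
    {u : ℂ → ℝ} (hu : ContinuousOn u Ω) (hle : ∀ z ∈ Ω, u z ≤ 0)
    (hharm : ∀ z ∈ Ω, u z = 0 → HarmonicAt u z) {a : ℂ} (ha : a ∈ Ω) (h0 : u a = 0) :
    ∀ z ∈ Ω, u z = 0 := by
  have hopen : IsOpen (Ω ∩ u ⁻¹' {0}) := isOpen_iff_mem_nhds.2 fun z hz => by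
    have hz0 : u z = 0 := hz.2
    have hmax : IsLocalMax u z := by
      filter_upwards [hΩ.mem_nhds hz.1] with w hw using (hle w hw).trans_eq hz0.symm
    filter_upwards [eventuallyEq_const_of_harmonicAt_of_isLocalMax (hharm z hz.1 hz0) hmax,
      hΩ.mem_nhds hz.1] with w hw hwΩ using ⟨hwΩ, hw.trans hz0⟩
  have hopen' : IsOpen (Ω ∩ u ⁻¹' {0}ᶜ) := hu.isOpen_inter_preimage hΩ isOpen_compl_singleton
  have hsub := hconn.subset_left_of_subset_union hopen hopen'
    (disjoint_left.2 fun z hz hz' => hz'.2 hz.2)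
    (fun z hz => (em (u z = 0)).imp (⟨hz, ·⟩) (⟨hz, ·⟩)) ⟨a, ha, ha, h0⟩
  exact fun z hz => (hsub hz).2

theorem harmonicMeasure_lt_one (hK : IsClosed K) (hK1 : K ⊆ ball 0 1)
    (hconn : IsPreconnected (ball 0 1 \ K)) {z : ℂ} (hz : z ∈ ball 0 1 \ K) :
    harmonicMeasure K z < 1 := by
  refine lt_of_le_of_ne (harmonicMeasure_le_one hz) fun heq => ?_
  have hall := eq_zero_of_isPreconnected_of_nonpos (u := fun w => harmonicMeasure K w - 1)
    (isOpen_ball.sdiff hK) hconn ((continuousOn_harmonicMeasure hK).sub continuousOn_const)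
    (fun w hw => sub_nonpos.2 (harmonicMeasure_le_one hw))
    (fun w hw _ => (harmonicAt_harmonicMeasure hK hw).sub (InnerProductSpace.harmonicAt_const 1))
    hz (sub_eq_zero.2 heq)
  obtain ⟨r, hr, hvan⟩ := harmonicMeasure_vanishing hK hK1 (1 / 2) (by norm_num)
  obtain ⟨ρ, ⟨hρ0, hρ1⟩, hKρ⟩ := exists_pos_lt_subset_ball one_pos hK hK1
  obtain ⟨t, ht, ht1⟩ := exists_between (max_lt hr hρ1)
  obtain ⟨hrt, hρt⟩ := max_lt_iff.1 ht
  have hnorm : ‖(t : ℂ)‖ = t := Complex.norm_of_nonneg (hρ0.trans hρt).le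
  have htΩ : (t : ℂ) ∈ ball (0 : ℂ) 1 \ K :=
    annulus_subset_ball_diff hKρ ⟨hρt.trans_eq hnorm.symm, hnorm.trans_lt ht1⟩
  linarith [hall t htΩ, hvan t htΩ (hrt.trans_eq hnorm.symm)]

theorem exists_pos_le_harmonicMeasure_on_ball (hK : IsClosed K)
    (hpos : ∀ z ∈ ball 0 1 \ K, 0 < harmonicMeasure K z) {r : ℝ} (hr0 : 0 < r) (hr1 : r < 1)
    (hKr : K ⊆ ball 0 r) : ∃ c > 0, ∀ z ∈ ball 0 r \ K, c ≤ harmonicMeasure K z := by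
  have hsphere : sphere (0 : ℂ) r ⊆ ball 0 1 \ K := fun z hz =>
    ⟨sphere_subset_ball hr1 hz, fun h => (mem_ball.1 (hKr h)).ne hz⟩
  obtain ⟨x, hx, hmin⟩ := (isCompact_sphere (0 : ℂ) r).exists_isMinOn
    (NormedSpace.sphere_nonempty.2 hr0.le) ((continuousOn_harmonicMeasure hK).mono hsphere)
  exact ⟨harmonicMeasure K x, hpos x (hsphere hx), fun z =>
    (isPerronCompetitor_harmonicMeasure hK (hKr.trans (ball_subset_ball hr1.le))
      ).le_harmonicMeasure_of_le_on_frontier isOpen_ball hr1 Subset.rfl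
      (q := fun _ => harmonicMeasure K x) continuousOn_const
      (fun _ _ => subharmonicAt_of_harmonicAt (InnerProductSpace.harmonicAt_const _))
      (fun _ _ => harmonicMeasure_le_one (hsphere hx))
      (fun _ hw => hmin (frontier_ball_subset_sphere hw.1))⟩

/-- The part of the unit disk where the harmonic measure of `K` exceeds `s`. The points of `K` are
included, as `harmonicMeasure K` has no meaning there. -/
def superlevel (K : Set ℂ) (s : ℝ) : Set ℂ := {z ∈ ball 0 1 | z ∈ K ∨ s < harmonicMeasure K z}

theorem superlevel_subset_ball (s : ℝ) : superlevel K s ⊆ ball 0 1 := sep_subset _ _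

theorem subset_superlevel (hK1 : K ⊆ ball 0 1) (s : ℝ) : K ⊆ superlevel K s :=
  fun _ hz => ⟨hK1 hz, .inl hz⟩

theorem eventually_ball_subset_superlevel (hK : IsClosed K) (hK1 : K ⊆ ball 0 1)
    (hpos : ∀ z ∈ ball 0 1 \ K, 0 < harmonicMeasure K z) {r : ℝ} (hr : r < 1) :
    ∀ᶠ s in 𝓝[>] 0, ball 0 r ⊆ superlevel K s := by
  obtain ⟨ρ, ⟨hρ0, hρ1⟩, hKρ⟩ := exists_pos_lt_subset_ball one_pos hK hK1
  have hmax : max r ρ < 1 := max_lt hr hρ1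
  obtain ⟨c, hc, hle⟩ := exists_pos_le_harmonicMeasure_on_ball hK hpos (lt_max_of_lt_right hρ0)
    hmax (hKρ.trans (ball_subset_ball (le_max_right _ _)))
  filter_upwards [mem_nhdsWithin_of_mem_nhds (Iio_mem_nhds hc)] with s hs z hz
  refine ⟨ball_subset_ball hr.le hz, or_iff_not_imp_left.2 fun hzK => ?_⟩
  exact (mem_Iio.1 hs).trans_le (hle z ⟨ball_subset_ball (le_max_left _ _) hz, hzK⟩)

theorem eventually_isOpen_superlevel (hK : IsClosed K) (hK1 : K ⊆ ball 0 1)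
    (hpos : ∀ z ∈ ball 0 1 \ K, 0 < harmonicMeasure K z) :
    ∀ᶠ s in 𝓝[>] 0, IsOpen (superlevel K s) := by
  obtain ⟨ρ, ⟨-, hρ1⟩, hKρ⟩ := exists_pos_lt_subset_ball one_pos hK hK1
  filter_upwards [eventually_ball_subset_superlevel hK hK1 hpos hρ1] with s hs
  refine isOpen_iff_mem_nhds.2 fun z hz => ?_
  by_cases hzK : z ∈ K
  · exact mem_of_superset (isOpen_ball.mem_nhds (hKρ hzK)) hs
  · have hz1 : z ∈ ball 0 1 \ K := ⟨hz.1, hzK⟩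
    filter_upwards [(continuousAt_of_harmonicAt (harmonicAt_harmonicMeasure hK hz1)).eventually
      (lt_mem_nhds (hz.2.resolve_left hzK)), isOpen_ball.mem_nhds hz.1] with w hw hw1
    exact ⟨hw1, .inr hw⟩

theorem exists_superlevel_subset_closedBall (hK : IsClosed K) (hK1 : K ⊆ ball 0 1) {s : ℝ}
    (hs : 0 < s) : ∃ r < 1, superlevel K s ⊆ closedBall 0 r := by
  obtain ⟨r, hr, hvan⟩ := harmonicMeasure_vanishing hK hK1 s hs
  obtain ⟨ρ, ⟨-, hρ1⟩, hKρ⟩ := exists_pos_lt_subset_ball one_pos hK hK1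
  refine ⟨max r ρ, max_lt hr hρ1, fun z hz => mem_closedBall_zero_iff.2 ?_⟩
  by_contra! hlt
  obtain ⟨hr, hρ⟩ := max_lt_iff.1 hlt
  have hzK : z ∉ K := fun h => hρ.not_gt (mem_ball_zero_iff.1 (hKρ h))
  exact (hz.2.resolve_left hzK).not_ge (hvan z ⟨hz.1, hzK⟩ hr)

theorem starConvex_zero_of_radial {W : Set ℂ} {r : ℝ} (hr : 0 < r) (hrW : ball 0 r ⊆ W)
    (hstep : ∀ z ∈ W, ∀ t : ℝ, 0 < t → t < 1 → r ≤ t * ‖z‖ → (t : ℂ) * z ∈ W) :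
    StarConvex ℝ 0 W := by
  refine starConvex_zero_iff.2 fun z hz t ht0 ht1 => ?_
  rw [Complex.real_smul]
  by_cases htr : t * ‖z‖ < r
  · exact hrW (by rwa [mem_ball_zero_iff, norm_mul, Complex.norm_of_nonneg ht0])
  rcases ht1.eq_or_lt with rfl | ht1
  · simpa using hz
  have htz : 0 < t * ‖z‖ := hr.trans_le (not_lt.1 htr)
  exact hstep z hz t (pos_of_mul_pos_left htz (norm_nonneg z)) ht1 (not_lt.1 htr)

theorem ProperOn.exists_inter_preimage_closedBall_subset {g : ℂ → ℂ} {U' : Set ℂ}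
    (hg : ProperOn g U' (ball 0 1)) (hU' : U' ⊆ ball 0 1) {r : ℝ} (hr : r < 1) :
    ∃ ρ ∈ Ioo (0 : ℝ) 1, U' ∩ g ⁻¹' closedBall 0 r ⊆ ball 0 ρ :=
  exists_pos_lt_subset_ball one_pos
    (hg _ (closedBall_subset_ball hr) (isCompact_closedBall 0 r)).isClosed
    (inter_subset_left.trans hU')

section Preimage

variable {h : ℂ → ℂ} (hK : IsClosed K) (hK1 : K ⊆ ball 0 1)
  (hpos : ∀ z ∈ ball 0 1 \ K, 0 < harmonicMeasure K z) (hd : DifferentiableOn ℂ h (ball 0 1))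
  (hm : MapsTo h (ball 0 1) (ball 0 1)) (hp : ProperOn h (ball 0 1) (ball 0 1))

include hK hK1 hpos hd hm hp

theorem exists_radial_lt_harmonicMeasure_comp :
    ∃ r ∈ Ioo (0 : ℝ) 1, (∀ z ∈ ball 0 1, r ≤ ‖z‖ → h z ∉ K) ∧
      ∀ (z : ℂ) (t : ℝ), 0 < t → t < 1 → r ≤ t * ‖z‖ → ‖z‖ < 1 →
        harmonicMeasure K (h z) < harmonicMeasure K (h (t * z)) := by
  obtain ⟨ρ, ⟨-, hρ1⟩, hKρ⟩ := exists_pos_lt_subset_ball one_pos hK hK1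
  obtain ⟨ρ', ⟨hρ'0, hρ'1⟩, hρ'⟩ := hp.exists_inter_preimage_closedBall_subset Subset.rfl hρ1
  have hnotK : ∀ z ∈ ball 0 1, ρ' ≤ ‖z‖ → h z ∉ K := fun z hz hle hzK =>
    hle.not_gt (mem_ball_zero_iff.1 (hρ' ⟨hz, ball_subset_closedBall (hKρ hzK)⟩))
  have hmem : ∀ z ∈ annulus ρ', z ∈ ball 0 1 ∧ h z ∈ ball 0 1 \ K := fun z hz =>
    have hz1 := mem_ball_zero_iff.2 hz.2
    ⟨hz1, hm hz1, hnotK z hz1 hz.1.le⟩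
  obtain ⟨r, hρr, hr1, hrad⟩ := exists_radial_lt_of_harmonicOnNhd_annulus
    (E := fun z => harmonicMeasure K (h z)) hρ'0 hρ'1 (fun z hz => hpos _ (hmem z hz).2)
    (fun z hz => harmonicAt_comp_analyticAt (harmonicAt_harmonicMeasure hK (hmem z hz).2)
      (hd.analyticAt (isOpen_ball.mem_nhds (hmem z hz).1))) fun δ hδ => by
      obtain ⟨s, hs, hvan⟩ := harmonicMeasure_vanishing hK hK1 δ hδ
      obtain ⟨s', hs', hsub⟩ := hp.exists_inter_preimage_closedBall_subset Subset.rfl hs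
      refine ⟨s', hs'.2, fun z hz hlt => hvan _ (hmem z hz).2 ?_⟩
      by_contra! hle
      exact hlt.not_gt (mem_ball_zero_iff.1
        (hsub ⟨(hmem z hz).1, mem_closedBall_zero_iff.2 hle⟩))
  exact ⟨r, ⟨hρ'0.trans hρr, hr1⟩, fun z hz hle => hnotK z hz (hρr.le.trans hle), hrad⟩

theorem eventually_starConvex_preimage_superlevel :
    ∀ᶠ s in 𝓝[>] 0, (0 : ℂ) ∈ ball 0 1 ∩ h ⁻¹' superlevel K s ∧
      StarConvex ℝ 0 (ball 0 1 ∩ h ⁻¹' superlevel K s) := by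
  obtain ⟨r, ⟨hr0, hr1⟩, hnotK, hrad⟩ := exists_radial_lt_harmonicMeasure_comp hK hK1 hpos hd hm hp
  have hsub : closedBall (0 : ℂ) r ⊆ ball 0 1 := closedBall_subset_ball hr1
  obtain ⟨R, ⟨-, hR1⟩, hR⟩ := exists_pos_lt_subset_ball one_pos
    ((isCompact_closedBall (0 : ℂ) r).image_of_continuousOn (hd.continuousOn.mono hsub)).isClosed
    (hm.mono_left hsub).image_subset
  filter_upwards [eventually_ball_subset_superlevel hK hK1 hpos hR1] with s hs
  have hball : ball 0 r ⊆ ball 0 1 ∩ h ⁻¹' superlevel K s := fun z hz =>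
    ⟨ball_subset_ball hr1.le hz, hs (hR ⟨z, ball_subset_closedBall hz, rfl⟩)⟩
  refine ⟨hball (mem_ball_self hr0), starConvex_zero_of_radial hr0 hball ?_⟩
  intro z ⟨hz1, hz⟩ t ht0 ht1 hle
  have hz1' := mem_ball_zero_iff.1 hz1
  have hrz : r ≤ ‖z‖ := hle.trans (mul_le_of_le_one_left (norm_nonneg z) ht1.le)
  have htz : (t : ℂ) * z ∈ ball 0 1 := by
    rw [mem_ball_zero_iff, norm_mul, Complex.norm_of_nonneg ht0.le]
    exact (mul_le_of_le_one_left (norm_nonneg z) ht1.le).trans_lt hz1'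
  exact ⟨htz, hm htz,
    .inr ((hz.2.resolve_left (hnotK z hz1 hrz)).trans (hrad z t ht0 ht1 hle hz1'))⟩

end Preimage

end Superlevel

/-- The normalized dynamical situation: `g : U' → ball 0 1` is a proper holomorphic map of a proper
open subset of the unit disk, and `K ⊆ U'` is a completely invariant nonempty compact set with
connected complement, on which `g` is open and every point has two preimages of order two. -/
structure DiskSystem (g : ℂ → ℂ) (U' K : Set ℂ) : Prop where
  isOpen : IsOpen U'
  subset_ball : U' ⊆ ball 0 1
  ne_ball : U' ≠ ball 0 1
  differentiableOn : DifferentiableOn ℂ g U'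
  mapsTo : MapsTo g U' (ball 0 1)
  properOn : ProperOn g U' (ball 0 1)
  isCompact : IsCompact K
  nonempty : K.Nonempty
  inter_preimage_eq : U' ∩ g ⁻¹' K = K
  isPreconnected_diff : IsPreconnected (ball 0 1 \ K)
  nhds_le_map : ∀ x ∈ K, 𝓝 (g x) ≤ map g (𝓝 x)
  two_preimages : ∀ x ∈ K, ∃ y ∈ K, ∃ y' ∈ K, y ≠ y' ∧ g (g y) = x ∧ g (g y') = x

namespace DiskSystem

variable {g : ℂ → ℂ} {U' K : Set ℂ} (H : DiskSystem g U' K) {s : ℝ} {z : ℂ}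

include H

theorem subset : K ⊆ U' := fun _ hz => (H.inter_preimage_eq.symm ▸ hz : _ ∈ U' ∩ g ⁻¹' K).1

theorem mapsTo_self : MapsTo g K K := fun _ hz =>
  (H.inter_preimage_eq.symm ▸ hz : _ ∈ U' ∩ g ⁻¹' K).2

theorem subset_unitBall : K ⊆ ball 0 1 := H.subset.trans H.subset_ball

theorem mem_of_map_mem (hz : z ∈ U') (hgz : g z ∈ K) : z ∈ K :=
  H.inter_preimage_eq ▸ (⟨hz, hgz⟩ : z ∈ U' ∩ g ⁻¹' K)

theorem diff_subset : U' \ K ⊆ ball 0 1 \ K := sdiff_subset_sdiff_left H.subset_ball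

theorem map_mem_diff (hz : z ∈ U' \ K) : g z ∈ ball 0 1 \ K :=
  ⟨H.mapsTo hz.1, fun h => hz.2 (H.mem_of_map_mem hz.1 h)⟩

theorem analyticAt (hz : z ∈ U') : AnalyticAt ℂ g z :=
  H.differentiableOn.analyticAt (H.isOpen.mem_nhds hz)

theorem harmonicAt_comp (hz : z ∈ U' \ K) : HarmonicAt (fun z => harmonicMeasure K (g z)) z :=
  harmonicAt_comp_analyticAt (harmonicAt_harmonicMeasure H.isCompact.isClosed (H.map_mem_diff hz))
    (H.analyticAt hz.1)

/- A critical value may have only one preimage under `g`, so that the backward walk is run for the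
second iterate. -/
theorem harmonicMeasure_pos : ∀ z ∈ ball 0 1 \ K, 0 < harmonicMeasure K z := by
  have hg : ∀ x ∈ K, AnalyticAt ℂ g x := fun x hx => H.analyticAt (H.subset hx)
  have hU' : ∀ x ∈ K, ∀ᶠ w in 𝓝 x, w ∈ U' := fun x hx => H.isOpen.mem_nhds (H.subset hx)
  have hlip : LocallyLipschitzOn K (g ∘ g) := fun x hx => by
    obtain ⟨L, t, ht, hL⟩ := (((hg _ (H.mapsTo_self hx)).comp (hg x hx)).contDiffAt
      (n := 1)).exists_lipschitzOnWith
    exact ⟨L, t, mem_nhdsWithin_of_mem_nhds ht, hL⟩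
  have hopen : ∀ x ∈ K, 𝓝 ((g ∘ g) x) ≤ map (g ∘ g) (𝓝 x) := fun x hx => by
    rw [← map_map]
    exact (H.nhds_le_map _ (H.mapsTo_self hx)).trans (map_mono (H.nhds_le_map x hx))
  have hinv : ∀ x ∈ K, ∀ᶠ w in 𝓝 x, (g ∘ g) w ∈ K → w ∈ K := fun x hx => by
    filter_upwards [hU' x hx, (hg x hx).continuousAt.eventually (hU' _ (H.mapsTo_self hx))]
      with w hw hgw hggw using H.mem_of_map_mem hw (H.mem_of_map_mem hgw hggw)
  obtain ⟨y₀, y₁, r, A, hB⟩ := exists_separatedBranches H.isCompact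
    (H.mapsTo_self.comp H.mapsTo_self) hlip hopen hinv H.two_preimages
  exact hB.harmonicMeasure_pos H.isCompact H.nonempty H.subset_unitBall

theorem indicator_nonneg (hz : z ∉ K) : 0 ≤ U'.indicator (fun z => harmonicMeasure K (g z)) z :=
  indicator_apply_nonneg fun hzU => harmonicMeasure_nonneg (H.map_mem_diff ⟨hzU, hz⟩)

theorem indicator_eventuallyEq (f : ℂ → ℝ) (hz : z ∈ U') : U'.indicator f =ᶠ[𝓝 z] f := by
  filter_upwards [H.isOpen.mem_nhds hz] with w hw using indicator_of_mem hw f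

theorem eventually_indicator_le (hz : z ∉ U') {δ : ℝ} (hδ : 0 < δ) :
    ∀ᶠ w in 𝓝 z, w ∉ K → U'.indicator (fun z => harmonicMeasure K (g z)) w ≤ δ := by
  obtain ⟨r, hr, hvan⟩ :=
    harmonicMeasure_vanishing H.isCompact.isClosed H.subset_unitBall δ hδ
  have hcomp := H.properOn _ (closedBall_subset_ball hr) (isCompact_closedBall 0 r)
  filter_upwards [hcomp.isClosed.isOpen_compl.mem_nhds fun h => hz h.1] with w hw hwK
  refine indicator_apply_le' (fun hwU => hvan _ (H.map_mem_diff ⟨hwU, hwK⟩) ?_) (fun _ => hδ.le)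
  exact not_le.1 fun hle => hw ⟨hwU, mem_closedBall_zero_iff.2 hle⟩

theorem isPerronCompetitor_indicator :
    IsPerronCompetitor K (U'.indicator fun z => harmonicMeasure K (g z)) where
  continuousOn := fun z hz => ContinuousAt.continuousWithinAt <| by
    by_cases hzU : z ∈ U'
    · exact (continuousAt_of_harmonicAt (H.harmonicAt_comp ⟨hzU, hz.2⟩)).congr
        (H.indicator_eventuallyEq _ hzU).symm
    rw [ContinuousAt, indicator_of_notMem hzU]
    refine tendsto_order.2 ⟨fun a ha => ?_, fun a ha => ?_⟩
    · filter_upwards [H.isCompact.isClosed.isOpen_compl.mem_nhds hz.2] with w hw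
        using ha.trans_le (H.indicator_nonneg hw)
    · filter_upwards [H.eventually_indicator_le hzU (half_pos ha),
        H.isCompact.isClosed.isOpen_compl.mem_nhds hz.2] with w hw hwK
        using (hw hwK).trans_lt (half_lt_self ha)
  subharmonicAt := fun z hz => by
    by_cases hzU : z ∈ U'
    · exact (subharmonicAt_of_harmonicAt (H.harmonicAt_comp ⟨hzU, hz.2⟩)).congr
        (H.indicator_eventuallyEq _ hzU)
    refine (subharmonicAt_of_harmonicAt (InnerProductSpace.harmonicAt_const 0)).of_eventually_le ?_
      (indicator_of_notMem hzU _).symm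
    filter_upwards [H.isCompact.isClosed.isOpen_compl.mem_nhds hz.2] with w hw
      using H.indicator_nonneg hw
  nonneg := fun _ hz => H.indicator_nonneg hz.2
  le_one := fun z hz => indicator_apply_le'
    (fun hzU => harmonicMeasure_le_one (H.map_mem_diff ⟨hzU, hz.2⟩)) (fun _ => zero_le_one)
  vanishing := fun δ hδ => by
    obtain ⟨r, hr, hvan⟩ :=
      harmonicMeasure_vanishing H.isCompact.isClosed H.subset_unitBall δ hδ
    obtain ⟨ρ, hρ, hsub⟩ := H.properOn.exists_inter_preimage_closedBall_subset H.subset_ball hr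
    refine ⟨ρ, hρ.2, fun z hz hlt => indicator_apply_le'
      (fun hzU => hvan _ (H.map_mem_diff ⟨hzU, hz.2⟩) (not_le.1 fun hle => ?_)) (fun _ => hδ.le)⟩
    exact hlt.not_gt (mem_ball_zero_iff.1 (hsub ⟨hzU, mem_closedBall_zero_iff.2 hle⟩))

theorem harmonicMeasure_map_lt (hz : z ∈ U' \ K) :
    harmonicMeasure K (g z) < harmonicMeasure K z := by
  set f := U'.indicator fun z => harmonicMeasure K (g z) with hf
  have hle : ∀ w ∈ ball 0 1 \ K, f w ≤ harmonicMeasure K w := fun w hw =>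
    H.isPerronCompetitor_indicator.le_harmonicMeasure hw
  have hfz : f z = harmonicMeasure K (g z) := indicator_of_mem hz.1 _
  refine lt_of_le_of_ne (hfz ▸ hle z (H.diff_subset hz)) fun heq => ?_
  have hmem : ∀ w ∈ ball 0 1 \ K, f w - harmonicMeasure K w = 0 → w ∈ U' := fun w hw h0 => by
    by_contra hwU
    rw [hf, indicator_of_notMem hwU, zero_sub, neg_eq_zero] at h0
    exact (H.harmonicMeasure_pos w hw).ne' h0
  have hall := eq_zero_of_isPreconnected_of_nonpos (u := fun w => f w - harmonicMeasure K w)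
    (isOpen_ball.sdiff H.isCompact.isClosed) H.isPreconnected_diff
    (H.isPerronCompetitor_indicator.continuousOn.sub
      (continuousOn_harmonicMeasure H.isCompact.isClosed))
    (fun w hw => sub_nonpos.2 (hle w hw))
    (fun w hw h0 => HarmonicAt.sub
      ((InnerProductSpace.harmonicAt_congr_nhds (H.indicator_eventuallyEq _ (hmem w hw h0))).2
        (H.harmonicAt_comp ⟨hmem w hw h0, hw.2⟩))
      (harmonicAt_harmonicMeasure H.isCompact.isClosed hw))
    (H.diff_subset hz) (sub_eq_zero.2 (hfz.trans heq))
  refine H.ne_ball (H.subset_ball.antisymm fun w hw => ?_)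
  by_cases hwK : w ∈ K
  · exact H.subset hwK
  · exact hmem w ⟨hw, hwK⟩ (hall w ⟨hw, hwK⟩)

theorem isCompact_closure_and_subset (hs : 0 < s) :
    IsCompact (closure (U' ∩ g ⁻¹' superlevel K s)) ∧
      closure (U' ∩ g ⁻¹' superlevel K s) ⊆ U' := by
  obtain ⟨r, hr, hsub⟩ :=
    exists_superlevel_subset_closedBall H.isCompact.isClosed H.subset_unitBall hs
  have hcomp := H.properOn _ (closedBall_subset_ball hr) (isCompact_closedBall 0 r)
  have hcl := closure_minimal (inter_subset_inter_right U' (preimage_mono hsub)) hcomp.isClosed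
  exact ⟨hcomp.of_isClosed_subset isClosed_closure hcl, hcl.trans inter_subset_left⟩

theorem le_harmonicMeasure_map (hs : 0 < s) (hz : z ∈ closure (U' ∩ g ⁻¹' superlevel K s))
    (hzK : z ∉ K) : s ≤ harmonicMeasure K (g z) := by
  have hcont := continuousAt_of_harmonicAt
    (H.harmonicAt_comp ⟨(H.isCompact_closure_and_subset hs).2 hz, hzK⟩)
  have hfreq := (mem_closure_iff_frequently.1 hz).and_eventually
    (H.isCompact.isClosed.isOpen_compl.mem_nhds hzK)
  refine ge_of_tendsto_of_frequently hcont (hfreq.mono fun w ⟨hw, hwK⟩ => ?_)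
  exact (hw.2.2.resolve_left (H.map_mem_diff ⟨hw.1, hwK⟩).2).le

theorem closure_subset_superlevel (hs : 0 < s) :
    closure (U' ∩ g ⁻¹' superlevel K s) ⊆ superlevel K s := by
  intro z hz
  have hzU := (H.isCompact_closure_and_subset hs).2 hz
  refine ⟨H.subset_ball hzU, or_iff_not_imp_left.2 fun hzK => ?_⟩
  exact (H.le_harmonicMeasure_map hs hz hzK).trans_lt (H.harmonicMeasure_map_lt ⟨hzU, hzK⟩)

theorem subset_inter_preimage_superlevel (s : ℝ) : K ⊆ U' ∩ g ⁻¹' superlevel K s :=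
  fun _ hz => ⟨H.subset hz, subset_superlevel H.subset_unitBall s (H.mapsTo_self hz)⟩

theorem isOpen_inter_preimage_superlevel (hV : IsOpen (superlevel K s)) :
    IsOpen (U' ∩ g ⁻¹' superlevel K s) :=
  H.differentiableOn.continuousOn.isOpen_inter_preimage H.isOpen hV

theorem mem_frontier_inter_preimage_superlevel (hs : 0 < s) (hV : IsOpen (superlevel K s))
    (hz : z ∈ frontier (U' ∩ g ⁻¹' superlevel K s)) :
    z ∈ U' \ K ∧ harmonicMeasure K (g z) = s := by
  rw [(H.isOpen_inter_preimage_superlevel hV).frontier_eq] at hz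
  have hzU := (H.isCompact_closure_and_subset hs).2 hz.1
  have hzK : z ∉ K := fun h => hz.2 (H.subset_inter_preimage_superlevel s h)
  refine ⟨⟨hzU, hzK⟩, le_antisymm (not_lt.1 fun h => ?_) (H.le_harmonicMeasure_map hs hz.1 hzK)⟩
  exact hz.2 ⟨hzU, H.mapsTo hzU, .inr h⟩

theorem exists_lt_le_harmonicMeasure_on_frontier (hs : 0 < s) (hs1 : s < 1)
    (hV : IsOpen (superlevel K s)) :
    ∃ m ∈ Ioo s 1, ∀ z ∈ frontier (U' ∩ g ⁻¹' superlevel K s), m ≤ harmonicMeasure K z := by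
  set V' := U' ∩ g ⁻¹' superlevel K s
  have hmem : frontier V' ⊆ U' \ K := fun z hz =>
    (H.mem_frontier_inter_preimage_superlevel hs hV hz).1
  rcases (frontier V').eq_empty_or_nonempty with hempty | hne
  · obtain ⟨m, hm⟩ := exists_between hs1
    exact ⟨m, hm, by simp [hempty]⟩
  have hcomp : IsCompact (frontier V') :=
    (H.isCompact_closure_and_subset hs).1.of_isClosed_subset isClosed_frontier
      frontier_subset_closure
  obtain ⟨x, hx, hmin⟩ := hcomp.exists_isMinOn hne
    ((continuousOn_harmonicMeasure H.isCompact.isClosed).mono (hmem.trans H.diff_subset))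
  refine ⟨harmonicMeasure K x, ⟨?_, harmonicMeasure_lt_one H.isCompact.isClosed H.subset_unitBall
    H.isPreconnected_diff (H.diff_subset (hmem hx))⟩, fun z hz => hmin hz⟩
  exact (H.mem_frontier_inter_preimage_superlevel hs hV hx).2.symm.trans_lt
    (H.harmonicMeasure_map_lt (hmem hx))

theorem exists_one_sub_harmonicMeasure_le (hs : 0 < s) (hs1 : s < 1)
    (hV : IsOpen (superlevel K s)) :
    ∃ θ ∈ Ico (0 : ℝ) 1, ∀ z ∈ (U' ∩ g ⁻¹' superlevel K s) \ K,
      1 - harmonicMeasure K z ≤ θ * (1 - harmonicMeasure K (g z)) := by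
  obtain ⟨m, ⟨hsm, hm1⟩, hm⟩ := H.exists_lt_le_harmonicMeasure_on_frontier hs hs1 hV
  have h1s : 0 < 1 - s := sub_pos.2 hs1
  obtain ⟨-, hclU⟩ := H.isCompact_closure_and_subset hs
  obtain ⟨ρ, ⟨-, hρ⟩, hclρ⟩ :=
    exists_pos_lt_subset_ball one_pos isClosed_closure (hclU.trans H.subset_ball)
  set θ := (1 - m) / (1 - s) with hθ
  have hθ0 : 0 ≤ θ := div_nonneg (sub_nonneg.2 hm1.le) h1s.le
  have hharm : ∀ w ∈ U' \ K, HarmonicAt (fun w => 1 - θ * (1 - harmonicMeasure K (g w))) w :=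
    fun w hw => (InnerProductSpace.harmonicAt_const 1).sub
      (((InnerProductSpace.harmonicAt_const 1).sub (H.harmonicAt_comp hw)).const_smul (c := θ))
  refine ⟨θ, ⟨hθ0, (div_lt_one h1s).2 (by linarith)⟩, fun z hz => sub_le_comm.1 ?_⟩
  refine (isPerronCompetitor_harmonicMeasure H.isCompact.isClosed H.subset_unitBall
    ).le_harmonicMeasure_of_le_on_frontier (H.isOpen_inter_preimage_superlevel hV) hρ
    (subset_closure.trans hclρ) (q := fun w => 1 - θ * (1 - harmonicMeasure K (g w)))
    (fun w hw => (continuousAt_of_harmonicAt (hharm w ⟨hclU hw.1, hw.2⟩)).continuousWithinAt)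
    (fun w hw => subharmonicAt_of_harmonicAt (hharm w ⟨hw.1.1, hw.2⟩)) (fun w hw => ?_)
    (fun w hw => ?_) hz
  · exact sub_le_self 1 (mul_nonneg hθ0
      (sub_nonneg.2 (harmonicMeasure_le_one (H.map_mem_diff ⟨hw.1.1, hw.2⟩))))
  · rw [(H.mem_frontier_inter_preimage_superlevel hs hV hw.1).2, hθ, div_mul_cancel₀ _ h1s.ne',
      sub_sub_cancel]
    exact hm w hw.1

theorem mem_of_forall_iterate_mem (hs : 0 < s) (hs1 : s < 1) (hV : IsOpen (superlevel K s))
    (hz : ∀ n, g^[n] z ∈ U' ∩ g ⁻¹' superlevel K s) : z ∈ K := by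
  by_contra hzK
  obtain ⟨θ, ⟨hθ0, hθ1⟩, hθ⟩ := H.exists_one_sub_harmonicMeasure_le hs hs1 hV
  have hnot : ∀ n, g^[n] z ∉ K := fun n => by
    induction n with
    | zero => exact hzK
    | succ n ih =>
      rw [iterate_succ_apply']
      exact (H.map_mem_diff ⟨(hz n).1, ih⟩).2
  have hiter : ∀ n, 1 - harmonicMeasure K z ≤ θ ^ n * (1 - harmonicMeasure K (g^[n] z)) := by
    intro n
    induction n with
    | zero => simp
    | succ n ih =>
      rw [pow_succ, mul_assoc, iterate_succ_apply']
      exact ih.trans (mul_le_mul_of_nonneg_left (hθ _ ⟨hz n, hnot n⟩) (pow_nonneg hθ0 n))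
  have hle : ∀ n, 1 - harmonicMeasure K z ≤ θ ^ n := fun n =>
    (hiter n).trans (mul_le_of_le_one_right (pow_nonneg hθ0 n)
      (sub_le_self 1 (harmonicMeasure_nonneg (H.diff_subset ⟨(hz n).1, hnot n⟩))))
  have hlt := harmonicMeasure_lt_one H.isCompact.isClosed H.subset_unitBall H.isPreconnected_diff
    (H.diff_subset ⟨(hz 0).1, hzK⟩)
  exact (sub_pos.2 hlt).not_ge
    (ge_of_tendsto' (tendsto_pow_atTop_nhds_zero_of_lt_one hθ0 hθ1) hle)

end DiskSystem

/-! ### The Riemann mapping theorem -/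

theorem eventually_exists_eq_zero_of_tendstoLocallyUniformlyOn {ι : Type*} {l : Filter ι}
    {O : Set ℂ} (hO : IsOpen O) {F : ι → ℂ → ℂ} {G : ℂ → ℂ}
    (hF : ∀ i, DifferentiableOn ℂ (F i) O) (hG : DifferentiableOn ℂ G O)
    (hFG : TendstoLocallyUniformlyOn F G l O) {c : ℂ} (hc : c ∈ O) (hGc : G c = 0)
    (hne : ¬ ∀ᶠ z in 𝓝 c, G z = 0) : ∀ᶠ i in l, ∃ z ∈ O, F i z = 0 := by
  have hGa := hG.analyticAt (hO.mem_nhds hc)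
  have hiso := hGa.eventually_eq_zero_or_eventually_ne_zero.resolve_left hne
  obtain ⟨r, hr, hball⟩ := nhds_basis_closedBall.eventually_iff.1
    ((eventually_nhdsWithin_iff.1 hiso).and (hO.mem_nhds hc))
  have hsub : closedBall c r ⊆ O := fun z hz => (hball hz).2
  obtain ⟨x, hx, hmin⟩ := (isCompact_sphere c r).exists_isMinOn
    (NormedSpace.sphere_nonempty.2 hr.le)
    (hG.continuousOn.mono (sphere_subset_closedBall.trans hsub)).norm
  have hm : 0 < ‖G x‖ :=
    norm_pos_iff.2 ((hball (sphere_subset_closedBall hx)).1 (ne_of_mem_sphere hx hr.ne'))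
  have hunif := (tendstoLocallyUniformlyOn_iff_forall_isCompact hO).1 hFG (closedBall c r) hsub
    (isCompact_closedBall c r)
  filter_upwards [Metric.tendstoUniformlyOn_iff.1 hunif (‖G x‖ / 2) (half_pos hm)] with i hi
  by_contra! hcon
  have hd : DiffContOnCl ℂ (fun z => (F i z)⁻¹) (ball c r) := by
    apply DifferentiableOn.diffContOnCl
    rw [closure_ball c hr.ne']
    exact ((hF i).mono hsub).inv fun z hz => hcon z (hsub hz)
  have hsphere : ∀ z ∈ frontier (ball c r), ‖(F i z)⁻¹‖ ≤ (‖G x‖ / 2)⁻¹ := by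
    intro z hz
    have hzs := frontier_ball_subset_sphere hz
    have hdist := hi z (sphere_subset_closedBall hzs)
    rw [dist_eq_norm] at hdist
    rw [norm_inv]
    apply inv_anti₀ (half_pos hm)
    linarith [norm_sub_norm_le (G z) (F i z), show ‖G x‖ ≤ ‖G z‖ from hmin hzs]
  have hcenter := Complex.norm_le_of_forall_mem_frontier_norm_le isBounded_ball hd hsphere
    (subset_closure (mem_ball_self hr))
  rw [norm_inv, inv_le_inv₀ (norm_pos_iff.2 (hcon c hc)) (half_pos hm)] at hcenter
  have hdist := hi c (mem_closedBall_self hr.le)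
  rw [hGc, dist_zero_left] at hdist
  linarith

/-- The automorphism of the unit disk sending `w` to `0`. -/
def diskAut (w z : ℂ) : ℂ := (z - w) / (1 - (starRingEnd ℂ) w * z)

section DiskAut

variable {w z : ℂ}

theorem diskAut_self (w : ℂ) : diskAut w w = 0 := by simp [diskAut]

theorem diskAut_ne_zero (hw : ‖w‖ < 1) (hz : ‖z‖ < 1) (hne : z ≠ w) : diskAut w z ≠ 0 :=
  div_ne_zero (sub_ne_zero.2 hne) (one_sub_conj_mul_ne_zero hz hw)

theorem one_sub_norm_diskAut_sq (hw : ‖w‖ < 1) (hz : ‖z‖ < 1) :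
    1 - ‖diskAut w z‖ ^ 2 =
      (1 - ‖w‖ ^ 2) * (1 - ‖z‖ ^ 2) / ‖1 - (starRingEnd ℂ) w * z‖ ^ 2 := by
  have hden := norm_ne_zero_iff.2 (one_sub_conj_mul_ne_zero hz hw)
  rw [diskAut, norm_div, div_pow, one_sub_div (pow_ne_zero 2 hden), sq_norm_one_sub_conj_mul]
  ring

theorem norm_diskAut_lt_one (hw : ‖w‖ < 1) (hz : ‖z‖ < 1) : ‖diskAut w z‖ < 1 := by
  have hpos : 0 < 1 - ‖diskAut w z‖ ^ 2 := by
    rw [one_sub_norm_diskAut_sq hw hz]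
    exact div_pos (mul_pos (one_sub_sq_norm_pos hw) (one_sub_sq_norm_pos hz))
      (pow_pos (norm_pos_iff.2 (one_sub_conj_mul_ne_zero hz hw)) 2)
  nlinarith [norm_nonneg (diskAut w z)]

theorem hasDerivAt_diskAut (hw : ‖w‖ < 1) (hz : ‖z‖ < 1) :
    HasDerivAt (diskAut w) ((1 - (‖w‖ : ℂ) ^ 2) / (1 - (starRingEnd ℂ) w * z) ^ 2) z := by
  have hnum : HasDerivAt (fun z => z - w) 1 z := (hasDerivAt_id z).sub_const w
  have hden : HasDerivAt (fun z => 1 - (starRingEnd ℂ) w * z) (-((starRingEnd ℂ) w)) z := by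
    simpa using ((hasDerivAt_id z).const_mul ((starRingEnd ℂ) w)).const_sub 1
  refine (hnum.div hden (one_sub_conj_mul_ne_zero hz hw)).congr_deriv ?_
  rw [← Complex.conj_mul']
  congr 1
  ring

theorem norm_deriv_diskAut (hw : ‖w‖ < 1) (hz : ‖z‖ < 1) :
    ‖deriv (diskAut w) z‖ = (1 - ‖w‖ ^ 2) / ‖1 - (starRingEnd ℂ) w * z‖ ^ 2 := by
  have hcast : (1 - (‖w‖ : ℂ) ^ 2) = ((1 - ‖w‖ ^ 2 : ℝ) : ℂ) := by push_cast; rfl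
  rw [(hasDerivAt_diskAut hw hz).deriv, norm_div, norm_pow, hcast,
    Complex.norm_of_nonneg (one_sub_sq_norm_pos hw).le]

theorem diskAut_neg_diskAut (hw : ‖w‖ < 1) (hz : ‖z‖ < 1) : diskAut (-w) (diskAut w z) = z := by
  have hz0 := one_sub_conj_mul_ne_zero hz hw
  have hw0 := one_sub_conj_mul_ne_zero hw hw
  simp only [diskAut, map_neg]
  generalize (starRingEnd ℂ) w = v at *
  have hnum : (z - w) / (1 - v * z) - -w = z * ((1 - v * w) / (1 - v * z)) := by
    rw [← mul_div_assoc, eq_div_iff hz0, sub_mul, div_mul_cancel₀ _ hz0]; ring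
  have hden : 1 - -v * ((z - w) / (1 - v * z)) = (1 - v * w) / (1 - v * z) := by
    rw [eq_div_iff hz0, sub_mul, mul_assoc, div_mul_cancel₀ _ hz0]; ring
  rw [hnum, hden]
  exact mul_div_cancel_right₀ _ (div_ne_zero hw0 hz0)

end DiskAut

theorem hasDerivAt_of_sq_eq {s h : ℂ → ℂ} {x h' : ℂ} (hs : ContinuousAt s x)
    (hsq : ∀ y, s y ^ 2 = h y) (hh : HasDerivAt h h' x) (h0 : s x ≠ 0) :
    HasDerivAt s (h' / (2 * s x)) x := by
  rw [two_mul]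
  rw [hasDerivAt_iff_tendsto_slope] at hh ⊢
  have h2 : s x + s x ≠ 0 := by
    rw [← two_mul]; exact mul_ne_zero two_ne_zero h0
  have hsum : Tendsto (fun y => s y + s x) (𝓝[≠] x) (𝓝 (s x + s x)) :=
    (hs.tendsto.mono_left nhdsWithin_le_nhds).add_const _
  refine (hh.div hsum h2).congr' ?_
  filter_upwards [hsum.eventually_ne h2] with y hy
  change slope h x y / (s y + s x) = slope s x y
  simp only [slope, vsub_eq_sub, smul_eq_mul, ← hsq]
  rw [div_eq_iff hy]; ring

theorem exists_sqrt_injOn {U : Set ℂ} (hUo : IsOpen U) (hUc : IsSimplyConnected U) {h : ℂ → ℂ}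
    (hinj : InjOn h U) (hd : ∀ z ∈ U, deriv h z ≠ 0) (h0 : (0 : ℂ) ∉ h '' U) :
    ∃ s : ℂ → ℂ, (∀ z, s z ^ 2 = h z) ∧ InjOn s U ∧
      ∀ z ∈ U, s z ≠ 0 ∧ deriv s z = deriv h z / (2 * s z) := by
  have hh : ∀ z ∈ U, HasDerivAt h (deriv h z) z := fun z hz =>
    (differentiableAt_of_deriv_ne_zero (hd z hz)).hasDerivAt
  obtain ⟨s, hsc, hsq⟩ := Complex.exists_continuousOn_pow_eq hUc hUo
    (fun z hz => (hh z hz).continuousAt.continuousWithinAt) h0 two_ne_zero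
  have hs0 : ∀ z ∈ U, s z ≠ 0 := fun z hz hz0 => h0 ⟨z, hz, by rw [← hsq, hz0]; simp⟩
  refine ⟨s, hsq, fun z hz z' hz' heq => hinj hz hz' ?_, fun z hz => ⟨hs0 z hz, ?_⟩⟩
  · rw [← hsq, ← hsq, heq]
  · exact (hasDerivAt_of_sq_eq (hsc.continuousAt (hUo.mem_nhds hz)) hsq (hh z hz)
      (hs0 z hz)).deriv

/-- A conformal embedding of `U` into the unit disk. Since `deriv` vanishes at points of
non-differentiability, `deriv_ne_zero` also says that `f` is holomorphic on the open set `U`. -/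
structure IsDiskEmbedding (f : ℂ → ℂ) (U : Set ℂ) : Prop where
  mapsTo : MapsTo f U (ball 0 1)
  injOn : InjOn f U
  deriv_ne_zero : ∀ z ∈ U, deriv f z ≠ 0

/-- The derivative of `f` at `z` measured in the Euclidean metric at `z` and the hyperbolic metric
of the unit disk at `f z`. -/
def hyperbolicDeriv (f : ℂ → ℂ) (z : ℂ) : ℝ := ‖deriv f z‖ / (1 - ‖f z‖ ^ 2)

theorem hyperbolicDeriv_of_eq_zero {f : ℂ → ℂ} {z : ℂ} (h : f z = 0) :
    hyperbolicDeriv f z = ‖deriv f z‖ := by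
  simp [hyperbolicDeriv, h]

namespace IsDiskEmbedding

variable {f : ℂ → ℂ} {U : Set ℂ} {a : ℂ}

theorem norm_lt_one (hf : IsDiskEmbedding f U) {z : ℂ} (hz : z ∈ U) : ‖f z‖ < 1 :=
  mem_ball_zero_iff.1 (hf.mapsTo hz)

theorem hasDerivAt (hf : IsDiskEmbedding f U) {z : ℂ} (hz : z ∈ U) :
    HasDerivAt f (deriv f z) z :=
  (differentiableAt_of_deriv_ne_zero (hf.deriv_ne_zero z hz)).hasDerivAt

theorem differentiableOn (hf : IsDiskEmbedding f U) : DifferentiableOn ℂ f U :=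
  fun _ hz => (hf.hasDerivAt hz).differentiableAt.differentiableWithinAt

theorem deriv_diskAut_comp (hf : IsDiskEmbedding f U) {w : ℂ} (hw : ‖w‖ < 1) {z : ℂ}
    (hz : z ∈ U) : deriv (diskAut w ∘ f) z = deriv (diskAut w) (f z) * deriv f z :=
  deriv_comp z (hasDerivAt_diskAut hw (hf.norm_lt_one hz)).differentiableAt
    (hf.hasDerivAt hz).differentiableAt

theorem diskAut_comp (hf : IsDiskEmbedding f U) {w : ℂ} (hw : ‖w‖ < 1) :
    IsDiskEmbedding (diskAut w ∘ f) U where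
  mapsTo z hz := mem_ball_zero_iff.2 (norm_diskAut_lt_one hw (hf.norm_lt_one hz))
  injOn z hz z' hz' h := hf.injOn hz hz' (by
    rw [← diskAut_neg_diskAut hw (hf.norm_lt_one hz), ← comp_apply (f := diskAut w), h,
      comp_apply, diskAut_neg_diskAut hw (hf.norm_lt_one hz')])
  deriv_ne_zero z hz := by
    rw [hf.deriv_diskAut_comp hw hz]
    refine mul_ne_zero (norm_pos_iff.1 ?_) (hf.deriv_ne_zero z hz)
    rw [norm_deriv_diskAut hw (hf.norm_lt_one hz)]
    exact div_pos (one_sub_sq_norm_pos hw)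
      (pow_pos (norm_pos_iff.2 (one_sub_conj_mul_ne_zero (hf.norm_lt_one hz) hw)) 2)

theorem hyperbolicDeriv_diskAut_comp (hf : IsDiskEmbedding f U) {w : ℂ} (hw : ‖w‖ < 1) {z : ℂ}
    (hz : z ∈ U) : hyperbolicDeriv (diskAut w ∘ f) z = hyperbolicDeriv f z := by
  have hden := norm_ne_zero_iff.2 (one_sub_conj_mul_ne_zero (hf.norm_lt_one hz) hw)
  have hw0 := (one_sub_sq_norm_pos hw).ne'
  have hf0 := (one_sub_sq_norm_pos (hf.norm_lt_one hz)).ne'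
  rw [hyperbolicDeriv, hyperbolicDeriv, hf.deriv_diskAut_comp hw hz, norm_mul,
    norm_deriv_diskAut hw (hf.norm_lt_one hz), comp_apply,
    one_sub_norm_diskAut_sq hw (hf.norm_lt_one hz)]
  field_simp

theorem exists_hyperbolicDeriv_lt_of_zero_notMem (hf : IsDiskEmbedding f U) (hUo : IsOpen U)
    (hUc : IsSimplyConnected U) (ha : a ∈ U) (h0 : (0 : ℂ) ∉ f '' U) :
    ∃ s, IsDiskEmbedding s U ∧ hyperbolicDeriv f a < hyperbolicDeriv s a := by
  obtain ⟨s, hsq, hsinj, hs⟩ := exists_sqrt_injOn hUo hUc hf.injOn hf.deriv_ne_zero h0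
  have hs1 : ∀ z ∈ U, ‖s z‖ < 1 := fun z hz => by
    have := hf.norm_lt_one hz
    rw [← hsq, norm_pow] at this
    nlinarith [norm_nonneg (s z)]
  refine ⟨s, ⟨fun z hz => mem_ball_zero_iff.2 (hs1 z hz), hsinj, fun z hz => ?_⟩, ?_⟩
  · rw [(hs z hz).2]
    exact div_ne_zero (hf.deriv_ne_zero z hz) (mul_ne_zero two_ne_zero (hs z hz).1)
  have hf' : 0 < ‖deriv f a‖ := norm_pos_iff.2 (hf.deriv_ne_zero a ha)
  have hb0 : 0 < ‖s a‖ := norm_pos_iff.2 (hs a ha).1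
  have hb1 := hs1 a ha
  rw [hyperbolicDeriv, hyperbolicDeriv, (hs a ha).2, ← hsq a, norm_div, norm_mul, norm_pow,
    Complex.norm_two, div_div]
  have hb2 := one_sub_sq_norm_pos hb1
  refine div_lt_div_of_pos_left hf' (by positivity) ?_
  -- `2 b < 1 + b ^ 2` with `b = ‖s a‖`
  nlinarith [mul_pos hb2 (mul_pos (sub_pos.2 hb1) (sub_pos.2 hb1))]

/-- Koebe's square root trick. -/
theorem exists_norm_deriv_lt_of_notMem (hf : IsDiskEmbedding f U) (hUo : IsOpen U)
    (hUc : IsSimplyConnected U) (ha : a ∈ U) (hfa : f a = 0) {w : ℂ} (hw : ‖w‖ < 1)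
    (hwf : w ∉ f '' U) :
    ∃ F, IsDiskEmbedding F U ∧ F a = 0 ∧ ‖deriv f a‖ < ‖deriv F a‖ := by
  have h0 : (0 : ℂ) ∉ (diskAut w ∘ f) '' U := by
    rintro ⟨z, hz, hz0⟩
    exact diskAut_ne_zero hw (hf.norm_lt_one hz) (fun h => hwf ⟨z, hz, h⟩) hz0
  obtain ⟨s, hs, hlt⟩ := (hf.diskAut_comp hw).exists_hyperbolicDeriv_lt_of_zero_notMem hUo hUc ha h0
  have hFa : (diskAut (s a) ∘ s) a = 0 := diskAut_self _
  refine ⟨diskAut (s a) ∘ s, hs.diskAut_comp (hs.norm_lt_one ha), hFa, ?_⟩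
  rwa [← hyperbolicDeriv_of_eq_zero hfa, ← hyperbolicDeriv_of_eq_zero hFa,
    hs.hyperbolicDeriv_diskAut_comp (hs.norm_lt_one ha) ha,
    ← hf.hyperbolicDeriv_diskAut_comp hw ha]

theorem exists_of_le_dist {s : ℂ → ℂ} {p : ℂ} {ε : ℝ} (hinj : InjOn s U)
    (hd : ∀ z ∈ U, deriv s z ≠ 0) (hε : 0 < ε) (hfar : ∀ z ∈ U, ε ≤ ‖s z - p‖) :
    ∃ f, IsDiskEmbedding f U := by
  have hne : ∀ z ∈ U, s z - p ≠ 0 := fun z hz => norm_pos_iff.1 (hε.trans_le (hfar z hz))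
  have hε0 : ((ε / 2 : ℝ) : ℂ) ≠ 0 := Complex.ofReal_ne_zero.2 (half_pos hε).ne'
  refine ⟨fun z => (ε / 2 : ℝ) * (s z - p)⁻¹, fun z hz => mem_ball_zero_iff.2 ?_,
    fun z hz z' hz' heq => ?_, fun z hz => ?_⟩
  · rw [norm_mul, norm_inv, Complex.norm_of_nonneg (half_pos hε).le,
      mul_inv_lt_iff₀ (norm_pos_iff.2 (hne z hz)), one_mul]
    linarith [hfar z hz]
  · exact hinj hz hz' (sub_left_injective (inv_injective (mul_left_cancel₀ hε0 heq)))
  · have hs := (differentiableAt_of_deriv_ne_zero (hd z hz)).hasDerivAt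
    have hf : HasDerivAt (fun z => ((ε / 2 : ℝ) : ℂ) * (s z - p)⁻¹) _ z :=
      ((hs.sub_const p).fun_inv (hne z hz)).const_mul _
    rw [hf.deriv]
    exact mul_ne_zero hε0 (div_ne_zero (neg_ne_zero.2 (hd z hz)) (pow_ne_zero 2 (hne z hz)))

/-- A branch `s` of `√(z - b)`, with `b ∉ U`, takes no two opposite values on `U`, so it omits a
neighbourhood of `-s a`. -/
theorem exists_of_ne_univ (hUo : IsOpen U) (hUc : IsSimplyConnected U) (hU : U ≠ univ)
    (ha : a ∈ U) : ∃ f, IsDiskEmbedding f U := by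
  obtain ⟨b, hb⟩ := (ne_univ_iff_exists_notMem U).1 hU
  have hderiv : ∀ z, deriv (fun z => z - b) z = 1 := fun z => by simp
  obtain ⟨s, hsq, hsinj, hs⟩ := exists_sqrt_injOn hUo hUc (sub_left_injective (b := b)).injOn
    (fun z _ => (hderiv z).trans_ne one_ne_zero)
    (by rintro ⟨z, hz, hz0⟩; exact hb (sub_eq_zero.1 hz0 ▸ hz))
  have hs' : ∀ z ∈ U, deriv s z ≠ 0 := fun z hz => by
    rw [(hs z hz).2, hderiv]
    exact div_ne_zero one_ne_zero (mul_ne_zero two_ne_zero (hs z hz).1)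
  have hsd : DifferentiableOn ℂ s U := fun z hz =>
    (differentiableAt_of_deriv_ne_zero (hs' z hz)).differentiableWithinAt
  have himage : s '' U ∈ 𝓝 (s a) := by
    rw [← (hsd.analyticAt (hUo.mem_nhds ha)).hasStrictDerivAt.map_nhds_eq (hs' a ha)]
    exact image_mem_map (hUo.mem_nhds ha)
  obtain ⟨ε, hε, hball⟩ := Metric.mem_nhds_iff.1 himage
  refine exists_of_le_dist hsinj hs' hε (p := -s a) fun z hz => ?_
  by_contra! hlt
  obtain ⟨z', -, hopp⟩ : -s z ∈ s '' U := hball (by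
    rwa [mem_ball, dist_eq_norm, ← norm_neg, neg_sub', neg_neg])
  have hz'z : z' = z := sub_left_injective (b := b) (by simp only [← hsq, hopp, neg_sq])
  exact (hs z hz).1 (self_eq_neg.1 (hz'z ▸ hopp))

theorem exists_eq_zero (hUo : IsOpen U) (hUc : IsSimplyConnected U) (hU : U ≠ univ)
    (ha : a ∈ U) : ∃ f, IsDiskEmbedding f U ∧ f a = 0 := by
  obtain ⟨f, hf⟩ := exists_of_ne_univ hUo hUc hU ha
  exact ⟨_, hf.diskAut_comp (hf.norm_lt_one ha), diskAut_self _⟩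

theorem bddAbove_norm_deriv (hUo : IsOpen U) (ha : a ∈ U) :
    BddAbove {t | ∃ f, IsDiskEmbedding f U ∧ f a = 0 ∧ ‖deriv f a‖ = t} := by
  obtain ⟨r, hr, hball⟩ := nhds_basis_closedBall.mem_iff.1 (hUo.mem_nhds ha)
  refine ⟨1 / r, ?_⟩
  rintro t ⟨f, hf, -, rfl⟩
  refine Complex.norm_deriv_le_of_forall_mem_sphere_norm_le hr
    (hf.differentiableOn.mono (closure_ball_subset_closedBall.trans hball)).diffContOnCl
    fun z hz => ?_
  exact (hf.norm_lt_one (hball (sphere_subset_closedBall hz))).le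

theorem injOn_of_tendstoLocallyUniformlyOn {ι : Type*} {l : Filter ι} [l.NeBot] (hUo : IsOpen U)
    {F : ι → ℂ → ℂ} {G : ℂ → ℂ} (hF : ∀ i, IsDiskEmbedding (F i) U)
    (hFG : TendstoLocallyUniformlyOn F G l U) (hG : DifferentiableOn ℂ G U)
    (hnc : ∀ c ∈ U, ∀ w, ¬ ∀ᶠ z in 𝓝 c, G z = w) : InjOn G U := by
  intro z hz z' hz' heq
  by_contra hne
  have hO : IsOpen (U \ {z}) := hUo.sdiff isClosed_singleton
  have hconst : TendstoLocallyUniformlyOn (fun i (_ : ℂ) => F i z) (fun _ => G z) l (U \ {z}) := by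
    refine TendstoUniformlyOn.tendstoLocallyUniformlyOn (Metric.tendstoUniformlyOn_iff.2 ?_)
    intro ε hε
    filter_upwards [Metric.tendsto_nhds.1 (hFG.tendsto_at hz) ε hε] with i hi x _
    rwa [dist_comm]
  have hzero := eventually_exists_eq_zero_of_tendstoLocallyUniformlyOn hO
    (fun i => ((hF i).differentiableOn.mono sdiff_subset).sub_const (F i z))
    ((hG.mono sdiff_subset).sub_const (G z)) ((hFG.mono sdiff_subset).sub hconst)
    ⟨hz', fun h => hne h.symm⟩ (sub_eq_zero.2 heq.symm)
    (fun h => hnc z' hz' (G z) (h.mono fun _ => sub_eq_zero.1))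
  obtain ⟨i, x, hx, hx0⟩ := hzero.exists
  exact hx.2 ((hF i).injOn hx.1 hz (sub_eq_zero.1 hx0))

theorem of_tendstoLocallyUniformlyOn {ι : Type*} {l : Filter ι} [l.NeBot] (hUo : IsOpen U)
    (hUp : IsPreconnected U) {F : ι → ℂ → ℂ} {G : ℂ → ℂ} (hF : ∀ i, IsDiskEmbedding (F i) U)
    (hG : DifferentiableOn ℂ G U) (hFG : TendstoLocallyUniformlyOn F G l U)
    (ha : a ∈ U) (hGa : deriv G a ≠ 0) : IsDiskEmbedding G U := by
  have hGan := hG.analyticOnNhd hUo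
  have hG'an := (hG.deriv hUo).analyticOnNhd hUo
  have hderiv_nc : ∀ c ∈ U, ¬ ∀ᶠ z in 𝓝 c, deriv G z = 0 := fun c hc h =>
    hGa (hG'an.eqOn_zero_of_preconnected_of_eventuallyEq_zero hUp hc h ha)
  have hnc : ∀ c ∈ U, ∀ w, ¬ ∀ᶠ z in 𝓝 c, G z = w := by
    intro c hc w h
    refine hderiv_nc c hc (h.eventually_nhds.mono fun z hz => ?_)
    rw [EventuallyEq.deriv_eq hz, deriv_const]
  refine ⟨?_, injOn_of_tendstoLocallyUniformlyOn hUo hF hFG hG hnc, fun c hc h0 => ?_⟩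
  · have hopen : IsOpen (G '' U) := by
      refine (hGan.is_constant_or_isOpen hUp).elim ?_ fun h => h U Subset.rfl hUo
      rintro ⟨w, hw⟩
      exact absurd (eventually_of_mem (hUo.mem_nhds ha) hw) (hnc a ha w)
    rw [mapsTo_iff_image_subset, ← interior_closedBall (0 : ℂ) one_ne_zero]
    refine interior_maximal ?_ hopen
    rintro _ ⟨z, hz, rfl⟩
    exact mem_closedBall_zero_iff.2 (le_of_tendsto (hFG.tendsto_at hz).norm
      (Eventually.of_forall fun i => ((hF i).norm_lt_one hz).le))
  · obtain ⟨i, z, hz, hz0⟩ := (eventually_exists_eq_zero_of_tendstoLocallyUniformlyOn hUo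
      (fun i => (hF i).differentiableOn.deriv hUo) (hG.deriv hUo)
      (hFG.deriv (Eventually.of_forall fun i => (hF i).differentiableOn) hUo) hc h0
      (hderiv_nc c hc)).exists
    exact (hF i).deriv_ne_zero z hz hz0

theorem exists_isMax_norm_deriv (hUo : IsOpen U) (hUc : IsSimplyConnected U)
    (hUp : IsPreconnected U) (hU : U ≠ univ) (ha : a ∈ U) :
    ∃ G, IsDiskEmbedding G U ∧ G a = 0 ∧
      ∀ f, IsDiskEmbedding f U → f a = 0 → ‖deriv f a‖ ≤ ‖deriv G a‖ := by
  obtain ⟨f₀, hf₀, hf₀a⟩ := exists_eq_zero hUo hUc hU ha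
  let S : Set ℝ := {t | ∃ f, IsDiskEmbedding f U ∧ f a = 0 ∧ ‖deriv f a‖ = t}
  have hS : S.Nonempty := ⟨_, f₀, hf₀, hf₀a, rfl⟩
  have hbdd : BddAbove S := bddAbove_norm_deriv hUo ha
  obtain ⟨u, -, hu, huF⟩ := exists_seq_tendsto_sSup hS hbdd
  choose F hF hFa hFu using huF
  obtain ⟨G, hG, hFG⟩ := exists_tendstoLocallyUniformlyOn (hyperfilter ℕ) hUo
    (fun i => (hF i).differentiableOn) fun z hz =>
      ⟨1, eventually_of_mem (hUo.mem_nhds hz) fun w hw i => ((hF i).norm_lt_one hw).le⟩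
  have hderiv : TendstoLocallyUniformlyOn (deriv ∘ F) (deriv G) (hyperfilter ℕ) U :=
    hFG.deriv (Eventually.of_forall fun i => (hF i).differentiableOn) hUo
  have hGsup : ‖deriv G a‖ = sSup S := by
    refine tendsto_nhds_unique (hderiv.tendsto_at ha).norm ?_
    simp only [comp_apply, hFu]
    exact hu.mono_left (Nat.cofinite_eq_atTop ▸ hyperfilter_le_cofinite)
  have hmax : ∀ f, IsDiskEmbedding f U → f a = 0 → ‖deriv f a‖ ≤ ‖deriv G a‖ := fun f hf hfa =>
    hGsup ▸ le_csSup hbdd ⟨f, hf, hfa, rfl⟩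
  have hGa : deriv G a ≠ 0 := norm_pos_iff.1
    ((norm_pos_iff.2 (hf₀.deriv_ne_zero a ha)).trans_le (hmax f₀ hf₀ hf₀a))
  refine ⟨G, of_tendstoLocallyUniformlyOn hUo hUp hF hG hFG ha hGa, ?_, hmax⟩
  refine tendsto_nhds_unique (hFG.tendsto_at ha) ?_
  simp only [hFa, tendsto_const_nhds]

theorem isOpenMap_restrict (hf : IsDiskEmbedding f U) (hUo : IsOpen U) :
    IsOpenMap (U.domRestrict f) := by
  refine isOpenMap_iff_nhds_le.2 fun z => ?_
  have hstrict := (hf.differentiableOn.analyticAt (hUo.mem_nhds z.2)).hasStrictDerivAt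
  rw [Set.domRestrict_eq, ← Filter.map_map, map_nhds_subtype_coe_eq_nhds z.2 (hUo.mem_nhds z.2),
    hstrict.map_nhds_eq (hf.deriv_ne_zero z z.2)]
  rfl

end IsDiskEmbedding

/-- `e` is a Riemann map of `U`: a biholomorphic map of `U` onto the unit disk. -/
structure IsRiemannMap (e : OpenPartialHomeomorph ℂ ℂ) (U : Set ℂ) : Prop where
  source_eq : e.source = U
  target_eq : e.target = ball 0 1
  differentiableOn : DifferentiableOn ℂ e U
  differentiableOn_symm : DifferentiableOn ℂ e.symm (ball 0 1)

theorem IsDiskEmbedding.exists_isRiemannMap {f : ℂ → ℂ} {U : Set ℂ} (hf : IsDiskEmbedding f U)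
    (hUo : IsOpen U) (himage : f '' U = ball 0 1) : ∃ e, IsRiemannMap e U ∧ ⇑e = f := by
  let e := OpenPartialHomeomorph.ofContinuousOpenRestrict hf.injOn.toPartialEquiv
    hf.differentiableOn.continuousOn (hf.isOpenMap_restrict hUo) hUo
  refine ⟨e, ⟨rfl, himage, hf.differentiableOn, fun w hw => ?_⟩, rfl⟩
  have hw' : w ∈ f '' U := himage.symm ▸ hw
  have hmem : e.symm w ∈ U := e.map_target hw'
  exact (e.hasDerivAt_symm hw' (hf.deriv_ne_zero _ hmem)
    (hf.hasDerivAt hmem)).differentiableAt.differentiableWithinAt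

theorem exists_isRiemannMap {U : Set ℂ} {a : ℂ} (hU : IsTopDisk U) (hne : U ≠ univ)
    (ha : a ∈ U) : ∃ e, IsRiemannMap e U ∧ e a = 0 := by
  obtain ⟨hUo, ⟨-, hUp⟩, hUc⟩ := hU
  obtain ⟨φ, hφ, hφa, hmax⟩ := IsDiskEmbedding.exists_isMax_norm_deriv hUo hUc hUp hne ha
  have himage : φ '' U = ball 0 1 := hφ.mapsTo.image_subset.antisymm fun w hw => by
    by_contra hwφ
    obtain ⟨F, hF, hFa, hlt⟩ :=
      hφ.exists_norm_deriv_lt_of_notMem hUo hUc ha hφa (mem_ball_zero_iff.1 hw) hwφ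
    exact hlt.not_ge (hmax F hF hFa)
  obtain ⟨e, he, rfl⟩ := hφ.exists_isRiemannMap hUo himage
  exact ⟨e, he, hφa⟩

theorem ProperOn.comp {f g : ℂ → ℂ} {U V W : Set ℂ} (hg : ProperOn g V W) (hf : ProperOn f U V)
    (hfm : MapsTo f U V) : ProperOn (g ∘ f) U W := fun Q hQW hQ => by
  have hcompact := hf _ inter_subset_left (hg Q hQW hQ)
  rwa [show U ∩ g ∘ f ⁻¹' Q = U ∩ f ⁻¹' (V ∩ g ⁻¹' Q) from
    Set.ext fun z => and_congr_right fun hz => ⟨fun h => ⟨hfm hz, h⟩, fun h => h.2⟩]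

theorem ProperOn.restrictPreimage {f : ℂ → ℂ} {U V S : Set ℂ} (hf : ProperOn f U V) (hSV : S ⊆ V) :
    ProperOn f (U ∩ f ⁻¹' S) S := fun Q hQS hQ => by
  rw [inter_assoc, ← preimage_inter, inter_eq_right.2 hQS]
  exact hf Q (hQS.trans hSV) hQ

namespace IsRiemannMap

variable {e : OpenPartialHomeomorph ℂ ℂ} {U S : Set ℂ} (he : IsRiemannMap e U)

include he

theorem mapsTo : MapsTo e U (ball 0 1) := fun _ hz =>
  he.target_eq ▸ e.map_source (he.source_eq.symm ▸ hz)

theorem mapsTo_symm : MapsTo e.symm (ball 0 1) U := fun _ hw =>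
  he.source_eq ▸ e.map_target (he.target_eq.symm ▸ hw)

theorem leftInvOn : LeftInvOn e.symm e U := fun _ hz => e.left_inv (he.source_eq.symm ▸ hz)

theorem rightInvOn : RightInvOn e.symm e (ball 0 1) := fun _ hw =>
  e.right_inv (he.target_eq.symm ▸ hw)

theorem symm_image_eq (hS : S ⊆ ball 0 1) : e.symm '' S = U ∩ e ⁻¹' S :=
  he.source_eq ▸ e.symm_image_eq_source_inter_preimage (he.target_eq.symm ▸ hS)

theorem image_eq (hS : S ⊆ U) : e '' S = ball 0 1 ∩ e.symm ⁻¹' S :=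
  he.target_eq ▸ e.image_eq_target_inter_inv_preimage (he.source_eq.symm ▸ hS)

theorem map_nhds_eq {z : ℂ} (hz : z ∈ U) : map e (𝓝 z) = 𝓝 (e z) :=
  e.map_nhds_eq (he.source_eq.symm ▸ hz)

theorem map_nhds_symm_eq {w : ℂ} (hw : w ∈ ball (0 : ℂ) 1) : map e.symm (𝓝 w) = 𝓝 (e.symm w) :=
  e.symm.map_nhds_eq (he.target_eq.symm ▸ hw : w ∈ e.target)

theorem isOpen_symm_image (hSball : S ⊆ ball 0 1) (hS : IsOpen S) : IsOpen (e.symm '' S) :=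
  e.symm.isOpen_image_of_subset_source hS (he.target_eq.symm ▸ hSball : S ⊆ e.target)

theorem isCompact_image (hSU : S ⊆ U) (hS : IsCompact S) : IsCompact (e '' S) :=
  hS.image_of_continuousOn (he.differentiableOn.continuousOn.mono hSU)

theorem isCompact_symm_image (hSball : S ⊆ ball 0 1) (hS : IsCompact S) :
    IsCompact (e.symm '' S) :=
  hS.image_of_continuousOn (he.differentiableOn_symm.continuousOn.mono hSball)

theorem properOn : ProperOn e U (ball 0 1) := fun _ hQ hQc =>
  he.symm_image_eq hQ ▸ he.isCompact_symm_image hQ hQc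

theorem properOn_symm : ProperOn e.symm (ball 0 1) U := fun _ hQ hQc =>
  he.image_eq hQ ▸ he.isCompact_image hQ hQc

theorem isTopDisk_symm_image (hSball : S ⊆ ball 0 1) (hSo : IsOpen S) (hstar : StarConvex ℝ 0 S)
    (hne : S.Nonempty) : IsTopDisk (e.symm '' S) := by
  have hsub : S ⊆ e.symm.source := (he.target_eq.symm ▸ hSball : S ⊆ e.target)
  have : ContractibleSpace S := hstar.contractibleSpace hne
  refine ⟨he.isOpen_symm_image hSball hSo, ⟨hne.image _, ?_⟩, ?_⟩
  · exact (isPreconnected_iff_preconnectedSpace.2 inferInstance).image _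
      (e.symm.continuousOn.mono hsub)
  · exact (e.symm.homeomorphOfImageSubsetSource hsub rfl).toHomotopyEquiv
      |>.simplyConnectedSpace_iff.1 inferInstance

end IsRiemannMap

/- Two-constants estimate: on the circle of radius `ρ` the left-hand side vanishes, near the unit
circle `M < log ‖h z‖`. -/
theorem mul_one_sub_log_div_log_le_log_norm {h : ℂ → ℂ} {ρ M : ℝ} (hρ : ρ ∈ Ioo (0 : ℝ) 1)
    (hd : DifferentiableOn ℂ h (ball 0 1)) (hh : ∀ z ∈ annulus ρ, 1 < ‖h z‖)
    (hp : IsCompact (ball 0 1 ∩ h ⁻¹' closedBall 0 (Real.exp M))) {z : ℂ} (hz : z ∈ annulus ρ) :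
    M * (1 - Real.log ‖z‖ / Real.log ρ) ≤ Real.log ‖h z‖ := by
  have hlog : Real.log ρ < 0 := Real.log_neg hρ.1 hρ.2
  have hz0 : ∀ z ∈ annulus ρ, z ≠ 0 := fun z hz => norm_pos_iff.1 (hρ.1.trans hz.1)
  have hball : ∀ z ∈ annulus ρ, z ∈ ball (0 : ℂ) 1 := fun z hz => mem_ball_zero_iff.2 hz.2
  set f : ℂ → ℝ := fun z => M / Real.log ρ * -Real.log ‖z‖ - Real.log ‖h z‖
  have hharm : ∀ z ∈ annulus ρ, HarmonicAt f z := fun z hz =>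
    (harmonicAt_mul_neg_log_norm _ (hz0 z hz)).sub <| harmonicAt_comp_analyticAt
      (harmonicAt_log_norm (norm_pos_iff.1 (one_pos.trans (hh z hz))))
      (hd.analyticAt (isOpen_ball.mem_nhds (hball z hz)))
  have hbd : ∀ b ∈ frontier (annulus ρ), ∀ ε > 0, ∀ᶠ z in 𝓝[annulus ρ] b, f z ≤ -M + ε := by
    intro b hb ε hε
    have hb' := norm_eq_or_of_mem_frontier_annulus hb
    have hb0 : b ≠ 0 := norm_pos_iff.1 (hb'.elim (· ▸ hρ.1) (· ▸ one_pos))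
    have hlim := (continuousAt_of_harmonicAt
      (harmonicAt_mul_neg_log_norm (M / Real.log ρ) hb0)).continuousWithinAt (s := annulus ρ)
      |>.eventually_lt_const (lt_add_of_pos_right _ hε)
    rcases hb' with hbρ | hb1
    · filter_upwards [hlim, self_mem_nhdsWithin] with z hlt hz
      have hρM : M / Real.log ρ * -Real.log ρ = -M := by rw [mul_neg, div_mul_cancel₀ _ hlog.ne]
      rw [hbρ, hρM] at hlt
      linarith [Real.log_nonneg (hh z hz).le]
    · have hb_notMem : b ∉ ball 0 1 ∩ h ⁻¹' closedBall 0 (Real.exp M) := fun hmem =>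
        (mem_ball_zero_iff.1 hmem.1).ne hb1
      filter_upwards [hlim, self_mem_nhdsWithin,
        mem_nhdsWithin_of_mem_nhds (hp.isClosed.isOpen_compl.mem_nhds hb_notMem)] with z hlt hz hzM
      have hexp : Real.exp M < ‖h z‖ := not_le.1 fun hle =>
        hzM ⟨hball z hz, mem_closedBall_zero_iff.2 hle⟩
      rw [hb1, Real.log_one, neg_zero, mul_zero, zero_add] at hlt
      linarith [(Real.lt_log_iff_exp_lt ((Real.exp_pos M).trans hexp)).2 hexp]
  have hle : f z ≤ -M := le_of_subharmonicAt_of_frontier (isOpen_annulus ρ) (isBounded_annulus ρ)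
    (fun z hz => (continuousAt_of_harmonicAt (hharm z hz)).continuousWithinAt)
    (fun z hz => subharmonicAt_of_harmonicAt (hharm z hz)) hbd z hz
  have hf : f z = -M * (Real.log ‖z‖ / Real.log ρ) - Real.log ‖h z‖ := by simp only [f]; ring
  linarith

theorem not_properOn_univ_of_differentiableOn_ball {h : ℂ → ℂ}
    (hd : DifferentiableOn ℂ h (ball 0 1)) : ¬ ProperOn h (ball 0 1) univ := by
  intro hp
  have hcompact (R : ℝ) : IsCompact (ball 0 1 ∩ h ⁻¹' closedBall 0 R) :=
    hp _ (subset_univ _) (isCompact_closedBall 0 R)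
  obtain ⟨ρ, hρ, hsub⟩ :=
    exists_pos_lt_subset_ball one_pos (hcompact 1).isClosed inter_subset_left
  have hh : ∀ z ∈ annulus ρ, 1 < ‖h z‖ := fun z hz => not_le.1 fun hle =>
    (mem_ball_zero_iff.1 (hsub ⟨mem_ball_zero_iff.2 hz.2, mem_closedBall_zero_iff.2 hle⟩)).not_gt
      hz.1
  obtain ⟨t, hρt, ht1⟩ := exists_between hρ.2
  have ht : ‖(t : ℂ)‖ = t := Complex.norm_of_nonneg (hρ.1.trans hρt).le
  have hmem : (t : ℂ) ∈ annulus ρ := by rw [annulus, mem_ofPred_eq, ht]; exact ⟨hρt, ht1⟩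
  have hq : 0 < 1 - Real.log t / Real.log ρ := sub_pos.2 <|
    (div_lt_one_of_neg (Real.log_neg hρ.1 hρ.2)).2 (Real.log_lt_log hρ.1 hρt)
  have hle := mul_one_sub_log_div_log_le_log_norm (M := (Real.log ‖h t‖ + 1) /
    (1 - Real.log t / Real.log ρ)) hρ hd hh (hcompact _) hmem
  rw [ht, div_mul_cancel₀ _ hq.ne'] at hle
  linarith

/-- A proper holomorphic map `g : U' → U` of degree `d ≥ 2` between simply connected domains
`U' ⊊ U`: the part of `PLSetting` which does not concern the critical orbits. -/
structure ProperDiskMap (g : ℂ → ℂ) (U' U : Set ℂ) (d : ℕ) : Prop where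
  disk' : IsTopDisk U'
  disk : IsTopDisk U
  subset : U' ⊆ U
  ne : U' ≠ U
  two_le_d : 2 ≤ d
  holo : DifferentiableOn ℂ g U'
  mapsTo : MapsTo g U' U
  proper : ProperOn g U' U
  deg : HasDeg g U' U d

namespace ProperDiskMap

variable {g : ℂ → ℂ} {U' U : Set ℂ} {d : ℕ} (H : ProperDiskMap g U' U d)

include H

theorem codomain_ne_univ : U ≠ univ := by
  rintro rfl
  obtain ⟨a, ha⟩ := H.disk'.2.1.nonempty
  obtain ⟨e, he, -⟩ := exists_isRiemannMap H.disk' H.ne ha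
  exact not_properOn_univ_of_differentiableOn_ball
    (H.holo.comp he.differentiableOn_symm he.mapsTo_symm)
    (H.proper.comp he.properOn_symm he.mapsTo_symm)

theorem domain_ne_univ : U' ≠ univ := fun h =>
  H.codomain_ne_univ (univ_subset_iff.1 (h ▸ H.subset))

end ProperDiskMap

/-! ### Coverings and proper maps of the disk -/

theorem injective_of_isCoveringMap {X Y : Type*} [TopologicalSpace X] [TopologicalSpace Y]
    [SimplyConnectedSpace X] [SimplyConnectedSpace Y] [LocallyPathConnectedSpace X]
    [LocallyPathConnectedSpace Y] {p : X → Y} (hp : IsCoveringMap p) : Injective p := by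
  obtain ⟨x⟩ : Nonempty X := inferInstance
  let P : C(X, Y) := ⟨p, hp.continuous⟩
  obtain ⟨σ, ⟨hσx, hσ⟩, -⟩ :=
    hp.existsUnique_continuousMap_lifts (ContinuousMap.id Y) (p x) x rfl
  have hlift : σ.comp P = ContinuousMap.id X :=
    (hp.existsUnique_continuousMap_lifts P x x rfl).unique
      ⟨hσx, funext fun z => congrFun hσ (p z)⟩ ⟨rfl, rfl⟩
  exact LeftInverse.injective (g := σ) fun z => DFunLike.congr_fun hlift z

theorem isLocalHomeomorphOn_of_deriv_ne_zero {g : ℂ → ℂ} {U : Set ℂ} (hU : IsOpen U)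
    (hg : DifferentiableOn ℂ g U) (hg' : ∀ z ∈ U, deriv g z ≠ 0) : IsLocalHomeomorphOn g U :=
  IsLocalHomeomorphOn.mk _ _ fun z hz => by
    have hstrict := (hg.analyticAt (hU.mem_nhds hz)).hasStrictDerivAt.hasStrictFDerivAt_equiv
      (hg' z hz)
    exact ⟨hstrict.toOpenPartialHomeomorph g, hstrict.mem_toOpenPartialHomeomorph_source,
      fun _ _ => rfl⟩

theorem ProperOn.isProperMap_restrict {g : ℂ → ℂ} {U' U : Set ℂ} (hp : ProperOn g U' U)
    (hU : IsOpen U) (hg : ContinuousOn g U') (hm : MapsTo g U' U) :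
    IsProperMap (hm.restrict g U' U) := by
  have : LocallyCompactSpace U := hU.locallyCompactSpace
  refine isProperMap_iff_isCompact_preimage.2 ⟨hg.mapsToRestrict hm, fun C hC => ?_⟩
  rw [Subtype.isCompact_iff] at hC ⊢
  have himage : (↑) '' (hm.restrict g U' U ⁻¹' C) = U' ∩ g ⁻¹' ((↑) '' C) := by
    ext z
    constructor
    · rintro ⟨w, hw, rfl⟩
      exact ⟨w.2, _, hw, rfl⟩
    · rintro ⟨hz, w, hw, hwz⟩
      obtain rfl : w = hm.restrict g U' U ⟨z, hz⟩ := Subtype.ext hwz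
      exact ⟨⟨z, hz⟩, hw, rfl⟩
  exact himage ▸ hp _ (Subtype.coe_image_subset U C) hC

theorem ProperOn.isCoveringMap_restrict {g : ℂ → ℂ} {U' U : Set ℂ} (hp : ProperOn g U' U)
    (hU' : IsOpen U') (hU : IsOpen U) (hg : DifferentiableOn ℂ g U')
    (hg' : ∀ z ∈ U', deriv g z ≠ 0) (hm : MapsTo g U' U)
    (hfin : ∀ w ∈ U, (U' ∩ g ⁻¹' {w}).Finite) : IsCoveringMap (hm.restrict g U' U) := by
  have hproper := hp.isProperMap_restrict hU hg.continuousOn hm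
  have hlocal : IsLocalHomeomorph (hm.restrict g U' U) := by
    refine IsLocalHomeomorph.of_comp (g := ((↑) : U → ℂ))
      ?_ hU.isOpenEmbedding_subtypeVal.isLocalHomeomorph hproper.continuous
    exact isLocalHomeomorph_iff_isLocalHomeomorphOn_univ.2 <|
      (isLocalHomeomorphOn_of_deriv_ne_zero hU' hg hg').comp
        hU'.isOpenEmbedding_subtypeVal.isLocalHomeomorph.isLocalHomeomorphOn fun z _ => z.2
  refine isCoveringMap_iff_isCoveringMapOn_univ.2 <|
    hproper.isClosedMap.isCoveringMapOn_of_isLocalHomeomorphOn (fun w _ => ?_)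
      hlocal.isLocalHomeomorphOn
  refine Finite.of_finite_image ((hfin w w.2).subset ?_) Subtype.val_injective.injOn
  rintro _ ⟨z, hz, rfl⟩
  exact ⟨z.2, congrArg Subtype.val hz⟩

theorem exists_eq_pow_mul_of_eq_zero_iff {B : ℂ → ℂ} {U : Set ℂ} (hU : IsOpen U)
    (h0 : (0 : ℂ) ∈ U) (hB : DifferentiableOn ℂ B U) (hzero : ∀ w ∈ U, B w = 0 ↔ w = 0) :
    ∃ n ≠ 0, ∃ k : ℂ → ℂ, AnalyticOnNhd ℂ k U ∧ (∀ w ∈ U, k w ≠ 0) ∧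
      ∀ w ∈ U, B w = w ^ n * k w := by
  have hne : ¬ ∀ᶠ z in 𝓝 (0 : ℂ), B z = 0 := fun h => by
    obtain ⟨z, ⟨hz, hzU⟩, hz0⟩ := (((h.and (hU.mem_nhds h0)).filter_mono
      nhdsWithin_le_nhds).and (self_mem_nhdsWithin (s := {0}ᶜ))).exists
    exact hz0 ((hzero z hzU).1 hz)
  obtain ⟨n, k₀, hk₀, hk₀0, hBk₀⟩ :=
    (hB.analyticAt (hU.mem_nhds h0)).exists_eventuallyEq_pow_smul_nonzero_iff.2 hne
  simp only [sub_zero, smul_eq_mul] at hBk₀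
  have hB0 : B 0 = 0 ^ n * k₀ 0 := hBk₀.self_of_nhds
  have hn : n ≠ 0 := by
    rintro rfl
    exact hk₀0 (by rw [← one_mul (k₀ 0), ← pow_zero (0 : ℂ), ← hB0, (hzero 0 h0).2 rfl])
  let k : ℂ → ℂ := update (fun w => B w / w ^ n) 0 (k₀ 0)
  have hk_of_ne {w : ℂ} (hw : w ≠ 0) : k w = B w / w ^ n := update_of_ne hw ..
  have hk0 : k 0 = k₀ 0 := update_self ..
  refine ⟨n, hn, k, fun w hw => ?_, fun w hw => ?_, fun w hw => ?_⟩ <;>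
    rcases eq_or_ne w 0 with rfl | hw0
  · refine hk₀.congr ?_
    filter_upwards [hBk₀] with z hz
    rcases eq_or_ne z 0 with rfl | hz0
    · exact hk0.symm
    · rw [hk_of_ne hz0, hz, mul_div_cancel_left₀ _ (pow_ne_zero n hz0)]
  · refine ((hB.analyticAt (hU.mem_nhds hw)).div (analyticAt_id.pow n)
      (pow_ne_zero n hw0)).congr ?_
    filter_upwards [isOpen_ne.mem_nhds hw0] with z hz using (hk_of_ne hz).symm
  · rwa [hk0]
  · rw [hk_of_ne hw0]
    exact div_ne_zero (mt (hzero w hw).1 hw0) (pow_ne_zero n hw0)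
  · rw [hk0, hB0]
  · rw [hk_of_ne hw0, mul_div_cancel₀ _ (pow_ne_zero n hw0)]

theorem ProperOn.tendsto_norm_nhdsWithin {f : ℂ → ℂ} {U : Set ℂ} {b : ℂ}
    (hp : ProperOn f U (ball 0 1)) (hm : MapsTo f U (ball 0 1)) (hb : b ∉ U) :
    Tendsto (fun w => ‖f w‖) (𝓝[U] b) (𝓝 1) := by
  refine tendsto_order.2 ⟨fun r hr => ?_, fun r hr => ?_⟩
  · have hcompact := hp _ (closedBall_subset_ball hr) (isCompact_closedBall 0 r)
    filter_upwards [self_mem_nhdsWithin, mem_nhdsWithin_of_mem_nhds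
      (hcompact.isClosed.isOpen_compl.mem_nhds fun h => hb h.1)] with w hw hwr
    exact not_le.1 fun hle => hwr ⟨hw, mem_closedBall_zero_iff.2 hle⟩
  · filter_upwards [self_mem_nhdsWithin] with w hw using (mem_ball_zero_iff.1 (hm hw)).trans hr

theorem norm_eq_one_of_tendsto_frontier {k : ℂ → ℂ} {U : Set ℂ} (hU : IsOpen U)
    (hb : Bornology.IsBounded U) (hk : AnalyticOnNhd ℂ k U) (hk0 : ∀ w ∈ U, k w ≠ 0)
    (hlim : ∀ b ∈ frontier U, Tendsto (fun w => ‖k w‖) (𝓝[U] b) (𝓝 1)) :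
    ∀ w ∈ U, ‖k w‖ = 1 := by
  have hharm : ∀ w ∈ U, HarmonicAt (fun w => Real.log ‖k w‖) w := fun w hw =>
    harmonicAt_comp_analyticAt (harmonicAt_log_norm (hk0 w hw)) (hk w hw)
  have hcont : ContinuousOn (fun w => Real.log ‖k w‖) U := fun w hw =>
    (continuousAt_of_harmonicAt (hharm w hw)).continuousWithinAt
  have hloglim : ∀ b ∈ frontier U, Tendsto (fun w => Real.log ‖k w‖) (𝓝[U] b) (𝓝 0) :=
    fun b hb => Real.log_one ▸ (hlim b hb).log one_ne_zero
  have hle : ∀ w ∈ U, Real.log ‖k w‖ ≤ 0 :=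
    le_of_subharmonicAt_of_frontier hU hb hcont
      (fun w hw => subharmonicAt_of_harmonicAt (hharm w hw)) fun b hb ε hε => by
        filter_upwards [(hloglim b hb).eventually_lt_const hε] with w hw
        rw [zero_add]
        exact hw.le
  have hge : ∀ w ∈ U, -Real.log ‖k w‖ ≤ 0 :=
    le_of_subharmonicAt_of_frontier hU hb hcont.neg
      (fun w hw => subharmonicAt_of_harmonicAt (hharm w hw).neg) fun b hb ε hε => by
        filter_upwards [(hloglim b hb).neg.eventually_lt_const (neg_zero.trans_lt hε)] with w hw
        rw [zero_add]
        exact hw.le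
  exact fun w hw => Real.eq_one_of_pos_of_log_eq_zero (norm_pos_iff.2 (hk0 w hw))
    ((hle w hw).antisymm (neg_nonpos.1 (hge w hw)))

/- Such a map is `c * w ^ n` with `‖c‖ = 1`. -/
theorem deriv_ne_zero_of_properOn_ball {B : ℂ → ℂ} {w : ℂ} (hB : DifferentiableOn ℂ B (ball 0 1))
    (hm : MapsTo B (ball 0 1) (ball 0 1)) (hp : ProperOn B (ball 0 1) (ball 0 1))
    (hzero : ∀ w ∈ ball (0 : ℂ) 1, B w = 0 ↔ w = 0) (hw : w ∈ ball (0 : ℂ) 1) (hw0 : w ≠ 0) :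
    deriv B w ≠ 0 := by
  have h0 : (0 : ℂ) ∈ ball (0 : ℂ) 1 := mem_ball_self one_pos
  obtain ⟨n, hn, k, hk, hk0, hBk⟩ := exists_eq_pow_mul_of_eq_zero_iff isOpen_ball h0 hB hzero
  have hlim : ∀ b ∈ frontier (ball (0 : ℂ) 1), Tendsto (fun w => ‖k w‖) (𝓝[ball 0 1] b) (𝓝 1) := by
    intro b hb
    rw [frontier_ball _ one_ne_zero, mem_sphere_zero_iff_norm] at hb
    have hpow : Tendsto (fun w : ℂ => ‖w‖ ^ n) (𝓝[ball 0 1] b) (𝓝 1) := by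
      have hcont : ContinuousAt (fun w : ℂ => ‖w‖ ^ n) b := (continuous_norm.pow n).continuousAt
      rw [ContinuousAt, hb, one_pow] at hcont
      exact hcont.mono_left nhdsWithin_le_nhds
    have hquot := (hp.tendsto_norm_nhdsWithin hm fun h => (mem_ball_zero_iff.1 h).ne hb).div
      hpow one_ne_zero
    rw [div_one] at hquot
    refine hquot.congr' ?_
    filter_upwards [self_mem_nhdsWithin, mem_nhdsWithin_of_mem_nhds (isOpen_ne.mem_nhds
      (norm_pos_iff.1 (hb ▸ one_pos) : b ≠ 0))] with w hw hw0
    rw [Pi.div_apply, hBk w hw, norm_mul, norm_pow,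
      mul_div_cancel_left₀ _ (pow_ne_zero n (norm_ne_zero_iff.2 hw0))]
  have hnorm := norm_eq_one_of_tendsto_frontier isOpen_ball isBounded_ball hk hk0 hlim
  have hconst : EqOn k (const ℂ (k 0)) (ball 0 1) :=
    Complex.eqOn_of_isPreconnected_of_isMaxOn_norm (convex_ball 0 1).isPreconnected isOpen_ball
      hk.differentiableOn h0 fun z hz => ((hnorm z hz).trans (hnorm 0 h0).symm).le
  have hev : B =ᶠ[𝓝 w] fun z => z ^ n * k 0 := by
    filter_upwards [isOpen_ball.mem_nhds hw] with z hz
    rw [hBk z hz, hconst hz, const_apply]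
  rw [hev.deriv_eq, ((hasDerivAt_pow n w).mul_const (k 0)).deriv]
  exact mul_ne_zero (mul_ne_zero (Nat.cast_ne_zero.2 hn) (pow_ne_zero _ hw0)) (hk0 0 h0)

namespace ProperDiskMap

variable {g : ℂ → ℂ} {U' U K : Set ℂ} {d : ℕ} (H : ProperDiskMap g U' U d)

include H

theorem analyticAt {z : ℂ} (hz : z ∈ U') : AnalyticAt ℂ g z :=
  H.holo.analyticAt (H.disk'.1.mem_nhds hz)

theorem ncard_fiber_ne_one {w : ℂ} (hw : w ∈ U) (hcrit : w ∉ g '' critPts g U') :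
    (U' ∩ g ⁻¹' {w}).ncard ≠ 1 := by
  rw [H.deg.2 w hw hcrit]
  exact (one_lt_two.trans_le H.two_le_d).ne'

/- Without critical points `g` would be a covering of the simply connected `U`, of degree one. -/
theorem critPts_nonempty : (critPts g U').Nonempty := by
  by_contra hempty
  rw [not_nonempty_iff_eq_empty] at hempty
  have hderiv : ∀ z ∈ U', deriv g z ≠ 0 := fun z hz h0 => hempty.le ⟨hz, h0⟩
  have hcrit (w : ℂ) : w ∉ g '' critPts g U' := by rw [hempty, image_empty]; exact notMem_empty w
  have hfin : ∀ w ∈ U, (U' ∩ g ⁻¹' {w}).Finite := fun w hw =>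
    finite_of_ncard_pos (H.deg.2 w hw (hcrit w) ▸ two_pos.trans_le H.two_le_d)
  have := H.disk'.1.locallyPathConnectedSpace
  have := H.disk.1.locallyPathConnectedSpace
  have := H.disk'.2.2
  have := H.disk.2.2
  have hinj : InjOn g U' := H.mapsTo.restrict_inj.1 <| injective_of_isCoveringMap <|
    H.proper.isCoveringMap_restrict H.disk'.1 H.disk.1 H.holo hderiv H.mapsTo hfin
  obtain ⟨a, ha⟩ := H.disk'.2.1.nonempty
  refine H.ncard_fiber_ne_one (H.mapsTo ha) (hcrit _) (ncard_eq_one.2 ⟨a, ?_⟩)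
  exact Subset.antisymm (fun z hz => hinj hz.1 ha hz.2) (singleton_subset_iff.2 ⟨ha, rfl⟩)

theorem mem_critPts_of_fiber_eq_singleton {x y : ℂ} (hx : x ∈ U) (hfiber : U' ∩ g ⁻¹' {x} = {y}) :
    y ∈ critPts g U' := by
  by_contra hy
  refine H.ncard_fiber_ne_one hx ?_ (hfiber ▸ ncard_singleton y)
  rintro ⟨c, hc, hcx⟩
  obtain rfl : c = y := hfiber.le ⟨hc.1, hcx⟩
  exact hy hc

theorem critPts_subset_of_fiber_eq_singleton {x y : ℂ} (hx : x ∈ U)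
    (hfiber : U' ∩ g ⁻¹' {x} = {y}) : critPts g U' ⊆ {y} := by
  rintro c ⟨hc, hc0⟩
  obtain ⟨hy, rfl⟩ : y ∈ U' ∧ g y = x := hfiber.ge rfl
  obtain ⟨e, he, hex⟩ := exists_isRiemannMap H.disk H.codomain_ne_univ hx
  obtain ⟨e', he', hey⟩ := exists_isRiemannMap H.disk' H.domain_ne_univ hy
  have hgm := H.mapsTo.comp he'.mapsTo_symm
  have hsymm0 : e'.symm 0 = y := hey ▸ he'.leftInvOn hy
  have hzero : ∀ w ∈ ball (0 : ℂ) 1, (e ∘ g ∘ e'.symm) w = 0 ↔ w = 0 := fun w hw => by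
    refine ⟨fun hw0 => ?_, fun hw0 => ?_⟩
    · have hgw : g (e'.symm w) = g y := he.leftInvOn.injOn (hgm hw) hx (hw0.trans hex.symm)
      rw [← he'.rightInvOn hw, (hfiber.le ⟨he'.mapsTo_symm hw, hgw⟩ : e'.symm w = y), hey]
    · rw [hw0, comp_apply, comp_apply, hsymm0, hex]
  by_contra hcy
  refine deriv_ne_zero_of_properOn_ball
    (he.differentiableOn.comp (H.holo.comp he'.differentiableOn_symm he'.mapsTo_symm) hgm)
    (he.mapsTo.comp hgm)
    (he.properOn.comp (H.proper.comp he'.properOn_symm he'.mapsTo_symm) hgm) hzero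
    (he'.mapsTo hc) (fun h0 => hcy (he'.leftInvOn.injOn hc hy (h0.trans hey.symm))) ?_
  have he'c := (he'.differentiableOn_symm.differentiableAt
    (isOpen_ball.mem_nhds (he'.mapsTo hc))).hasDerivAt
  have hgc : HasDerivAt g 0 (e'.symm (e' c)) := by
    rw [he'.leftInvOn hc]
    exact hc0 ▸ (H.analyticAt hc).differentiableAt.hasDerivAt
  have hec := (he.differentiableOn.differentiableAt
    (H.disk.1.mem_nhds (hgm (he'.mapsTo hc)))).hasDerivAt
  rw [(hec.comp _ (hgc.comp _ he'c)).deriv, zero_mul, mul_zero]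

/- Otherwise the fibres over `x` and over its only preimage `x₁` are singletons, and both consist of
the only critical point, which is then fixed. -/
theorem two_preimages (hKinv : U' ∩ g ⁻¹' K = K) (hfix : ∀ c ∈ K, U' ∩ g ⁻¹' {c} ≠ {c})
    {x : ℂ} (hx : x ∈ K) :
    ∃ y ∈ K, ∃ y' ∈ K, y ≠ y' ∧ g (g y) = x ∧ g (g y') = x := by
  have hmem {x y : ℂ} (hx : x ∈ K) (hy : y ∈ U' ∩ g ⁻¹' {x}) : y ∈ K :=
    hKinv.le ⟨hy.1, by rwa [mem_preimage, (hy.2 : g y = x)]⟩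
  have hKU : K ⊆ U := (hKinv.ge.trans inter_subset_left).trans H.subset
  have hfiber (x : ℂ) (hx : x ∈ K) : ∃ y ∈ K, y ∈ U' ∩ g ⁻¹' {x} :=
    (H.deg.1 x (hKU hx)).imp fun y hy => ⟨hmem hx hy, hy⟩
  by_contra! hcon
  obtain ⟨x₁, hx₁, hx₁fiber⟩ := hfiber x hx
  obtain ⟨x₂, hx₂, hx₂fiber⟩ := hfiber x₁ hx₁
  have hgx₁ : g x₁ = x := hx₁fiber.2
  have hgx₂ : g x₂ = x₁ := hx₂fiber.2
  have hggx₂ : g (g x₂) = x := by rw [hgx₂, hgx₁]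
  have hfiber₁ : U' ∩ g ⁻¹' {x} = {x₁} := by
    refine eq_singleton_iff_unique_mem.2 ⟨hx₁fiber, fun y hy => ?_⟩
    obtain ⟨z, hz, hzy⟩ := hfiber y (hmem hx hy)
    by_contra hne
    have hzy : g z = y := hzy.2
    exact hcon x₂ hx₂ z hz (fun h => hne (by rw [← hzy, ← h, hgx₂])) hggx₂ (hzy.symm ▸ hy.2)
  have hfiber₂ : U' ∩ g ⁻¹' {x₁} = {x₂} := by
    refine eq_singleton_iff_unique_mem.2 ⟨hx₂fiber, fun y hy => ?_⟩
    by_contra hne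
    exact hcon x₂ hx₂ y (hmem hx₁ hy) (Ne.symm hne) hggx₂ (by rw [hy.2, hgx₁])
  have hcrit := H.critPts_subset_of_fiber_eq_singleton (hKU hx) hfiber₁
  obtain rfl : x₂ = x₁ := hcrit (H.mem_critPts_of_fiber_eq_singleton (hKU hx₁) hfiber₂)
  obtain rfl : x₂ = x := hgx₂.symm.trans hgx₁
  exact hfix x₂ hx hfiber₁

theorem nhds_le_map {z : ℂ} (hz : z ∈ U') : 𝓝 (g z) ≤ map g (𝓝 z) := by
  refine (H.analyticAt hz).eventually_constant_or_nhds_le_map_nhds.resolve_left fun hconst => ?_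
  have heq : EqOn g (fun _ => g z) U' :=
    (H.holo.analyticOnNhd H.disk'.1).eqOn_of_preconnected_of_eventuallyEq analyticOnNhd_const
      H.disk'.2.1.isPreconnected hz hconst
  have hsub : U ⊆ {g z} := fun w hw => by
    obtain ⟨y, hy, rfl⟩ := H.deg.1 w hw
    exact heq hy
  obtain ⟨w, hw⟩ := H.disk.2.1.nonempty.mono (interior_maximal hsub H.disk.1)
  rw [interior_singleton] at hw
  exact hw

end ProperDiskMap

/-! ### Transfer to the unit disk -/

theorem eq_empty_of_closure_subset_union {X : Type*} [TopologicalSpace X]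
    [NoncompactSpace X] {K T : Set X} (hK : IsCompact K) (hKc : IsPreconnected Kᶜ) (hT : IsOpen T)
    (hTc : IsCompact (closure T)) (hTK : Disjoint T K) (hsub : closure T ⊆ T ∪ K) : T = ∅ := by
  by_contra hne
  obtain ⟨x, hx⟩ := nonempty_iff_ne_empty.2 hne
  have hKT : Kᶜ ⊆ T := hKc.subset_of_closure_inter_subset hT
    ⟨x, hTK.notMem_of_mem_left hx, hx⟩ fun y hy => (hsub hy.1).resolve_right hy.2
  refine noncompact_univ X ((hK.union hTc).of_isClosed_subset isClosed_univ fun y _ => ?_)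
  exact (em (y ∈ K)).imp id fun hy => subset_closure (hKT hy)

theorem isOpen_diff_connectedComponentIn {X : Type*} [TopologicalSpace X]
    [LocallyConnectedSpace X] {Ω : Set X} (hΩ : IsOpen Ω) (x : X) :
    IsOpen (Ω \ connectedComponentIn Ω x) := by
  refine isOpen_iff_mem_nhds.2 fun y hy => ?_
  filter_upwards [hΩ.connectedComponentIn.mem_nhds (mem_connectedComponentIn hy.1)] with z hz
  refine ⟨connectedComponentIn_subset Ω y hz, fun hzx => hy.2 ?_⟩
  rw [connectedComponentIn_eq hzx, ← connectedComponentIn_eq hz]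
  exact mem_connectedComponentIn hy.1

theorem isPreconnected_annulus {ρ : ℝ} (hρ : 0 ≤ ρ) : IsPreconnected (annulus ρ) := by
  have hpolar : annulus ρ = (fun p : ℝ × ℝ => (p.1 : ℂ) * Complex.exp (p.2 * Complex.I)) ''
      (Ioo ρ 1 ×ˢ univ) := by
    ext z
    constructor
    · exact fun hz => ⟨(‖z‖, z.arg), ⟨hz, mem_univ _⟩, Complex.norm_mul_exp_arg_mul_I z⟩
    · rintro ⟨⟨r, t⟩, ⟨hr, -⟩, rfl⟩
      have hnorm : ‖(r : ℂ) * Complex.exp (t * Complex.I)‖ = r := by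
        rw [norm_mul, Complex.norm_exp_ofReal_mul_I, mul_one,
          Complex.norm_of_nonneg (hρ.trans hr.1.le)]
      rwa [annulus, mem_ofPred_eq, hnorm]
  rw [hpolar]
  exact (isPreconnected_Ioo.prod isPreconnected_univ).image _ (by fun_prop)

namespace IsRiemannMap

variable {e : OpenPartialHomeomorph ℂ ℂ} {U K : Set ℂ} (he : IsRiemannMap e U)

include he

theorem eq_empty_of_closure_subset_union {T : Set ℂ} (hKU : K ⊆ U) (hK : IsCompact K)
    (hKc : IsPreconnected Kᶜ) (hT : IsOpen T) (hTc : IsCompact (closure T))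
    (hTball : closure T ⊆ ball 0 1) (hTK : Disjoint T (e '' K))
    (hsub : closure T ⊆ T ∪ e '' K) : T = ∅ := by
  have hTb : T ⊆ ball 0 1 := subset_closure.trans hTball
  have hTcompact : IsCompact (e.symm '' closure T) := he.isCompact_symm_image hTball hTc
  have hclosure : closure (e.symm '' T) ⊆ e.symm '' closure T :=
    closure_minimal (image_mono subset_closure) hTcompact.isClosed
  refine image_eq_empty.1 <| _root_.eq_empty_of_closure_subset_union hK hKc
    (he.isOpen_symm_image hTb hT) (hTcompact.of_isClosed_subset isClosed_closure hclosure) ?_ ?_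
  · rw [disjoint_left]
    rintro _ ⟨w, hw, rfl⟩ hwK
    exact disjoint_left.1 hTK hw ⟨_, hwK, he.rightInvOn (hTb hw)⟩
  · rw [← (he.leftInvOn.mono hKU).image_image, ← image_union]
    exact hclosure.trans (image_mono hsub)

/- A component of `ball 0 1 \ e '' K` away from the unit circle would give a bounded component of
`Kᶜ`. -/
theorem isPreconnected_ball_diff_image (hKU : K ⊆ U) (hK : IsCompact K)
    (hKc : IsPreconnected Kᶜ) : IsPreconnected (ball 0 1 \ e '' K) := by
  have heK := (he.isCompact_image hKU hK).isClosed
  obtain ⟨ρ, hρ, hsub⟩ :=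
    exists_pos_lt_subset_ball one_pos heK (he.mapsTo.mono_left hKU).image_subset
  obtain ⟨t, hρt, ht1⟩ := exists_between hρ.2
  have ht : (t : ℂ) ∈ annulus ρ := by
    rw [annulus, mem_ofPred_eq, Complex.norm_of_nonneg (hρ.1.trans hρt).le]
    exact ⟨hρt, ht1⟩
  set Ω := ball 0 1 \ e '' K
  have hΩ : IsOpen Ω := isOpen_ball.sdiff heK
  set C := connectedComponentIn Ω t
  have hC : annulus ρ ⊆ C := (isPreconnected_annulus hρ.1.le).subset_connectedComponentIn ht
    (annulus_subset_ball_diff hsub)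
  have hclosure : closure (Ω \ C) ⊆ closedBall 0 ρ := closure_minimal (fun z hz => by
    by_contra hzρ
    exact hz.2 (hC ⟨not_le.1 fun h => hzρ (mem_closedBall_zero_iff.2 h),
      mem_ball_zero_iff.1 hz.1.1⟩)) isClosed_closedBall
  have hclosure_ball : closure (Ω \ C) ⊆ ball 0 1 :=
    hclosure.trans (closedBall_subset_ball hρ.2)
  have hempty : Ω \ C = ∅ := by
    refine he.eq_empty_of_closure_subset_union hKU hK hKc (isOpen_diff_connectedComponentIn hΩ _)
      ((isCompact_closedBall 0 ρ).of_isClosed_subset isClosed_closure hclosure) hclosure_ball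
      (disjoint_left.2 fun w hw => hw.1.2) fun w hw => ?_
    refine or_iff_not_imp_right.2 fun hwK => ⟨⟨hclosure_ball hw, hwK⟩, fun hwC => ?_⟩
    obtain ⟨z, hzC, hzT⟩ := mem_closure_iff.1 hw _ hΩ.connectedComponentIn hwC
    exact hzT.2 hzC
  exact (connectedComponentIn_subset _ _).antisymm (sdiff_eq_empty.1 hempty) ▸
    isPreconnected_connectedComponentIn

end IsRiemannMap

theorem HasDeg.restrictPreimage {g : ℂ → ℂ} {U' U V : Set ℂ} {d : ℕ} (hg : HasDeg g U' U d)
    (hVU : V ⊆ U) : HasDeg g (U' ∩ g ⁻¹' V) V d := by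
  have hfiber : ∀ w ∈ V, U' ∩ g ⁻¹' V ∩ g ⁻¹' {w} = U' ∩ g ⁻¹' {w} := fun w hw => by
    rw [inter_assoc, ← preimage_inter, inter_eq_right.2 (singleton_subset_iff.2 hw)]
  refine ⟨fun w hw => hfiber w hw ▸ hg.1 w (hVU hw), fun w hw hcrit => ?_⟩
  rw [hfiber w hw]
  refine hg.2 w (hVU hw) ?_
  rintro ⟨c, ⟨hc, hc0⟩, rfl⟩
  exact hcrit ⟨c, ⟨⟨hc, hw⟩, hc0⟩, rfl⟩

namespace IsRiemannMap

variable {e e' : OpenPartialHomeomorph ℂ ℂ} {g : ℂ → ℂ} {U' U S : Set ℂ}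

theorem conj_apply (he : IsRiemannMap e U) {z : ℂ} (hz : z ∈ U) :
    (e ∘ g ∘ e.symm) (e z) = e (g z) := by
  rw [comp_apply, comp_apply, he.leftInvOn hz]

theorem conj_iterate_apply (he : IsRiemannMap e U) {z : ℂ} (hz : ∀ n, g^[n] z ∈ U) (n : ℕ) :
    (e ∘ g ∘ e.symm)^[n] (e z) = e (g^[n] z) := by
  induction n with
  | zero => rfl
  | succ n ih => rw [iterate_succ_apply', ih, he.conj_apply (hz n), iterate_succ_apply']

theorem image_inter_preimage (he : IsRiemannMap e U) (hU' : U' ⊆ U) (hg : MapsTo g U' U)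
    (hS : S ⊆ ball 0 1) :
    e '' (U' ∩ g ⁻¹' (e.symm '' S)) = e '' U' ∩ (e ∘ g ∘ e.symm) ⁻¹' S := by
  rw [← Set.image_inter_preimage, he.symm_image_eq hS]
  congr 1
  ext z
  refine and_congr_right fun hz => ?_
  rw [mem_preimage, mem_preimage, mem_preimage, he.conj_apply (hU' hz)]
  exact and_iff_right (hg hz)

theorem symm_image_ball_inter_preimage (he : IsRiemannMap e U) (he' : IsRiemannMap e' U')
    (hg : MapsTo g U' U) (hS : S ⊆ ball 0 1) :
    e'.symm '' (ball 0 1 ∩ (e ∘ g ∘ e'.symm) ⁻¹' S) = U' ∩ g ⁻¹' (e.symm '' S) := by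
  rw [he'.symm_image_eq inter_subset_left, he.symm_image_eq hS]
  ext z
  refine and_congr_right fun hz => ?_
  rw [mem_preimage, mem_inter_iff, mem_preimage, comp_apply, comp_apply, he'.leftInvOn hz]
  exact and_congr_left' (iff_of_true (he'.mapsTo hz) (hg hz))

end IsRiemannMap

theorem PLSetting.properDiskMap {g : ℂ → ℂ} {U' U : Set ℂ} {d : ℕ} (H : PLSetting g U' U d) :
    ProperDiskMap g U' U d where
  disk' := H.disk'
  disk := H.disk
  subset := H.subset
  ne := H.ne
  two_le_d := H.two_le_d
  holo := H.holo
  mapsTo := H.mapsTo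
  proper := H.proper
  deg := H.deg

theorem postCrit_eq_singleton {g : ℂ → ℂ} {U' : Set ℂ} {c : ℂ} (hcrit : critPts g U' = {c})
    (hc : g c = c) : postCrit g U' = {c} := by
  simp only [postCrit, hcrit, image_singleton, iterate_fixed hc, iUnion_const, closure_singleton]

theorem PLSetting.fiber_ne_singleton {g : ℂ → ℂ} {U' U : Set ℂ} {d : ℕ} (H : PLSetting g U' U d)
    (c : ℂ) : U' ∩ g ⁻¹' {c} ≠ {c} := by
  intro hfiber
  obtain ⟨hcU, hgc⟩ : c ∈ U' ∧ g c = c := hfiber.ge rfl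
  have hcrit : critPts g U' = {c} :=
    (H.properDiskMap.critPts_subset_of_fiber_eq_singleton (H.subset hcU) hfiber).antisymm <|
      singleton_subset_iff.2
        (H.properDiskMap.mem_critPts_of_fiber_eq_singleton (H.subset hcU) hfiber)
  exact H.postCrit_singleton c (postCrit_eq_singleton hcrit hgc) hfiber

theorem PLSetting.postCrit_nonempty {g : ℂ → ℂ} {U' U : Set ℂ} {d : ℕ}
    (H : PLSetting g U' U d) : (postCrit g U').Nonempty :=
  H.properDiskMap.critPts_nonempty.imp fun c hc =>
    subset_closure (mem_iUnion.2 ⟨0, c, hc, rfl⟩)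

theorem IsRiemannMap.eventually_isTopDisk_inter_preimage {e e' : OpenPartialHomeomorph ℂ ℂ}
    {g : ℂ → ℂ} {U' U L : Set ℂ} (he : IsRiemannMap e U) (he' : IsRiemannMap e' U')
    (hgd : DifferentiableOn ℂ g U') (hg : MapsTo g U' U) (hgp : ProperOn g U' U)
    (hL : IsClosed L) (hL1 : L ⊆ ball 0 1) (hpos : ∀ z ∈ ball 0 1 \ L, 0 < harmonicMeasure L z) :
    ∀ᶠ s in 𝓝[>] 0, IsTopDisk (U' ∩ g ⁻¹' (e.symm '' superlevel L s)) := by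
  have hgm := hg.comp he'.mapsTo_symm
  have hd : DifferentiableOn ℂ (e ∘ g ∘ e'.symm) (ball 0 1) :=
    he.differentiableOn.comp (hgd.comp he'.differentiableOn_symm he'.mapsTo_symm) hgm
  filter_upwards [eventually_isOpen_superlevel hL hL1 hpos,
    eventually_starConvex_preimage_superlevel hL hL1 hpos hd (he.mapsTo.comp hgm)
      (he.properOn.comp (hgp.comp he'.properOn_symm he'.mapsTo_symm) hgm)] with s hopen hstar
  rw [← he.symm_image_ball_inter_preimage he' hg (superlevel_subset_ball s)]
  exact he'.isTopDisk_symm_image inter_subset_left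
    (hd.continuousOn.isOpen_inter_preimage isOpen_ball hopen) hstar.2 ⟨0, hstar.1⟩

namespace ProperDiskMap

variable {e : OpenPartialHomeomorph ℂ ℂ} {g : ℂ → ℂ} {U' U K V : Set ℂ} {d : ℕ} {s : ℝ}

theorem isPolyLike_restrictPreimage (H : ProperDiskMap g U' U d) (hVU : V ⊆ U)
    (hV : IsTopDisk V) (hV' : IsTopDisk (U' ∩ g ⁻¹' V)) (hcl : closure (U' ∩ g ⁻¹' V) ⊆ V) :
    IsPolyLike g (U' ∩ g ⁻¹' V) V d :=
  ⟨hV', hV, hcl, H.holo.mono inter_subset_left, fun _ hz => hz.2, H.proper.restrictPreimage hVU,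
    H.deg.restrictPreimage hVU⟩

theorem nhds_le_map_conj (H : ProperDiskMap g U' U d) (he : IsRiemannMap e U) {z : ℂ}
    (hz : z ∈ U') : 𝓝 ((e ∘ g ∘ e.symm) (e z)) ≤ map (e ∘ g ∘ e.symm) (𝓝 (e z)) := by
  rw [he.conj_apply (H.subset hz), ← map_map, ← map_map,
    he.map_nhds_symm_eq (he.mapsTo (H.subset hz)), he.leftInvOn (H.subset hz),
    ← he.map_nhds_eq (H.mapsTo hz)]
  exact map_mono (H.nhds_le_map hz)

theorem diskSystem (H : ProperDiskMap g U' U d) (he : IsRiemannMap e U) (hKne : K.Nonempty)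
    (hK : IsCompact K) (hKc : IsPreconnected Kᶜ) (hKinv : U' ∩ g ⁻¹' K = K)
    (hfix : ∀ c ∈ K, U' ∩ g ⁻¹' {c} ≠ {c}) :
    DiskSystem (e ∘ g ∘ e.symm) (e '' U') (e '' K) := by
  have hKU' : K ⊆ U' := hKinv.ge.trans inter_subset_left
  have hKU : K ⊆ U := hKU'.trans H.subset
  have hU'eq := he.image_eq H.subset
  have hgm : MapsTo g K K := fun z hz => (hKinv.ge hz).2
  have hsymm : MapsTo e.symm (e '' U') U' := fun w hw => (hU'eq.le hw).2
  have heK : e '' K ⊆ ball 0 1 := (he.mapsTo.mono_left hKU).image_subset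
  have hU'ball : e '' U' ⊆ ball 0 1 := (he.mapsTo.mono_left H.subset).image_subset
  exact {
    isOpen := hU'eq ▸ he.differentiableOn_symm.continuousOn.isOpen_inter_preimage isOpen_ball
      H.disk'.1
    subset_ball := hU'ball
    ne_ball := fun h => H.ne <| H.subset.antisymm fun z hz =>
      (he.leftInvOn.injOn.mem_image_iff H.subset hz).1 (h.ge (he.mapsTo hz))
    differentiableOn := he.differentiableOn.comp
      (H.holo.comp (he.differentiableOn_symm.mono hU'ball) hsymm) (H.mapsTo.comp hsymm)
    mapsTo := he.mapsTo.comp (H.mapsTo.comp hsymm)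
    properOn := he.properOn.comp (H.proper.comp
      (hU'eq ▸ he.properOn_symm.restrictPreimage H.subset) hsymm) (H.mapsTo.comp hsymm)
    isCompact := he.isCompact_image hKU hK
    nonempty := hKne.image e
    inter_preimage_eq := by
      rw [← he.image_inter_preimage H.subset H.mapsTo heK,
        (he.leftInvOn.mono hKU).image_image, hKinv]
    isPreconnected_diff := he.isPreconnected_ball_diff_image hKU hK hKc
    nhds_le_map := forall_mem_image.2 fun z hz => H.nhds_le_map_conj he (hKU' hz)
    two_preimages := forall_mem_image.2 fun x hx => by
      have hconj {y : ℂ} (hy : y ∈ K) :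
          (e ∘ g ∘ e.symm) ((e ∘ g ∘ e.symm) (e y)) = e (g (g y)) := by
        rw [he.conj_apply (hKU hy), he.conj_apply (hKU (hgm hy))]
      obtain ⟨y, hy, y', hy', hne, rfl, hgy'⟩ := H.two_preimages hKinv hfix hx
      exact ⟨e y, mem_image_of_mem e hy, e y', mem_image_of_mem e hy',
        he.leftInvOn.injOn.ne (hKU hy) (hKU hy') hne, hconj hy, by rw [hconj hy', hgy']⟩ }

theorem closure_inter_preimage_subset (H : ProperDiskMap g U' U d) (he : IsRiemannMap e U)
    (D : DiskSystem (e ∘ g ∘ e.symm) (e '' U') (e '' K)) (hs : 0 < s) :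
    closure (U' ∩ g ⁻¹' (e.symm '' superlevel (e '' K) s)) ⊆ e.symm '' superlevel (e '' K) s := by
  have hW := he.image_inter_preimage H.subset H.mapsTo (superlevel_subset_ball (K := e '' K) s)
  have hcl := D.closure_subset_superlevel hs
  set W := e '' U' ∩ (e ∘ g ∘ e.symm) ⁻¹' superlevel (e '' K) s
  have hV' : U' ∩ g ⁻¹' (e.symm '' superlevel (e '' K) s) = e.symm '' W := by
    rw [← hW, (he.leftInvOn.mono (inter_subset_left.trans H.subset)).image_image]
  have hcompact := he.isCompact_symm_image (hcl.trans (superlevel_subset_ball s))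
    (D.isCompact_closure_and_subset hs).1
  rw [hV']
  exact (closure_minimal (image_mono subset_closure) hcompact.isClosed).trans (image_mono hcl)

theorem eq_filledJulia (H : ProperDiskMap g U' U d) (he : IsRiemannMap e U)
    (hKinv : U' ∩ g ⁻¹' K = K) (D : DiskSystem (e ∘ g ∘ e.symm) (e '' U') (e '' K))
    (hs : s ∈ Ioo 0 1) (hopen : IsOpen (superlevel (e '' K) s)) :
    K = filledJulia g (U' ∩ g ⁻¹' (e.symm '' superlevel (e '' K) s)) := by
  have hgm : MapsTo g K K := fun z hz => (hKinv.ge hz).2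
  have hKU' : K ⊆ U' := hKinv.ge.trans inter_subset_left
  have hKU : K ⊆ U := hKU'.trans H.subset
  refine Subset.antisymm (fun z hz n => ?_) fun z hz => ?_
  · have hmem : g^[n] z ∈ K := hgm.iterate n hz
    exact ⟨hKU' hmem, e (g (g^[n] z)), subset_superlevel D.subset_unitBall s
      (mem_image_of_mem e (hgm hmem)), he.leftInvOn (hKU (hgm hmem))⟩
  · have hzU : ∀ n, g^[n] z ∈ U := fun n => H.subset (hz n).1
    refine (he.leftInvOn.injOn.mem_image_iff hKU (show z ∈ U from hzU 0)).1 <|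
      D.mem_of_forall_iterate_mem hs.1 hs.2 hopen fun n => ?_
    rw [he.conj_iterate_apply hzU, ← he.image_inter_preimage H.subset H.mapsTo
      (superlevel_subset_ball s)]
    exact mem_image_of_mem e (hz n)

end ProperDiskMap

theorem polyLike_restriction_general {g : ℂ → ℂ} {U' U : Set ℂ} {d : ℕ}
    (H : ProperDiskMap g U' U d) {K : Set ℂ} (hKne : K.Nonempty) (hKcomp : IsCompact K)
    (hKfull : IsConnected Kᶜ) (hKinv : U' ∩ g ⁻¹' K = K)
    (hfix : ∀ c ∈ K, U' ∩ g ⁻¹' {c} ≠ {c}) :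
    ∃ V' V : Set ℂ, V' ⊆ U ∧ V ⊆ U ∧ V' = U' ∩ g ⁻¹' V ∧
      IsPolyLike g V' V d ∧ K = filledJulia g V' := by
  obtain ⟨a, ha⟩ := H.disk.2.1.nonempty
  obtain ⟨a', ha'⟩ := H.disk'.2.1.nonempty
  obtain ⟨e, he, -⟩ := exists_isRiemannMap H.disk H.codomain_ne_univ ha
  obtain ⟨e', he', -⟩ := exists_isRiemannMap H.disk' H.domain_ne_univ ha'
  have D := H.diskSystem he hKne hKcomp hKfull.isPreconnected hKinv hfix
  have hclosed := D.isCompact.isClosed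
  have hpos := D.harmonicMeasure_pos
  have hdisk := he.eventually_isTopDisk_inter_preimage he differentiableOn_id (mapsTo_id U)
    (fun Q hQ hQc => by rwa [preimage_id, inter_eq_right.2 hQ]) hclosed D.subset_unitBall hpos
  have hdisk' := he.eventually_isTopDisk_inter_preimage he' H.holo H.mapsTo H.proper hclosed
    D.subset_unitBall hpos
  obtain ⟨s, ⟨hopen, hV, hV'⟩, hs⟩ := ((eventually_isOpen_superlevel hclosed D.subset_unitBall
    hpos).and (hdisk.and hdisk')).and (Ioo_mem_nhdsGT one_pos) |>.exists
  have hVU : e.symm '' superlevel (e '' K) s ⊆ U :=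
    (he.mapsTo_symm.mono_left (superlevel_subset_ball s)).image_subset
  rw [preimage_id, inter_eq_right.2 hVU] at hV
  exact ⟨_, _, inter_subset_left.trans H.subset, hVU, rfl,
    H.isPolyLike_restrictPreimage hVU hV hV' (H.closure_inter_preimage_subset he D hs.1),
    H.eq_filledJulia he hKinv D hs hopen⟩

/-- **Theorem (polynomial-like restriction).** If `K ⊆ U` is a full compact set which is
completely invariant (`g⁻¹(K) = K`) and contains the postcritical set, then `g : U' → U`
admits a polynomial-like restriction `g : V' → V` of degree `d` with `V' = g⁻¹(V)`,
`closure V' ⊆ V ⊆ U`, and `K` is its filled Julia set. -/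
theorem polyLike_restriction {g : ℂ → ℂ} {U' U : Set ℂ} {d : ℕ}
    (H : PLSetting g U' U d) {K : Set ℂ}
    (hKU : K ⊆ U) (hKcomp : IsCompact K) (hKfull : IsConnected Kᶜ)
    (hKinv : U' ∩ g ⁻¹' K = K) (hPK : postCrit g U' ⊆ K) :
    ∃ V' V : Set ℂ, V' ⊆ U ∧ V ⊆ U ∧ V' = U' ∩ g ⁻¹' V ∧
      IsPolyLike g V' V d ∧ K = filledJulia g V' := by
  exact polyLike_restriction_general H.properDiskMap (H.postCrit_nonempty.mono hPK) hKcomp hKfull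
    hKinv fun c _ => H.fiber_ne_singleton c
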